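/- Under Assumptions A1, A2 and A3, for every compact set A ⊂ ℝ^d, almost surely sup_{x∈A} |q_n(x) − f(x)| → 0 as n → ∞; that is, the policy densities produced by the algorithm converge to the target density uniformly on compact sets, almost surely. -/

import Mathlib

open MeasureTheory Filter Metric
open scoped Topology ENNReal NNReal

noncomputable def kb {d : ℕ} (K : EuclideanSpace ℝ (Fin d) → ℝ) (b : ℝ)
    (x : EuclideanSpace ℝ (Fin d)) : ℝ :=
  (b ^ d)⁻¹ * K (b⁻¹ • x)

def natFilt {Ω : Type*} {d : ℕ} (X : ℕ → Ω → EuclideanSpace ℝ (Fin d)) (n : ℕ) :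
    MeasurableSpace Ω :=
  ⨆ i ∈ Finset.Icc 1 n, MeasurableSpace.comap (X i) inferInstance

abbrev EV (d : ℕ) := EuclideanSpace ℝ (Fin d)

/-- Deterministic data of the algorithm, with all constants made explicit. -/
structure Par (d : ℕ) where
  η : ℝ
  f : EuclideanSpace ℝ (Fin d) → ℝ
  q0 : EuclideanSpace ℝ (Fin d) → ℝ
  K : EuclideanSpace ℝ (Fin d) → ℝ
  γ : ℕ → ℝ
  b : ℕ → ℝ
  lam : ℕ → ℝ
  c : ℝ
  F : ℝ
  Q : ℝ
  Km : ℝ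
  L : ℝ
  rK : ℝ
  CK : ℝ
  Cγ : ℝ
  n0 : ℕ
  hd : 1 ≤ d
  hη : 0 < η
  hη1 : η < 1
  f0 : ∀ x, 0 ≤ f x
  fint1 : (∫ x, f x) = 1
  fcont : Continuous f
  fInt : Integrable f
  fbd : ∀ x, f x ≤ F
  q00 : ∀ x, 0 ≤ q0 x
  q0cont : Continuous q0
  q0Int : Integrable q0
  q0int1 : (∫ x, q0 x) = 1
  q0bd : ∀ x, q0 x ≤ Q
  hc : 0 < c
  hcf : ∀ x, c * f x ≤ q0 x
  K0 : ∀ x, 0 ≤ K x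
  Kint1 : (∫ x, K x) = 1
  KInt : Integrable K
  Kbd : ∀ x, K x ≤ Km
  hL : 0 ≤ L
  Klip : ∀ x y, |K x - K y| ≤ L * ‖x - y‖
  Kcont : Continuous K
  Kpos : 0 < K 0
  hrK : 0 < rK
  hCK : 0 < CK
  Ktail : ∀ x, (1 + ‖x‖ ^ ((d : ℝ) + rK)) * K x ≤ CK
  γpos : ∀ n, 0 < γ n
  bpos : ∀ n, 0 < b n
  lampos : ∀ n, 0 < lam n
  γ0 : Tendsto γ atTop (nhds 0)
  banti : Antitone b
  b0 : Tendsto b atTop (nhds 0)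
  lamanti : Antitone lam
  lam0 : Tendsto lam atTop (nhds 0)
  hCγ : 0 < Cγ
  γlow : ∀ n : ℕ, 1 ≤ n → ((n : ℝ))⁻¹ ≤ Cγ * γ n
  hn0 : 1 ≤ n0
  γhalf : ∀ n, n0 ≤ n → γ n ≤ 1 / 2
  lamhalf : ∀ n, n0 ≤ n → lam n ≤ 1 / 2
  bone : ∀ n, n0 ≤ n → b n ≤ 1
  γdec : ∀ n, n0 ≤ n → γ n * (1 - γ (n + 1)) ≤ γ (n + 1)
  rate : Tendsto (fun n : ℕ => γ n * Real.log n / (lam n * b n ^ d)) atTop (nhds 0)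

/-- Stochastic-approximation average started from `0` at time `n0`. -/
noncomputable def avg (γ : ℕ → ℝ) (n0 : ℕ) (ξ : ℕ → ℝ) : ℕ → ℝ
  | 0 => 0
  | n + 1 => if n0 ≤ n then (1 - γ (n + 1)) * avg γ n0 ξ n + γ (n + 1) * ξ n else 0

/-- Product of `1 - γ` from time `n0` on. -/
noncomputable def rho (γ : ℕ → ℝ) (n0 : ℕ) : ℕ → ℝ
  | 0 => 1
  | n + 1 => if n0 ≤ n then (1 - γ (n + 1)) * rho γ n0 n else 1

namespace Par
variable {d : ℕ} (P : Par d)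

/-- truncation level of the weights -/
noncomputable def tr (n : ℕ) : ℝ := 2 / P.c / P.lam n

/-- truncated weight to the power eta -/
noncomputable def tw (n : ℕ) (v : ℝ) : ℝ := (min v (P.tr n)) ^ P.η

noncomputable def psi (n : ℕ) (q : EuclideanSpace ℝ (Fin d) → ℝ)
    (y : EuclideanSpace ℝ (Fin d)) : ℝ := P.tw n (P.f y / q y) * q y

noncomputable def Sg (κ : ℕ → EuclideanSpace ℝ (Fin d) → ℝ) (w : ℕ → ℝ)
    (X : ℕ → EuclideanSpace ℝ (Fin d)) (n : ℕ) : ℝ :=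
  avg P.γ P.n0 (fun k => P.tw k (w (k + 1)) * κ k (X (k + 1))) n

noncomputable def Tg (κ : ℕ → EuclideanSpace ℝ (Fin d) → ℝ)
    (q : ℕ → EuclideanSpace ℝ (Fin d) → ℝ) (n : ℕ) : ℝ :=
  avg P.γ P.n0 (fun k => ∫ y, P.psi k (q k) y * κ k y) n

/-- kernel family at `x` -/
noncomputable def kx (x : EuclideanSpace ℝ (Fin d)) (k : ℕ) (y : EuclideanSpace ℝ (Fin d)) : ℝ :=
  kb P.K (P.b (k + 1)) (x - y)

end Par


section avgsec
variable {γ : ℕ → ℝ} {n0 : ℕ}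

lemma avg_succ (γ : ℕ → ℝ) (n0 : ℕ) (ξ : ℕ → ℝ) {n : ℕ} (h : n0 ≤ n) :
    avg γ n0 ξ (n + 1) = (1 - γ (n + 1)) * avg γ n0 ξ n + γ (n + 1) * ξ n := by
  simp [avg, h]

lemma avg_of_le (γ : ℕ → ℝ) (n0 : ℕ) (ξ : ℕ → ℝ) {n : ℕ} (h : n ≤ n0) : avg γ n0 ξ n = 0 := by
  cases n with
  | zero => simp [avg]
  | succ n => simp only [avg]; rw [if_neg (by omega)]

lemma rho_succ (γ : ℕ → ℝ) (n0 : ℕ) {n : ℕ} (h : n0 ≤ n) :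
    rho γ n0 (n + 1) = (1 - γ (n + 1)) * rho γ n0 n := by
  simp [rho, h]

lemma rho_of_le (γ : ℕ → ℝ) (n0 : ℕ) {n : ℕ} (h : n ≤ n0) : rho γ n0 n = 1 := by
  cases n with
  | zero => simp [rho]
  | succ n => simp only [rho]; rw [if_neg (by omega)]

lemma avg_mono (h0 : ∀ n, 0 ≤ γ n) (h1 : ∀ n, n0 ≤ n → γ n ≤ 1) {ξ ζ : ℕ → ℝ} (n : ℕ)
    (h : ∀ k, n0 ≤ k → k < n → ξ k ≤ ζ k) : avg γ n0 ξ n ≤ avg γ n0 ζ n := by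
  induction n with
  | zero => simp [avg]
  | succ n ih =>
    by_cases hn : n0 ≤ n
    · rw [avg_succ _ _ _ hn, avg_succ _ _ _ hn]
      have := ih (fun k hk hk' => h k hk (by omega))
      have h2 := h n hn (by omega)
      have h3 := h1 (n+1) (by omega)
      have h4 := h0 (n+1)
      have h5 : 0 ≤ 1 - γ (n+1) := by linarith
      gcongr
    · rw [avg_of_le _ _ _ (by omega), avg_of_le _ _ _ (by omega)]

lemma avg_const (C : ℝ) (n : ℕ) : avg γ n0 (fun _ => C) n = C * (1 - rho γ n0 n) := by
  induction n with
  | zero => simp [avg, rho]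
  | succ n ih =>
    by_cases hn : n0 ≤ n
    · rw [avg_succ _ _ _ hn, rho_succ _ _ hn, ih]; ring
    · rw [avg_of_le _ _ _ (by omega), rho_of_le _ _ (by omega)]; simp

lemma avg_sub (ξ ζ : ℕ → ℝ) (n : ℕ) :
    avg γ n0 ξ n - avg γ n0 ζ n = avg γ n0 (fun k => ξ k - ζ k) n := by
  induction n with
  | zero => simp [avg]
  | succ n ih =>
    by_cases hn : n0 ≤ n
    · rw [avg_succ _ _ _ hn, avg_succ _ _ _ hn, avg_succ _ _ _ hn, ← ih]; ring
    · rw [avg_of_le _ _ _ (by omega), avg_of_le _ _ _ (by omega), avg_of_le _ _ _ (by omega)]; simp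

lemma rho_pos (h1 : ∀ n, n0 ≤ n → γ n < 1) (n : ℕ) : 0 < rho γ n0 n := by
  induction n with
  | zero => simp [rho]
  | succ n ih =>
    by_cases hn : n0 ≤ n
    · rw [rho_succ _ _ hn]
      have h3 := h1 (n+1) (by omega)
      exact mul_pos (by linarith) ih
    · rw [rho_of_le _ _ (by omega)]; norm_num

lemma rho_le_one (h0 : ∀ n, 0 ≤ γ n) (h1 : ∀ n, n0 ≤ n → γ n < 1) (n : ℕ) : rho γ n0 n ≤ 1 := by
  induction n with
  | zero => simp [rho]
  | succ n ih =>
    by_cases hn : n0 ≤ n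
    · rw [rho_succ _ _ hn]
      have h3 := h1 (n+1) (by omega)
      have h4 := h0 (n+1)
      have := rho_pos h1 n
      nlinarith
    · rw [rho_of_le _ _ (by omega)]

lemma avg_le_const (h0 : ∀ n, 0 ≤ γ n) (h1 : ∀ n, n0 ≤ n → γ n < 1) {ξ : ℕ → ℝ} {C : ℝ}
    (hC : 0 ≤ C) (n : ℕ)
    (h : ∀ k, n0 ≤ k → k < n → ξ k ≤ C) : avg γ n0 ξ n ≤ C := by
  have := avg_mono h0 (fun n hn => (h1 n hn).le) (ζ := fun _ => C) n h
  rw [avg_const] at this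
  have := rho_pos h1 n
  nlinarith

lemma avg_nonneg (h0 : ∀ n, 0 ≤ γ n) (h1 : ∀ n, n0 ≤ n → γ n < 1) {ξ : ℕ → ℝ} (n : ℕ)
    (h : ∀ k, n0 ≤ k → k < n → 0 ≤ ξ k) : 0 ≤ avg γ n0 ξ n := by
  have := avg_mono h0 (fun n hn => (h1 n hn).le) (ξ := fun _ => 0) n h
  rw [avg_const] at this
  linarith

lemma avg_ge_const (h0 : ∀ n, 0 ≤ γ n) (h1 : ∀ n, n0 ≤ n → γ n < 1) {ξ : ℕ → ℝ} {C : ℝ}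
    (n : ℕ) (h : ∀ k, n0 ≤ k → k < n → C ≤ ξ k) : C * (1 - rho γ n0 n) ≤ avg γ n0 ξ n := by
  have := avg_mono h0 (fun n hn => (h1 n hn).le) (ξ := fun _ => C) n h
  rwa [avg_const] at this

lemma avg_dist (h0 : ∀ n, 0 ≤ γ n) (h1 : ∀ n, n0 ≤ n → γ n < 1) {ξ ζ : ℕ → ℝ} {C : ℝ}
    (hC : 0 ≤ C) (n : ℕ) (h : ∀ k, n0 ≤ k → k < n → |ξ k - ζ k| ≤ C) :
    |avg γ n0 ξ n - avg γ n0 ζ n| ≤ C := by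
  rw [abs_le]
  constructor
  · have := avg_le_const h0 h1 (ξ := fun k => ζ k - ξ k) hC n
      (fun k hk hk' => by have := abs_le.1 (h k hk hk'); linarith)
    rw [← avg_sub] at this
    linarith
  · rw [avg_sub]
    exact avg_le_const h0 h1 (ξ := fun k => ξ k - ζ k) hC n
      (fun k hk hk' => by have := abs_le.1 (h k hk hk'); linarith)

/-- comparison for linear recursions -/
lemma rec_le (h0 : ∀ n, 0 ≤ γ n) (h1 : ∀ n, n0 ≤ n → γ n < 1) {u : ℕ → ℝ} {C : ℝ} {N : ℕ}
    (hN : n0 ≤ N) (h : ∀ n, N ≤ n → u (n+1) ≤ (1 - γ (n+1)) * u n + γ (n+1) * C) (n : ℕ)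
    (hn : N ≤ n) : u n ≤ C + rho γ n0 n / rho γ n0 N * (u N - C) := by
  induction n, hn using Nat.le_induction with
  | base => rw [div_self (rho_pos h1 N).ne']; linarith
  | succ n hn ih =>
    have h3 := h1 (n+1) (by omega)
    have h5 : 0 ≤ 1 - γ (n+1) := by linarith
    have := mul_le_mul_of_nonneg_left ih h5
    rw [rho_succ _ _ (by omega)]
    have h6 := h n hn
    calc u (n+1) ≤ _ := h6
      _ ≤ (1 - γ (n + 1)) * (C + rho γ n0 n / rho γ n0 N * (u N - C)) + γ (n+1) * C := by linarith
      _ = _ := by ring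

lemma rec_ge (h0 : ∀ n, 0 ≤ γ n) (h1 : ∀ n, n0 ≤ n → γ n < 1) {u : ℕ → ℝ} {C : ℝ} {N : ℕ}
    (hN : n0 ≤ N) (h : ∀ n, N ≤ n → (1 - γ (n+1)) * u n + γ (n+1) * C ≤ u (n+1)) (n : ℕ)
    (hn : N ≤ n) : C + rho γ n0 n / rho γ n0 N * (u N - C) ≤ u n := by
  have := rec_le h0 h1 (u := fun n => - u n) (C := -C) hN
    (fun n hn => by have := h n hn; linarith) n hn
  linarith

lemma rec_eq (h0 : ∀ n, 0 ≤ γ n) (h1 : ∀ n, n0 ≤ n → γ n < 1) {u : ℕ → ℝ} {N : ℕ}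
    (hN : n0 ≤ N) (h : ∀ n, N ≤ n → u (n+1) = (1 - γ (n+1)) * u n) (n : ℕ)
    (hn : N ≤ n) : u n = rho γ n0 n / rho γ n0 N * u N := by
  apply le_antisymm
  · have := rec_le h0 h1 (u := u) (C := 0) hN (fun n hn => by rw [h n hn]; simp) n hn
    simpa using this
  · have := rec_ge h0 h1 (u := u) (C := 0) hN (fun n hn => by rw [h n hn]; simp) n hn
    simpa using this

end avgsec

namespace Par
variable {d : ℕ} (P : Par d)

lemma γnn : ∀ n, 0 ≤ P.γ n := fun n => (P.γpos n).le
lemma γlt1 : ∀ n, P.n0 ≤ n → P.γ n < 1 := fun n hn => by have := P.γhalf n hn; linarith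
lemma η1 : 0 < 1 - P.η := by linarith [P.hη1]

lemma rhopos (n : ℕ) : 0 < rho P.γ P.n0 n := rho_pos P.γlt1 n

lemma rho_le (n : ℕ) (hn : P.n0 ≤ n) : rho P.γ P.n0 n ≤ P.γ n / P.γ P.n0 := by
  induction n, hn using Nat.le_induction with
  | base => rw [div_self (P.γpos _).ne', rho_of_le _ _ le_rfl]
  | succ n hn ih =>
    rw [rho_succ _ _ hn]
    have h3 := P.γlt1 (n+1) (by omega)
    have h5 : 0 ≤ 1 - P.γ (n+1) := by linarith
    calc _ ≤ (1 - P.γ (n+1)) * (P.γ n / P.γ P.n0) := by gcongr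
      _ = (P.γ n * (1 - P.γ (n+1))) / P.γ P.n0 := by ring
      _ ≤ _ := by have := P.γdec n hn; have := P.γpos P.n0; gcongr

lemma rho_tendsto : Tendsto (rho P.γ P.n0) atTop (𝓝 0) := by
  have h : Tendsto (fun n => P.γ n / P.γ P.n0) atTop (𝓝 0) := by
    simpa using P.γ0.div_const (P.γ P.n0)
  refine squeeze_zero' (Eventually.of_forall fun n => (P.rhopos n).le) ?_ h
  filter_upwards [eventually_ge_atTop P.n0] with n hn using P.rho_le n hn

/-- `γ / (lam b^d) → 0` -/
lemma rate' : Tendsto (fun n : ℕ => P.γ n / (P.lam n * P.b n ^ d)) atTop (𝓝 0) := by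
  refine squeeze_zero' (Eventually.of_forall fun n => ?_) ?_ P.rate
  · have := P.γpos n; have := P.lampos n; have := P.bpos n; positivity
  · filter_upwards [eventually_ge_atTop 3] with n hn
    have := P.γpos n; have := P.lampos n; have := P.bpos n
    have h : 1 ≤ Real.log n := by
      rw [Real.le_log_iff_exp_le (by positivity)]
      have := Real.exp_one_lt_d9
      have : (3:ℝ) ≤ n := by exact_mod_cast hn
      linarith
    gcongr
    nlinarith

lemma rate_lam : Tendsto (fun n : ℕ => P.γ n / P.lam n) atTop (𝓝 0) := by
  refine squeeze_zero' (Eventually.of_forall fun n => ?_) ?_ P.rate'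
  · have := P.γpos n; have := P.lampos n; positivity
  · filter_upwards [eventually_ge_atTop P.n0] with n hn
    have := P.γpos n; have := P.lampos n; have := P.bpos n
    have h : P.b n ^ d ≤ 1 := pow_le_one₀ (P.bpos n).le (P.bone n hn)
    gcongr
    nlinarith

lemma rho_lam : Tendsto (fun n : ℕ => rho P.γ P.n0 n / P.lam n) atTop (𝓝 0) := by
  have h : Tendsto (fun n => P.γ n / P.lam n / P.γ P.n0) atTop (𝓝 0) := by
    simpa using P.rate_lam.div_const (P.γ P.n0)
  refine squeeze_zero' (Eventually.of_forall fun n => ?_) ?_ h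
  · exact div_nonneg (P.rhopos n).le (P.lampos n).le
  · filter_upwards [eventually_ge_atTop P.n0] with n hn
    rw [div_right_comm]
    have := P.lampos n
    have := P.rho_le n hn
    gcongr

lemma lam_lt_rpow {n : ℕ} (hn : P.n0 ≤ n) : P.lam n ≤ P.lam n ^ (1 - P.η) := by
  have h1 := P.lampos n
  have h2 := P.lamhalf n hn
  calc P.lam n = P.lam n ^ (1:ℝ) := (Real.rpow_one _).symm
    _ ≤ _ := Real.rpow_le_rpow_of_exponent_ge h1 (by linarith) (by linarith [P.hη])

/-! kernels -/
lemma Kmpos : 0 < P.Km := lt_of_lt_of_le P.Kpos (P.Kbd 0)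

lemma kb_nonneg {b : ℝ} (hb : 0 < b) (z : EV d) : 0 ≤ kb P.K b z := by
  have := P.K0 (b⁻¹ • z)
  unfold kb; positivity

lemma kb_le {b : ℝ} (hb : 0 < b) (z : EV d) : kb P.K b z ≤ P.Km / b ^ d := by
  unfold kb
  rw [div_eq_inv_mul]
  have := P.Kbd (b⁻¹ • z)
  gcongr

lemma kb_cont (b : ℝ) : Continuous (kb P.K b) := by
  unfold kb
  have := P.Kcont
  fun_prop

lemma kb_lip {b : ℝ} (hb : 0 < b) (z z' : EV d) :
    |kb P.K b z - kb P.K b z'| ≤ P.L / b ^ (d+1) * ‖z - z'‖ := by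
  unfold kb
  rw [← mul_sub, abs_mul, abs_of_pos (by positivity)]
  have h := P.Klip (b⁻¹ • z) (b⁻¹ • z')
  rw [← smul_sub, norm_smul, Real.norm_of_nonneg (by positivity)] at h
  calc _ ≤ (b^d)⁻¹ * (P.L * (b⁻¹ * ‖z - z'‖)) := by gcongr
    _ = _ := by rw [pow_succ]; field_simp

lemma kb_integrable {b : ℝ} (hb : 0 < b) : Integrable (kb P.K b) := by
  unfold kb
  apply Integrable.const_mul
  exact P.KInt.comp_smul (inv_ne_zero hb.ne')

lemma kb_int {b : ℝ} (hb : 0 < b) : ∫ z, kb P.K b z = 1 := by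
  unfold kb
  rw [integral_const_mul, Measure.integral_comp_smul]
  simp only [finrank_euclideanSpace, Fintype.card_fin, P.Kint1, smul_eq_mul, mul_one]
  rw [inv_pow, inv_inv, abs_of_pos (by positivity)]
  field_simp

lemma kb_int_left {b : ℝ} (hb : 0 < b) (x : EV d) : ∫ y, kb P.K b (x - y) = 1 := by
  rw [integral_sub_left_eq_self (kb P.K b) volume x, P.kb_int hb]

lemma kb_int_right {b : ℝ} (hb : 0 < b) (x : EV d) : ∫ y, kb P.K b (y - x) = 1 := by
  rw [integral_sub_right_eq_self (kb P.K b) x, P.kb_int hb]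

lemma kb_integrable_left {b : ℝ} (hb : 0 < b) (x : EV d) : Integrable (fun y => kb P.K b (x - y)) :=
  (P.kb_integrable hb).comp_sub_left x

lemma kb_integrable_right {b : ℝ} (hb : 0 < b) (x : EV d) : Integrable (fun y => kb P.K b (y - x)) :=
  (P.kb_integrable hb).comp_sub_right x

lemma kb_tail {b : ℝ} (hb : 0 < b) {δ : ℝ} (hδ : 0 < δ) (z : EV d) (hz : δ ≤ ‖z‖) :
    kb P.K b z ≤ P.CK * δ ^ (-((d:ℝ) + P.rK)) * b ^ P.rK := by
  unfold kb
  have hpos : 0 < (d:ℝ) + P.rK := by have := P.hrK; positivity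
  have h := P.Ktail (b⁻¹ • z)
  have hK := P.K0 (b⁻¹ • z)
  have h1 : (b⁻¹ * δ) ^ ((d:ℝ) + P.rK) * P.K (b⁻¹ • z) ≤ P.CK := by
    refine le_trans ?_ h
    gcongr
    rw [norm_smul, Real.norm_of_nonneg (by positivity)]
    have : (b⁻¹ * δ) ^ ((d:ℝ) + P.rK) ≤ (b⁻¹ * ‖z‖) ^ ((d:ℝ) + P.rK) := by gcongr
    linarith
  rw [Real.mul_rpow (by positivity) hδ.le, Real.inv_rpow hb.le, Real.rpow_add hb,
    Real.rpow_natCast] at h1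
  rw [Real.rpow_neg hδ.le]
  have e1 : 0 < δ ^ ((d:ℝ) + P.rK) := by positivity
  have e2 : 0 < b ^ P.rK := by positivity
  have e3 : 0 < b ^ d := by positivity
  calc (b^d)⁻¹ * P.K (b⁻¹ • z) = (((b ^ d * b ^ P.rK)⁻¹ * δ ^ ((d:ℝ) + P.rK)) * P.K (b⁻¹ • z)) * (δ ^ ((d:ℝ) + P.rK))⁻¹ * b ^ P.rK := by
        field_simp
    _ ≤ P.CK * (δ ^ ((d:ℝ) + P.rK))⁻¹ * b ^ P.rK := by gcongr

end Par


namespace Par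
variable {d : ℕ} (P : Par d)

lemma brK0 : Tendsto (fun n => P.b n ^ P.rK) atTop (𝓝 0) := by
  have := P.b0.rpow_const (p := P.rK) (Or.inr P.hrK.le)
  rwa [Real.zero_rpow P.hrK.ne'] at this

/-- mass of the kernel in a small ball is close to one -/
lemma kb_mass {r ε : ℝ} (hr : 0 < r) (hε : 0 < ε) :
    ∀ᶠ n in atTop, ∀ x : EV d, 1 - ε ≤ ∫ y in ball x r, kb P.K (P.b n) (x - y) := by
  have h1 : Tendsto (fun n => ∫ z in (ball (0:EV d) (r / P.b n)), P.K z) atTop (𝓝 1) := by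
    have := tendsto_setIntegral_of_monotone (μ := volume) (f := P.K)
      (s := fun t : ℝ => ball (0:EV d) t)
      (fun t => measurableSet_ball) (fun s t h => ball_subset_ball h) P.KInt.integrableOn
    have hU : (⋃ t : ℝ, ball (0:EV d) t) = Set.univ := by
      rw [Set.eq_univ_iff_forall]; intro z
      exact Set.mem_iUnion.2 ⟨‖z‖ + 1, by simp⟩
    rw [hU, Measure.restrict_univ, P.Kint1] at this
    apply this.comp
    apply Tendsto.const_mul_atTop hr
    exact tendsto_inv_nhdsGT_zero.comp (tendsto_nhdsWithin_iff.2
      ⟨P.b0, Eventually.of_forall fun n => P.bpos n⟩)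
  filter_upwards [h1.eventually (lt_mem_nhds (show 1 - ε < 1 by linarith))] with n hn x
  have hb := P.bpos n
  refine hn.le.trans (le_of_eq ?_)
  rw [← integral_indicator measurableSet_ball, ← integral_indicator measurableSet_ball]
  have e : (fun y => (ball x r).indicator (fun y => kb P.K (P.b n) (x - y)) y)
      = fun y => (fun z => (P.b n ^ d)⁻¹ * (ball (0:EV d) (r / P.b n)).indicator P.K ((P.b n)⁻¹ • z)) (x - y) := by
    ext y
    have hm : (y ∈ ball x r) ↔ ((P.b n)⁻¹ • (x - y) ∈ ball (0:EV d) (r / P.b n)) := by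
      rw [mem_ball, mem_ball_zero_iff, norm_smul, Real.norm_of_nonneg (by positivity), dist_eq_norm,
        norm_sub_rev, inv_mul_eq_div]
      exact (div_lt_div_iff_of_pos_right hb).symm
    by_cases h : y ∈ ball x r
    · simp only [Set.indicator_of_mem h, Set.indicator_of_mem (hm.1 h), kb]
    · simp only [Set.indicator_of_notMem h, Set.indicator_of_notMem (fun h' => h (hm.2 h')), mul_zero]
  rw [e, integral_sub_left_eq_self (fun z => (P.b n ^ d)⁻¹ * (ball (0:EV d) (r / P.b n)).indicator P.K ((P.b n)⁻¹ • z)) volume x,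
    integral_const_mul, Measure.integral_comp_smul]
  simp only [finrank_euclideanSpace, Fintype.card_fin, smul_eq_mul]
  rw [inv_pow, inv_inv, abs_of_pos (by positivity)]
  field_simp

/-- a fixed fraction of the kernel mass stays inside a ball -/
lemma kb_frac : ∃ κ > 0, ∀ R > 0, ∀ᶠ n in atTop, ∀ x0 x : EV d, x ∈ closedBall x0 R →
    κ ≤ ∫ y in closedBall x0 R, kb P.K (P.b n) (x - y) := by
  obtain ⟨r0, hr0, hK⟩ : ∃ r0 > 0, ∀ z : EV d, ‖z‖ < r0 → P.K 0 / 2 ≤ P.K z := by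
    have := P.Kcont.tendsto 0
    have := this.eventually (lt_mem_nhds (show P.K 0 / 2 < P.K 0 by linarith [P.Kpos]))
    obtain ⟨r, hr, h⟩ := Metric.eventually_nhds_iff.1 this
    exact ⟨r, hr, fun z hz => (h (by simpa using hz)).le⟩
  have : Nonempty (Fin d) := ⟨⟨0, P.hd⟩⟩
  refine ⟨(P.K 0 / 2) * (r0 / 2) ^ d * volume.real (ball (0:EV d) 1), ?_, ?_⟩
  · have h1 := P.Kpos
    have h2 : 0 < volume.real (ball (0:EV d) 1) := by
      rw [measureReal_def]
      exact ENNReal.toReal_pos (measure_ball_pos _ _ one_pos).ne' measure_ball_lt_top.ne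
    positivity
  intro R hR
  filter_upwards [P.b0.eventually (gt_mem_nhds (show 0 < R / r0 by positivity))] with n hn x0 x hx
  have hb := P.bpos n
  set b := P.b n
  have hrb : r0 * b < R := by rw [lt_div_iff₀ hr0] at hn; linarith
  set s : ℝ := r0 * b / (2 * R) with hs
  have hs0 : 0 < s := by positivity
  have hs1 : s ≤ 1 := by rw [hs, div_le_one (by positivity)]; linarith
  have hsR : s * R = r0 * b / 2 := by rw [hs]; field_simp
  set z : EV d := x + s • (x0 - x)
  rw [mem_closedBall, dist_eq_norm] at hx
  have hz1 : ‖z - x‖ ≤ r0 * b / 2 := by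
    simp only [z, add_sub_cancel_left, norm_smul, Real.norm_of_nonneg hs0.le]
    rw [norm_sub_rev, ← hsR]; gcongr
  have hz2 : ‖z - x0‖ ≤ R - r0 * b / 2 := by
    have : z - x0 = (1 - s) • (x - x0) := by simp only [z]; module
    rw [this, norm_smul, Real.norm_of_nonneg (by linarith), ← hsR]
    nlinarith
  have hsub : ball z (r0 * b / 2) ⊆ closedBall x0 R := by
    intro y hy
    rw [mem_ball, dist_eq_norm] at hy
    rw [mem_closedBall, dist_eq_norm]
    have : ‖y - x0‖ ≤ ‖y - z‖ + ‖z - x0‖ := norm_sub_le_norm_sub_add_norm_sub _ _ _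
    linarith
  have hInt0 := P.kb_integrable_left hb x
  calc _ = ∫ y in ball z (r0 * b / 2), (b ^ d)⁻¹ * (P.K 0 / 2) := by
        rw [setIntegral_const, measureReal_def, measureReal_def,
          Measure.addHaar_ball_of_pos _ z (show 0 < r0 * b / 2 by positivity)]
        simp only [finrank_euclideanSpace, Fintype.card_fin, smul_eq_mul, ENNReal.toReal_mul]
        rw [ENNReal.toReal_ofReal (by positivity)]
        have : (r0 * b / 2)^d = (r0/2)^d * b^d := by rw [← mul_pow]; ring_nf
        rw [this]
        field_simp
    _ ≤ ∫ y in ball z (r0 * b / 2), kb P.K b (x - y) := by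
        apply setIntegral_mono_on (integrableOn_const (by finiteness)) hInt0.integrableOn measurableSet_ball
        intro y hy
        unfold kb
        gcongr
        apply hK
        rw [mem_ball, dist_eq_norm] at hy
        rw [norm_smul, Real.norm_of_nonneg (by positivity), inv_mul_lt_iff₀ hb]
        have : ‖y - x‖ ≤ ‖y - z‖ + ‖z - x‖ := norm_sub_le_norm_sub_add_norm_sub _ _ _
        rw [norm_sub_rev]
        linarith
    _ ≤ _ := by
        apply setIntegral_mono_set hInt0.integrableOn
        · exact Eventually.of_forall fun y => P.kb_nonneg hb _
        · exact Eventually.of_forall hsub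

/-! psi -/
lemma trpos (n : ℕ) : 0 < P.tr n := by
  have := P.hc; have := P.lampos n; unfold tr; positivity

lemma tr_mono {m n : ℕ} (h : m ≤ n) : P.tr m ≤ P.tr n := by
  have := P.hc; have := P.lampos n; have := P.lamanti h
  unfold tr; gcongr

lemma tw_nonneg (n : ℕ) {v : ℝ} (hv : 0 ≤ v) : 0 ≤ P.tw n v := by
  have := P.trpos n; unfold tw; positivity

lemma tw_le (n : ℕ) {v : ℝ} (hv : 0 ≤ v) : P.tw n v ≤ P.tr n ^ P.η := by
  unfold tw
  have := P.trpos n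
  exact Real.rpow_le_rpow (by positivity) (min_le_right _ _) P.hη.le

lemma tw_le_self (n : ℕ) {v : ℝ} (hv : 0 ≤ v) : P.tw n v ≤ v ^ P.η := by
  unfold tw
  have := P.trpos n
  exact Real.rpow_le_rpow (by positivity) (min_le_left _ _) P.hη.le

lemma tw_eq (n : ℕ) {v : ℝ} (hv : v ≤ P.tr n) : P.tw n v = v ^ P.η := by
  unfold tw; rw [min_eq_left hv]

lemma div_rpow_mul {a q : ℝ} (ha : 0 ≤ a) (hq : 0 ≤ q) :
    (a / q) ^ P.η * q = a ^ P.η * q ^ (1 - P.η) := by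
  rcases hq.eq_or_lt with rfl | hq
  · rw [Real.zero_rpow P.η1.ne']; simp
  · rw [Real.div_rpow ha hq.le, Real.rpow_sub hq, Real.rpow_one]; ring

lemma psi_nonneg (n : ℕ) {q : EV d → ℝ} {y : EV d} (hq : 0 ≤ q y) : 0 ≤ P.psi n q y :=
  mul_nonneg (P.tw_nonneg n (div_nonneg (P.f0 y) hq)) hq

lemma psi_le (n : ℕ) {q : EV d → ℝ} {y : EV d} (hq : 0 ≤ q y) :
    P.psi n q y ≤ P.f y ^ P.η * q y ^ (1 - P.η) := by
  rw [← P.div_rpow_mul (P.f0 y) hq]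
  unfold psi
  gcongr
  exact P.tw_le_self n (div_nonneg (P.f0 y) hq)

lemma psi_le' (n : ℕ) {q : EV d → ℝ} {y : EV d} (hq : 0 ≤ q y) :
    P.psi n q y ≤ P.tr n ^ P.η * q y := by
  unfold psi
  gcongr
  exact P.tw_le n (div_nonneg (P.f0 y) hq)

/-- Young inequality -/
lemma psi_le_young (n : ℕ) {q : EV d → ℝ} {y : EV d} (hq : 0 ≤ q y) :
    P.psi n q y ≤ P.η * P.f y + (1 - P.η) * q y :=
  (P.psi_le n hq).trans
    (Real.geom_mean_le_arith_mean2_weighted P.hη.le P.η1.le (P.f0 y) hq (by ring))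

lemma ratio_le_tr (n : ℕ) {q : EV d → ℝ} {y : EV d} (hq : P.lam n / 2 * P.q0 y ≤ q y) :
    P.f y / q y ≤ P.tr n := by
  have h1 := P.lampos n
  have h2 := P.hc
  have h3 := P.hcf y
  have h4 := P.f0 y
  have h5 : P.lam n / 2 * (P.c * P.f y) ≤ q y := le_trans (by gcongr) hq
  rcases h4.eq_or_lt with h | h
  · rw [← h]; simp [(P.trpos n).le]
  · have hqpos : 0 < q y := lt_of_lt_of_le (by positivity) h5
    rw [div_le_iff₀ hqpos]
    calc P.f y = P.tr n * (P.lam n / 2 * (P.c * P.f y)) := by unfold tr; field_simp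
      _ ≤ _ := by have := P.trpos n; gcongr

lemma psi_eq (n : ℕ) {q : EV d → ℝ} {y : EV d} (hq0 : 0 ≤ q y) (hq : P.lam n / 2 * P.q0 y ≤ q y) :
    P.psi n q y = P.f y ^ P.η * q y ^ (1 - P.η) := by
  rw [← P.div_rpow_mul (P.f0 y) hq0]
  unfold psi
  rw [P.tw_eq n (P.ratio_le_tr n hq)]

lemma tw_meas (n : ℕ) : Measurable (P.tw n) := by
  unfold tw; fun_prop

lemma psi_meas (n : ℕ) {q : EV d → ℝ} (hq : Measurable q) : Measurable (P.psi n q) := by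
  unfold psi
  have := P.fcont.measurable
  exact ((P.tw_meas n).comp (this.div hq)).mul hq

lemma psi_integrable (n : ℕ) {q : EV d → ℝ} (hq : Measurable q) (hq0 : ∀ y, 0 ≤ q y)
    (hqi : Integrable q) : Integrable (P.psi n q) := by
  refine (hqi.const_mul (P.tr n ^ P.η)).mono' (P.psi_meas n hq).aestronglyMeasurable ?_
  refine Eventually.of_forall fun y => ?_
  rw [Real.norm_of_nonneg (P.psi_nonneg n (hq0 y))]
  exact P.psi_le' n (hq0 y)

lemma psi_int_le_one (n : ℕ) {q : EV d → ℝ} (hq : Measurable q) (hq0 : ∀ y, 0 ≤ q y)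
    (hqi : Integrable q) (hq1 : ∫ y, q y = 1) : ∫ y, P.psi n q y ≤ 1 := by
  calc _ ≤ ∫ y, (P.η * P.f y + (1 - P.η) * q y) :=
        integral_mono (P.psi_integrable n hq hq0 hqi)
          ((P.fInt.const_mul _).add (hqi.const_mul _)) (fun y => P.psi_le_young n (hq0 y))
    _ = 1 := by
      rw [integral_add (P.fInt.const_mul _) (hqi.const_mul _), integral_const_mul,
        integral_const_mul, P.fint1, hq1]; ring

lemma psi_mul_integrable (n : ℕ) {q : EV d → ℝ} (hq : Measurable q) (hq0 : ∀ y, 0 ≤ q y)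
    (hqi : Integrable q) {κ : EV d → ℝ} (hκ : Measurable κ) {C : ℝ} (hC : ∀ y, |κ y| ≤ C) :
    Integrable (fun y => P.psi n q y * κ y) :=
  (P.psi_integrable n hq hq0 hqi).mul_bdd (c := C) hκ.aestronglyMeasurable
    (Eventually.of_forall hC)

end Par


/-- disintegration, with the sub-sigma-algebra presented through a map `π` -/
lemma disint_aux {Ω Ω' E : Type*} [MeasurableSpace Ω] [MeasurableSpace Ω'] [TopologicalSpace E]
    [MeasurableSpace E] [BorelSpace E] [HasOuterApproxClosed E]
    (ν : Measure E) [SFinite ν] (μ : Measure Ω) [IsProbabilityMeasure μ] (π : Ω → Ω')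
    (hπ : Measurable π) (Y : Ω → E) (hY : Measurable Y) (q : Ω' → E → ℝ)
    (hq : Measurable (Function.uncurry q))
    (hpos : ∀ᵐ ω ∂μ, ∀ y, 0 ≤ q (π ω) y) (hInt0 : ∀ᵐ ω ∂μ, ∫ y, q (π ω) y ∂ν = 1)
    (hpol : ∀ S, MeasurableSet S → ∀ φ : BoundedContinuousFunction E ℝ,
      ∫ ω in π ⁻¹' S, φ (Y ω) ∂μ = ∫ ω in π ⁻¹' S, (∫ y, φ y * q (π ω) y ∂ν) ∂μ)
    (h : Ω' × E → ℝ≥0∞) (hh : Measurable h) :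
    ∫⁻ ω, h (π ω, Y ω) ∂μ = ∫⁻ ω, ∫⁻ y, h (π ω, y) * ENNReal.ofReal (q (π ω) y) ∂ν ∂μ := by
  have hqI : ∀ᵐ ω ∂μ, Integrable (q (π ω)) ν := by
    filter_upwards [hInt0] with ω hω
    by_contra hc
    rw [integral_undef hc] at hω; norm_num at hω
  have hq1 : ∀ᵐ ω ∂μ, ∫⁻ y, ENNReal.ofReal (q (π ω) y) ∂ν = 1 := by
    filter_upwards [hInt0, hqI, hpos] with ω h1 h2 h3
    rw [← ofReal_integral_eq_lintegral_ofReal h2 (Eventually.of_forall h3), h1]; simp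
  have hqm : Measurable (fun p : Ω' × E => ENNReal.ofReal (q p.1 p.2)) := hq.ennreal_ofReal
  have hprod : Measurable (fun ω => (π ω, Y ω)) := hπ.prodMk hY
  set μ' := μ.map π
  have : IsProbabilityMeasure μ' := Measure.isProbabilityMeasure_map hπ.aemeasurable
  set ν1 : Measure (Ω' × E) := μ.map (fun ω => (π ω, Y ω))
  set ν2 : Measure (Ω' × E) := (μ'.prod ν).withDensity (fun p => ENNReal.ofReal (q p.1 p.2))
  have hν2 : ∀ g : Ω' × E → ℝ≥0∞, Measurable g → ∫⁻ p, g p ∂ν2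
      = ∫⁻ ω, ∫⁻ y, g (π ω, y) * ENNReal.ofReal (q (π ω) y) ∂ν ∂μ := by
    intro g hg
    rw [lintegral_withDensity_eq_lintegral_mul _ hqm hg, lintegral_prod _ (by fun_prop)]
    rw [lintegral_map (by
      exact Measurable.lintegral_prod_right' (f := fun p : Ω' × E => ENNReal.ofReal (q p.1 p.2) * g p) (by fun_prop)) hπ]
    simp only [Pi.mul_apply, mul_comm]
  have hfin : IsFiniteMeasure ν2 := by
    constructor
    rw [← lintegral_one, hν2 _ measurable_const]
    simp only [one_mul]
    rw [lintegral_congr_ae hq1]; simp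
  have key : ν1 = ν2 := by
    refine Measure.ext_prod ?_
    intro S C hS hC
    -- two measures on E
    set m1 : Measure E := (μ.restrict (π ⁻¹' S)).map Y
    set m2 : Measure E := (ν2.restrict (Prod.fst ⁻¹' S)).map Prod.snd
    have hm : m1 = m2 := by
      have : IsFiniteMeasure m1 := by unfold m1; infer_instance
      have : IsFiniteMeasure m2 := by unfold m2; infer_instance
      apply ext_of_forall_lintegral_eq_of_IsFiniteMeasure
      intro φ
      have hφ : Measurable (fun y => (φ y : ℝ≥0∞)) := φ.continuous.measurable.coe_nnreal_ennreal
      rw [lintegral_map hφ hY, lintegral_map hφ measurable_snd,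
        ← lintegral_indicator (hS.preimage measurable_fst), hν2 (fun p => (Prod.fst ⁻¹' S).indicator (fun a : Ω' × E => (φ a.2 : ℝ≥0∞)) p) ((hφ.comp measurable_snd).indicator (hS.preimage measurable_fst))]
      have e2 : ∀ ω, ∫⁻ y, (Prod.fst ⁻¹' S).indicator (fun a : Ω' × E => (φ a.2 : ℝ≥0∞)) (π ω, y) * ENNReal.ofReal (q (π ω) y) ∂ν
          = (π ⁻¹' S).indicator (fun ω => ∫⁻ y, φ y * ENNReal.ofReal (q (π ω) y) ∂ν) ω := by
        intro ω
        by_cases hω : π ω ∈ S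
        · simp [Set.indicator, hω]
        · simp [Set.indicator, hω]
      simp_rw [e2]
      rw [lintegral_indicator (hS.preimage hπ)]
      -- bounded real valued version
      obtain ⟨C, hC⟩ := φ.bounded
      let ψ : BoundedContinuousFunction E ℝ := BoundedContinuousFunction.mkOfBound
        ⟨fun y => (φ y : ℝ), by fun_prop⟩ C (fun x y => by
          simpa [NNReal.dist_eq, Real.dist_eq] using hC x y)
      have hψ : ∀ y, ψ y = φ y := fun y => rfl
      have hψb : ∃ M : ℝ, ∀ y, ‖ψ y‖ ≤ M := ⟨‖ψ‖, ψ.norm_coe_le_norm⟩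
      obtain ⟨M, hM⟩ := hψb
      have h1 := hpol S hS ψ
      have hiY : Integrable (fun ω => ψ (Y ω)) (μ.restrict (π ⁻¹' S)) := by
        refine Integrable.of_bound (C := M) ?_ (Eventually.of_forall fun ω => hM _)
        exact (ψ.continuous.measurable.comp hY).aestronglyMeasurable
      have l1 : ∫⁻ ω in π ⁻¹' S, (φ (Y ω) : ℝ≥0∞) ∂μ = ENNReal.ofReal (∫ ω in π ⁻¹' S, ψ (Y ω) ∂μ) := by
        rw [ofReal_integral_eq_lintegral_ofReal hiY (Eventually.of_forall fun ω => by simp [hψ])]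
        simp [hψ]
      have inner : ∀ᵐ ω ∂(μ.restrict (π ⁻¹' S)), ∫⁻ y, φ y * ENNReal.ofReal (q (π ω) y) ∂ν
          = ENNReal.ofReal (∫ y, ψ y * q (π ω) y ∂ν) := by
        filter_upwards [ae_restrict_of_ae hqI, ae_restrict_of_ae hpos] with ω h1 h2
        rw [ofReal_integral_eq_lintegral_ofReal (h1.bdd_mul (c := M) ψ.continuous.aestronglyMeasurable (Eventually.of_forall hM))]
        · simp [hψ, ENNReal.ofReal_mul]
        · exact Eventually.of_forall fun y => mul_nonneg (by simp [hψ]) (h2 y)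
      have hmeasI : StronglyMeasurable (fun ω => ∫ y, ψ y * q (π ω) y ∂ν) := by
        have : StronglyMeasurable (fun p : Ω' × E => ψ p.2 * q p.1 p.2) := by
          have := ψ.continuous.measurable
          have h' : Measurable (fun p : Ω' × E => q p.1 p.2) := hq
          exact Measurable.stronglyMeasurable (by fun_prop)
        exact (this.integral_prod_right' (ν := ν)).comp_measurable hπ
      have hi2 : Integrable (fun ω => ∫ y, ψ y * q (π ω) y ∂ν) (μ.restrict (π ⁻¹' S)) := by
        refine Integrable.of_bound (C := M) hmeasI.aestronglyMeasurable ?_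
        filter_upwards [ae_restrict_of_ae hqI, ae_restrict_of_ae hpos, ae_restrict_of_ae hInt0] with ω h1 h2 h3
        calc _ ≤ ∫ y, M * q (π ω) y ∂ν := by
              apply norm_integral_le_of_norm_le (h1.const_mul M)
              refine Eventually.of_forall fun y => ?_
              rw [norm_mul, Real.norm_of_nonneg (h2 y)]
              exact mul_le_mul_of_nonneg_right (hM y) (h2 y)
          _ = M := by rw [integral_const_mul, h3, mul_one]
      rw [l1, lintegral_congr_ae inner, h1, ofReal_integral_eq_lintegral_ofReal hi2]
      filter_upwards [ae_restrict_of_ae hpos] with ω h2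
      exact integral_nonneg fun y => mul_nonneg (by simp [hψ]) (h2 y)
    have a1 : ν1 (S ×ˢ C) = m1 C := by
      rw [Measure.map_apply hprod (hS.prod hC), Measure.map_apply hY hC,
        Measure.restrict_apply (hY hC)]
      congr 1; ext ω; simp [and_comm]
    have a2 : ν2 (S ×ˢ C) = m2 C := by
      rw [Measure.map_apply measurable_snd hC, Measure.restrict_apply (measurable_snd hC)]
      congr 1; ext ω; simp [and_comm]
    rw [a1, a2, hm]
  rw [← hν2 h hh, ← key, lintegral_map hh hprod]

/-- disintegration along the sigma-algebra `m` -/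
lemma disint {Ω : Type*} {d : ℕ} {m : MeasurableSpace Ω} [m0 : MeasurableSpace Ω] (hm : m ≤ m0)
    (μ : Measure Ω) [IsProbabilityMeasure μ] (Y : Ω → EV d) (hY : Measurable Y) (q : Ω → EV d → ℝ)
    (hq : @Measurable _ _ (@Prod.instMeasurableSpace Ω (EV d) m _) _ (Function.uncurry q))
    (hpos : ∀ᵐ ω ∂μ, ∀ y, 0 ≤ q ω y) (hInt0 : ∀ᵐ ω ∂μ, ∫ y, q ω y = 1)
    (hpol : ∀ (φ : EV d → ℝ), Continuous φ → (∃ C, ∀ x, |φ x| ≤ C) →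
      (μ[fun ω => φ (Y ω) | m]) =ᵐ[μ] (fun ω => ∫ y, φ y * q ω y))
    (h : Ω × EV d → ℝ≥0∞) (hh : @Measurable _ _ (@Prod.instMeasurableSpace Ω (EV d) m _) _ h) :
    ∫⁻ ω, h (ω, Y ω) ∂μ = ∫⁻ ω, (∫⁻ y, h (ω, y) * ENNReal.ofReal (q ω y)) ∂μ := by
  refine @disint_aux Ω Ω (EV d) m0 m _ _ _ _ volume _ μ _ id ?_ Y hY q hq hpos hInt0 ?_ h hh
  · exact measurable_id'' hm
  · intro S hS φ
    have hφ := hpol φ φ.continuous ⟨‖φ‖, φ.norm_coe_le_norm⟩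
    have hi : Integrable (fun ω => φ (Y ω)) μ := by
      refine Integrable.of_bound (C := ‖φ‖) ?_ (Eventually.of_forall fun ω => φ.norm_coe_le_norm _)
      exact (φ.continuous.measurable.comp hY).aestronglyMeasurable
    simp only [Set.preimage_id, id]
    rw [← setIntegral_condExp hm hi hS]
    exact setIntegral_congr_ae (hm S hS) (hφ.mono fun ω h _ => h)


/-- The stochastic algorithm. -/
structure Mdl {Ω : Type*} [MeasurableSpace Ω] (μ : Measure Ω) {d : ℕ} (P : Par d) where
  X : ℕ → Ω → EuclideanSpace ℝ (Fin d)
  w : ℕ → Ω → ℝ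
  g : ℕ → Ω → EuclideanSpace ℝ (Fin d) → ℝ
  q : ℕ → Ω → EuclideanSpace ℝ (Fin d) → ℝ
  hX : ∀ n, Measurable (X n)
  hg0 : ∀ (ω : Ω) x, g 0 ω x = 0
  hw : ∀ n (ω : Ω), w (n+1) ω = P.f (X (n+1) ω) / q n ω (X (n+1) ω)
  hgrec : ∀ n (ω : Ω) x, g (n+1) ω x
      = (1 - P.γ (n+1)) * g n ω x
        + P.γ (n+1) * w (n+1) ω ^ P.η * kb P.K (P.b (n+1)) (x - X (n+1) ω)
  hqrec : ∀ n (ω : Ω) x, q (n+1) ω x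
      = (1 - P.lam (n+1)) * (g (n+1) ω x / (∫ y, g (n+1) ω y)) + P.lam (n+1) * P.q0 x
  hpolicy : ∀ n (φ : EuclideanSpace ℝ (Fin d) → ℝ), Continuous φ →
      (∃ C, ∀ x, |φ x| ≤ C) →
      (μ[fun ω => φ (X (n+1) ω) | natFilt X n]) =ᵐ[μ] (fun ω => ∫ y, φ y * q n ω y)
  hadapt : ∀ n x, Measurable[natFilt X n] fun ω => q n ω x

namespace Mdl
variable {Ω : Type*} [m0 : MeasurableSpace Ω] {μ : Measure Ω} {d : ℕ} {P : Par d} (M : Mdl μ P)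

lemma filt_le (n : ℕ) : natFilt M.X n ≤ m0 := by
  unfold natFilt
  exact iSup₂_le fun i _ => (M.hX i).comap_le

lemma filt_mono {m n : ℕ} (h : m ≤ n) : natFilt M.X m ≤ natFilt M.X n := by
  unfold natFilt
  refine iSup₂_le fun i hi => ?_
  refine le_iSup₂_of_le (f := fun i (_ : i ∈ Finset.Icc 1 n) => MeasurableSpace.comap (M.X i) inferInstance) i ?_ le_rfl
  simp only [Finset.mem_Icc] at hi ⊢; omega

lemma X_meas {i n : ℕ} (h1 : 1 ≤ i) (h : i ≤ n) : Measurable[natFilt M.X n] (M.X i) := by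
  refine Measurable.mono (comap_measurable (M.X i)) ?_ le_rfl
  unfold natFilt
  exact le_iSup₂_of_le (f := fun i (_ : i ∈ Finset.Icc 1 n) => MeasurableSpace.comap (M.X i) inferInstance) i (by simp; omega) le_rfl

lemma g_cont (n : ℕ) (ω : Ω) : Continuous (M.g n ω) := by
  induction n with
  | zero => rw [show M.g 0 ω = fun _ => 0 from funext (M.hg0 ω)]; fun_prop
  | succ n ih =>
    rw [show M.g (n+1) ω = _ from funext (M.hgrec n ω)]
    have := P.kb_cont (P.b (n+1))
    fun_prop

lemma g_int (n : ℕ) (ω : Ω) : Integrable (M.g n ω) := by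
  induction n with
  | zero => rw [show M.g 0 ω = fun _ => 0 from funext (M.hg0 ω)]; fun_prop
  | succ n ih =>
    rw [show M.g (n+1) ω = _ from funext (M.hgrec n ω)]
    exact (ih.const_mul _).add ((P.kb_integrable_right (P.bpos _) _).const_mul _)

lemma g_bdd (n : ℕ) (ω : Ω) : ∃ C, ∀ x, |M.g n ω x| ≤ C := by
  induction n with
  | zero => exact ⟨0, fun x => by simp [M.hg0]⟩
  | succ n ih =>
    obtain ⟨C, hC⟩ := ih
    refine ⟨|1 - P.γ (n+1)| * C + |P.γ (n+1) * M.w (n+1) ω ^ P.η| * (P.Km / P.b (n+1) ^ d), fun x => ?_⟩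
    rw [M.hgrec]
    refine (abs_add_le _ _).trans ?_
    rw [abs_mul, abs_mul _ (kb _ _ _), abs_of_nonneg (P.kb_nonneg (P.bpos _) _)]
    gcongr
    · exact hC x
    · exact P.kb_le (P.bpos _) _

lemma I_rec (n : ℕ) (ω : Ω) : ∫ x, M.g (n+1) ω x
    = (1 - P.γ (n+1)) * (∫ x, M.g n ω x) + P.γ (n+1) * M.w (n+1) ω ^ P.η := by
  simp_rw [M.hgrec]
  rw [integral_add ((M.g_int n ω).const_mul _) ((P.kb_integrable_right (P.bpos _) _).const_mul _),
    integral_const_mul, integral_const_mul, P.kb_int_right (P.bpos _), mul_one]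

lemma q_cont {n : ℕ} (hn : 1 ≤ n) (ω : Ω) : Continuous (M.q n ω) := by
  obtain ⟨n, rfl⟩ : ∃ m, n = m + 1 := ⟨n - 1, by omega⟩
  rw [show M.q (n+1) ω = _ from funext (M.hqrec n ω)]
  have := M.g_cont (n+1) ω
  have := P.q0cont
  fun_prop

lemma q_joint {n : ℕ} (hn : 1 ≤ n) :
    @Measurable _ _ (@Prod.instMeasurableSpace Ω (EV d) (natFilt M.X n) _) _ (Function.uncurry (M.q n)) := by
  have h : @Measurable (EV d × Ω) ℝ (@Prod.instMeasurableSpace (EV d) Ω _ (natFilt M.X n)) _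
      (Function.uncurry (fun x ω => M.q n ω x)) :=
    @measurable_uncurry_of_continuous_of_measurable Ω ℝ (EV d) _ _ _ _ _ _ _ _ _ (natFilt M.X n) (fun x ω => M.q n ω x)
      (fun ω => M.q_cont hn ω) (fun x => M.hadapt n x)
  exact h.comp (@measurable_swap Ω (EV d) (natFilt M.X n) _)

lemma q_nonneg [IsProbabilityMeasure μ] : ∀ᵐ ω ∂μ, ∀ n, 1 ≤ n → ∀ y, 0 ≤ M.q n ω y := by
  let φ : ℕ → ℕ → EV d → ℝ := fun i j y => max 0 (1 / ((j:ℝ) + 1) - ‖y - TopologicalSpace.denseSeq (EV d) i‖)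
  have hφc : ∀ i j, Continuous (φ i j) := fun i j => by fun_prop
  have hφ0 : ∀ i j y, 0 ≤ φ i j y := fun i j y => le_max_left _ _
  have hφb : ∀ i j, ∃ C, ∀ y, |φ i j y| ≤ C := fun i j => by
    refine ⟨1 / ((j:ℝ) + 1), fun y => ?_⟩
    rw [abs_of_nonneg (hφ0 i j y)]
    exact max_le (by positivity) (by linarith [norm_nonneg (y - TopologicalSpace.denseSeq (EV d) i)])
  have key : ∀ᵐ ω ∂μ, ∀ n i j, 0 ≤ ∫ y, φ i j y * M.q n ω y := by
    rw [ae_all_iff]; intro n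
    rw [ae_all_iff]; intro i
    rw [ae_all_iff]; intro j
    have h1 := M.hpolicy n (φ i j) (hφc i j) (hφb i j)
    have h2 : 0 ≤ᵐ[μ] μ[fun ω => φ i j (M.X (n+1) ω) | natFilt M.X n] :=
      condExp_nonneg (Eventually.of_forall fun ω => hφ0 _ _ _)
    filter_upwards [h1, h2] with ω h1 h2
    rw [← h1]; exact h2
  filter_upwards [key] with ω hω n hn y
  by_contra hneg
  push Not at hneg
  have hc := M.q_cont hn ω
  have hopen : IsOpen {z | M.q n ω z < 0} := isOpen_lt hc continuous_const
  obtain ⟨ρ, hρ, hball⟩ := Metric.isOpen_iff.1 hopen y hneg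
  obtain ⟨i, hi⟩ := (TopologicalSpace.denseRange_denseSeq (EV d)).exists_mem_open (Metric.isOpen_ball (x := y) (ε := ρ/2)) ⟨y, by simp [hρ]⟩
  obtain ⟨j, hj⟩ := exists_nat_one_div_lt (show 0 < ρ / 2 by positivity)
  have hout : ∀ z, z ∉ closedBall y ρ → φ i j z = 0 := by
    intro z hz
    simp only [mem_closedBall, not_le, dist_eq_norm, mem_ball] at hz hi
    apply max_eq_left
    have := norm_sub_le_norm_sub_add_norm_sub z (TopologicalSpace.denseSeq (EV d) i) y
    linarith
  have hle : ∀ z, 0 ≤ -(φ i j z * M.q n ω z) := by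
    intro z
    by_cases hz : z ∈ ball y ρ
    · have := hball hz
      simp only [Set.mem_setOf_eq] at this
      nlinarith [hφ0 i j z]
    · have : φ i j z = 0 := by
        simp only [dist_eq_norm, mem_ball, not_lt] at hz hi
        apply max_eq_left
        have := norm_sub_le_norm_sub_add_norm_sub z (TopologicalSpace.denseSeq (EV d) i) y
        linarith
      simp [this]
  have hcc : Continuous (fun z => -(φ i j z * M.q n ω z)) := by
    have := hφc i j
    fun_prop
  have hcs : HasCompactSupport (fun z => -(φ i j z * M.q n ω z)) :=
    HasCompactSupport.intro (isCompact_closedBall y ρ) fun z hz => by simp [hout z hz]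
  have hp := hcc.integral_pos_of_hasCompactSupport_nonneg_nonzero (μ := volume) hcs hle
    (x := TopologicalSpace.denseSeq (EV d) i) (by
      have h1 : M.q n ω (TopologicalSpace.denseSeq (EV d) i) < 0 := hball (ball_subset_ball (by linarith) hi)
      have h2 : 0 < φ i j (TopologicalSpace.denseSeq (EV d) i) := by
        apply lt_max_of_lt_right; simp; positivity
      have := mul_neg_of_pos_of_neg h2 h1
      exact ne_of_gt (by linarith))
  rw [integral_neg] at hp
  linarith [hω n i j]

lemma q_int1 [IsProbabilityMeasure μ] : ∀ᵐ ω ∂μ, ∀ n, ∫ y, M.q n ω y = 1 := by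
  rw [ae_all_iff]; intro n
  have h1 := M.hpolicy n (fun _ => 1) continuous_const ⟨1, fun x => by simp⟩
  filter_upwards [h1] with ω h1
  rw [condExp_const (M.filt_le n)] at h1
  simpa using h1.symm

end Mdl


lemma exp_le_lin {s ε z : ℝ} (hs : s = 1 ∨ s = -1) (hε : ε ≤ 1) (hz : 0 ≤ z) (hzε : z ≤ ε) :
    Real.exp (s * z) ≤ 1 + (s + ε) * z := by
  have h1 : |s * z| ≤ 1 := by
    rcases hs with rfl | rfl <;> simp [abs_of_nonneg hz] <;> linarith
  have h := Real.abs_exp_sub_one_sub_id_le h1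
  have h2 := (abs_le.1 h).2
  have h3 : (s * z)^2 = z ^ 2 := by rcases hs with rfl | rfl <;> ring
  nlinarith [mul_le_mul_of_nonneg_right hzε hz]

namespace Par
variable {d : ℕ} (P : Par d)

/-- deterministic bound for the increments -/
noncomputable def B (n : ℕ) : ℝ := P.tr n ^ P.η * ((P.Km + 1) / P.b n ^ d)

lemma Bpos (n : ℕ) : 0 < P.B n := by
  unfold B
  have := P.trpos n; have := P.Kmpos; have := P.bpos n
  positivity

lemma B_mono {m n : ℕ} (h : m ≤ n) : P.B m ≤ P.B n := by
  unfold B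
  have := P.trpos n; have := P.trpos m; have := P.Kmpos; have := P.bpos n; have := P.bpos m
  have h1 := P.tr_mono h; have h2 := P.banti h; have := P.hη
  gcongr

/-- admissible kernel families -/
structure Adm (κ : ℕ → EV d → ℝ) : Prop where
  meas : ∀ k, Measurable (κ k)
  nn : ∀ k y, 0 ≤ κ k y
  le : ∀ k, P.n0 ≤ k → ∀ y, κ k y ≤ (P.Km + 1) / P.b (k+1) ^ d

lemma adm_one : P.Adm (fun _ _ => 1) := by
  refine ⟨fun k => measurable_const, fun k y => zero_le_one, fun k hk y => ?_⟩
  have h1 := P.bone (k+1) (by omega)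
  have h2 := P.bpos (k+1)
  have h3 := P.Kmpos
  rw [le_div_iff₀ (by positivity)]
  have : P.b (k+1) ^ d ≤ 1 := pow_le_one₀ h2.le h1
  linarith

lemma adm_kx (x : EV d) : P.Adm (P.kx x) := by
  refine ⟨fun k => ?_, fun k y => P.kb_nonneg (P.bpos _) _, fun k hk y => ?_⟩
  · have := (P.kb_cont (P.b (k+1))).measurable
    unfold kx; fun_prop
  · refine (P.kb_le (P.bpos _) _).trans ?_
    have h2 := P.bpos (k+1)
    gcongr; linarith

lemma Adm.leB {κ : ℕ → EV d → ℝ} (h : P.Adm κ) {k : ℕ} (hk : P.n0 ≤ k) {v : ℝ} (hv : 0 ≤ v) (y : EV d) :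
    P.tw k v * κ k y ≤ P.B (k+1) := by
  unfold B
  have h1 := P.trpos k; have := P.hη; have h3 := P.trpos (k+1)
  have h2 := P.tr_mono (Nat.le_succ k)
  have h4 := h.nn k y
  calc _ ≤ P.tr k ^ P.η * κ k y := by gcongr; exact P.tw_le k hv
    _ ≤ P.tr (k+1) ^ P.η * κ k y := by gcongr
    _ ≤ _ := by gcongr; exact h.le k hk y

lemma int_meas {Ω : Type*} [MeasurableSpace Ω] (k : ℕ) (q : Ω → EV d → ℝ)
    (hq : Measurable (Function.uncurry q)) {κ : EV d → ℝ} (hκ : Measurable κ) :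
    Measurable (fun ω => ∫ y, P.psi k (q ω) y * κ y) := by
  have h1 : Measurable (fun p : Ω × EV d => P.psi k (q p.1) p.2 * κ p.2) := by
    unfold psi
    have h' : Measurable (fun p : Ω × EV d => q p.1 p.2) := hq
    have h2 := P.tw_meas k
    have h3 := P.fcont.measurable
    fun_prop
  exact (h1.stronglyMeasurable.integral_prod_right' (ν := volume)).measurable

lemma step_meas {Ω : Type*} [MeasurableSpace Ω] (k : ℕ) (q : Ω → EV d → ℝ)
    (hq : Measurable (Function.uncurry q)) {κ : EV d → ℝ} (hκ : Measurable κ)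
    (Z : Ω → ℝ≥0∞) (hZ : Measurable Z) (s ε θ : ℝ) :
    Measurable (fun p : Ω × EV d => Z p.1 * ENNReal.ofReal (Real.exp (θ * (s * (P.tw k (P.f p.2 / q p.1 p.2) * κ p.2)
      - (s + ε) * ∫ y, P.psi k (q p.1) y * κ y)))) := by
  have h' : Measurable (fun p : Ω × EV d => q p.1 p.2) := hq
  have h2 := P.tw_meas k
  have h3 := P.fcont.measurable
  have h4 : Measurable (fun p : Ω × EV d => ∫ y, P.psi k (q p.1) y * κ y) :=
    (P.int_meas k q hq hκ).comp measurable_fst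
  fun_prop

lemma step {Ω : Type*} {m : MeasurableSpace Ω} [m0 : MeasurableSpace Ω] (hm : m ≤ m0)
    (μ : Measure Ω) [IsProbabilityMeasure μ] (Y : Ω → EV d) (hY : Measurable Y) (q : Ω → EV d → ℝ)
    (hq : @Measurable _ _ (@Prod.instMeasurableSpace Ω (EV d) m _) _ (Function.uncurry q))
    (hpos : ∀ᵐ ω ∂μ, ∀ y, 0 ≤ q ω y) (hInt0 : ∀ᵐ ω ∂μ, ∫ y, q ω y = 1)
    (hpol : ∀ (φ : EV d → ℝ), Continuous φ → (∃ C, ∀ x, |φ x| ≤ C) →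
      (μ[fun ω => φ (Y ω) | m]) =ᵐ[μ] (fun ω => ∫ y, φ y * q ω y))
    (k : ℕ) {κ : EV d → ℝ} (hκ : Measurable κ) (hκ0 : ∀ y, 0 ≤ κ y) {B C : ℝ} (hC : ∀ y, κ y ≤ C)
    (hB : ∀ v y, 0 ≤ v → P.tw k v * κ y ≤ B)
    (Z : Ω → ℝ≥0∞) (hZ : Measurable[m] Z) {s ε θ : ℝ} (hs : s = 1 ∨ s = -1) (hε : ε ≤ 1)
    (hθ : 0 ≤ θ) (hθB : θ * B ≤ ε) :
    ∫⁻ ω, Z ω * ENNReal.ofReal (Real.exp (θ * (s * (P.tw k (P.f (Y ω) / q ω (Y ω)) * κ (Y ω))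
      - (s + ε) * ∫ y, P.psi k (q ω) y * κ y))) ∂μ ≤ ∫⁻ ω, Z ω ∂μ := by
  have hmeas := @step_meas d P Ω m k q hq κ hκ Z hZ s ε θ
  have hd := disint hm μ Y hY q hq hpos hInt0 hpol _ hmeas
  simp only at hd
  rw [hd]
  refine lintegral_mono_ae ?_
  filter_upwards [hpos, hInt0] with ω h0 h1
  have hqi : Integrable (q ω) := by
    by_contra hc
    rw [integral_undef hc] at h1; norm_num at h1
  have hqm : Measurable (q ω) := @Measurable.of_uncurry_left Ω (EV d) ℝ m _ _ q hq ω
  have hpi : Integrable (fun y => P.psi k (q ω) y * κ y) :=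
    P.psi_mul_integrable k hqm h0 hqi hκ (C := C) (fun y => by rw [abs_of_nonneg (hκ0 y)]; exact hC y)
  set J := ∫ y, P.psi k (q ω) y * κ y with hJ
  have hJ0 : 0 ≤ J := integral_nonneg fun y => mul_nonneg (P.psi_nonneg k (h0 y)) (hκ0 y)
  have hpt : ∀ y, Z ω * ENNReal.ofReal (Real.exp (θ * (s * (P.tw k (P.f y / q ω y) * κ y) - (s + ε) * J)))
      * ENNReal.ofReal (q ω y) ≤ Z ω * ENNReal.ofReal (Real.exp (-(θ * (s + ε) * J))
        * (q ω y + (s + ε) * θ * (P.psi k (q ω) y * κ y))) := by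
    intro y
    rw [mul_assoc, ← ENNReal.ofReal_mul (Real.exp_pos _).le]
    refine mul_le_mul_right (ENNReal.ofReal_le_ofReal ?_) _
    set ξ := P.tw k (P.f y / q ω y) * κ y with hξ
    have hv : 0 ≤ P.f y / q ω y := div_nonneg (P.f0 y) (h0 y)
    have hξ0 : 0 ≤ ξ := mul_nonneg (P.tw_nonneg k hv) (hκ0 y)
    have hξB : ξ ≤ B := hB _ y hv
    have e1 := exp_le_lin (z := θ * ξ) hs hε (by positivity) ((mul_le_mul_of_nonneg_left hξB hθ).trans hθB)
    have e2 : Real.exp (θ * (s * ξ - (s + ε) * J)) = Real.exp (-(θ * (s + ε) * J)) * Real.exp (s * (θ * ξ)) := by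
      rw [← Real.exp_add]; congr 1; ring
    have e3 : P.psi k (q ω) y * κ y = ξ * q ω y := by unfold psi; rw [hξ]; ring
    rw [e2, e3, mul_assoc]
    have := h0 y
    gcongr
    calc _ ≤ (1 + (s + ε) * (θ * ξ)) * q ω y := by gcongr
      _ = _ := by ring
  refine (lintegral_mono hpt).trans ?_
  rw [lintegral_const_mul]
  swap
  · have := P.psi_meas k hqm
    fun_prop
  calc _ ≤ Z ω * 1 := ?_
    _ = Z ω := mul_one _
  gcongr
  have hin : Integrable (fun y => Real.exp (-(θ * (s + ε) * J)) * (q ω y + (s + ε) * θ * (P.psi k (q ω) y * κ y))) :=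
    (hqi.add (hpi.const_mul _)).const_mul _
  rw [← ofReal_integral_eq_lintegral_ofReal hin]
  · rw [← ENNReal.ofReal_one]
    apply ENNReal.ofReal_le_ofReal
    rw [integral_const_mul, integral_add hqi (hpi.const_mul _), integral_const_mul, h1, ← hJ]
    have e := Real.add_one_le_exp ((s + ε) * θ * J)
    calc _ ≤ Real.exp (-(θ * (s + ε) * J)) * Real.exp ((s + ε) * θ * J) := by gcongr; linarith
      _ = 1 := by rw [← Real.exp_add, ← Real.exp_zero]; congr 1; ring
  · refine Eventually.of_forall fun y => ?_
    show 0 ≤ Real.exp (-(θ * (s + ε) * J)) * (q ω y + (s + ε) * θ * (P.psi k (q ω) y * κ y))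
    have hv : 0 ≤ P.f y / q ω y := div_nonneg (P.f0 y) (h0 y)
    have hξ0 : 0 ≤ P.tw k (P.f y / q ω y) * κ y := mul_nonneg (P.tw_nonneg k hv) (hκ0 y)
    have hξB := hB _ y hv
    have e1 := exp_le_lin (z := θ * (P.tw k (P.f y / q ω y) * κ y)) hs hε (by positivity) ((mul_le_mul_of_nonneg_left hξB hθ).trans hθB)
    have e3 : q ω y + (s + ε) * θ * (P.psi k (q ω) y * κ y) = (1 + (s+ε) * (θ * (P.tw k (P.f y / q ω y) * κ y))) * q ω y := by
      unfold psi; ring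
    rw [e3]
    exact mul_nonneg (Real.exp_pos _).le (mul_nonneg ((Real.exp_pos _).le.trans e1) (h0 y))

end Par

namespace Mdl
variable {Ω : Type*} [m0 : MeasurableSpace Ω] {μ : Measure Ω} {d : ℕ} {P : Par d} (M : Mdl μ P)

/-- path versions -/
noncomputable def S (κ : ℕ → EV d → ℝ) (n : ℕ) (ω : Ω) : ℝ := P.Sg κ (fun k => M.w k ω) (fun k => M.X k ω) n
noncomputable def T (κ : ℕ → EV d → ℝ) (n : ℕ) (ω : Ω) : ℝ := P.Tg κ (fun k => M.q k ω) n

lemma S_succ (κ : ℕ → EV d → ℝ) {n : ℕ} (hn : P.n0 ≤ n) (ω : Ω) : M.S κ (n+1) ω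
    = (1 - P.γ (n+1)) * M.S κ n ω + P.γ (n+1) * (P.tw n (M.w (n+1) ω) * κ n (M.X (n+1) ω)) :=
  avg_succ _ _ _ hn
lemma T_succ (κ : ℕ → EV d → ℝ) {n : ℕ} (hn : P.n0 ≤ n) (ω : Ω) : M.T κ (n+1) ω
    = (1 - P.γ (n+1)) * M.T κ n ω + P.γ (n+1) * (∫ y, P.psi n (M.q n ω) y * κ n y) :=
  avg_succ _ _ _ hn

lemma w_meas {k n : ℕ} (hk : 1 ≤ k) (h : k + 1 ≤ n) : Measurable[natFilt M.X n] (M.w (k+1)) := by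
  have hx := M.X_meas (i := k+1) (n := n) (by omega) h
  have hq := M.q_joint hk
  have hq' : @Measurable _ _ (@Prod.instMeasurableSpace Ω (EV d) (natFilt M.X n) _) _ (Function.uncurry (M.q k)) :=
    hq.mono (sup_le_sup (MeasurableSpace.comap_mono (M.filt_mono (by omega))) le_rfl) le_rfl
  rw [show M.w (k+1) = _ from funext (M.hw k)]
  refine Measurable.div (P.fcont.measurable.comp hx) ?_
  exact hq'.comp (f := fun ω => (ω, M.X (k+1) ω)) (Measurable.prodMk (@measurable_id _ (natFilt M.X n)) hx)

lemma S_meas {κ : ℕ → EV d → ℝ} (hκ : P.Adm κ) (n : ℕ) : Measurable[natFilt M.X n] (M.S κ n) := by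
  have h0 : ∀ n, n ≤ P.n0 → Measurable[natFilt M.X n] (M.S κ n) := by
    intro n hn
    have : M.S κ n = fun _ => 0 := funext fun ω => avg_of_le _ _ _ hn
    rw [this]; exact @measurable_const _ _ _ (natFilt M.X n) _
  induction n with
  | zero => exact h0 0 (by omega)
  | succ n ih =>
    by_cases hn : P.n0 ≤ n
    · rw [show M.S κ (n+1) = _ from funext fun ω => M.S_succ κ hn ω]
      have h1 : Measurable[natFilt M.X (n+1)] (M.S κ n) := ih.mono (M.filt_mono (by omega)) le_rfl
      have hw := M.w_meas (k := n) (n := n+1) (by have := P.hn0; omega) le_rfl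
      have hx := M.X_meas (i := n+1) (n := n+1) (by omega) le_rfl
      have h2 : Measurable[natFilt M.X (n+1)] (fun ω => P.tw n (M.w (n+1) ω)) := (P.tw_meas n).comp hw
      have h3 : Measurable[natFilt M.X (n+1)] (fun ω => κ n (M.X (n+1) ω)) := (hκ.meas n).comp hx
      exact Measurable.add (h1.const_mul _) ((Measurable.mul h2 h3).const_mul _)
    · exact h0 _ (by omega)

lemma T_meas {κ : ℕ → EV d → ℝ} (hκ : P.Adm κ) (n : ℕ) : Measurable[natFilt M.X n] (M.T κ n) := by
  have h0 : ∀ n, n ≤ P.n0 → Measurable[natFilt M.X n] (M.T κ n) := by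
    intro n hn
    have : M.T κ n = fun _ => 0 := funext fun ω => avg_of_le _ _ _ hn
    rw [this]; exact @measurable_const _ _ _ (natFilt M.X n) _
  induction n with
  | zero => exact h0 0 (by omega)
  | succ n ih =>
    by_cases hn : P.n0 ≤ n
    · rw [show M.T κ (n+1) = _ from funext fun ω => M.T_succ κ hn ω]
      have h1 : Measurable[natFilt M.X (n+1)] (M.T κ n) := ih.mono (M.filt_mono (by omega)) le_rfl
      have h2 : Measurable[natFilt M.X n] (fun ω => ∫ y, P.psi n (M.q n ω) y * κ n y) :=
        @Par.int_meas d P Ω (natFilt M.X n) n (M.q n) (M.q_joint (by have := P.hn0; omega)) _ (hκ.meas n)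
      have h3 : Measurable[natFilt M.X (n+1)] (fun ω => ∫ y, P.psi n (M.q n ω) y * κ n y) := h2.mono (M.filt_mono (by omega)) le_rfl
      exact Measurable.add (h1.const_mul _) (h3.const_mul _)
    · exact h0 _ (by omega)

lemma expo [IsProbabilityMeasure μ] {κ : ℕ → EV d → ℝ} (hκ : P.Adm κ) {s ε : ℝ} (hs : s = 1 ∨ s = -1) (hε : ε ≤ 1)
    (n : ℕ) (hn : P.n0 ≤ n) : ∀ θ, 0 ≤ θ → θ * P.γ n * P.B n ≤ ε →
    ∫⁻ ω, ENNReal.ofReal (Real.exp (θ * (s * M.S κ n ω - (s + ε) * M.T κ n ω))) ∂μ ≤ 1 := by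
  induction n, hn using Nat.le_induction with
  | base =>
    intro θ _ _
    have h1 : ∀ ω, M.S κ P.n0 ω = 0 := fun ω => avg_of_le _ _ _ le_rfl
    have h2 : ∀ ω, M.T κ P.n0 ω = 0 := fun ω => avg_of_le _ _ _ le_rfl
    simp [h1, h2]
  | succ n hn ih =>
    intro θ hθ hθB
    have hn1 : 1 ≤ n := le_trans P.hn0 hn
    have hγ := P.γpos (n+1)
    have hγ1 := P.γhalf (n+1) (by omega)
    have hB := P.Bpos n
    refine le_trans ?_ (ih (θ * (1 - P.γ (n+1))) (by apply mul_nonneg hθ; linarith) ?_)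
    · have hq0 := M.q_nonneg
      have hq1 := M.q_int1
      have hst := P.step (M.filt_le n) μ (M.X (n+1)) (M.hX _) (M.q n) (M.q_joint hn1)
        (hq0.mono fun ω h => h n hn1) (hq1.mono fun ω h => h n) (M.hpolicy n) n (hκ.meas n) (hκ.nn n) (hκ.le n hn)
        (B := P.B (n+1)) (fun v y hv => hκ.leB P hn hv y)
        (fun ω => ENNReal.ofReal (Real.exp (θ * (1 - P.γ (n+1)) * (s * M.S κ n ω - (s + ε) * M.T κ n ω)))) ?_ hs hε
        (θ := θ * P.γ (n+1)) (by positivity) hθB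
      · refine le_trans (le_of_eq ?_) hst
        refine lintegral_congr fun ω => ?_
        rw [← ENNReal.ofReal_mul (Real.exp_pos _).le, ← Real.exp_add, M.S_succ κ hn, M.T_succ κ hn, M.hw]
        congr 2; ring
      · have h1 := M.S_meas hκ n
        have h2 := M.T_meas hκ n
        have h3 : Measurable[natFilt M.X n] (fun ω => θ * (1 - P.γ (n+1)) * (s * M.S κ n ω - (s + ε) * M.T κ n ω)) :=
          Measurable.const_mul (Measurable.sub (h1.const_mul _) (h2.const_mul _)) _
        exact (Real.measurable_exp.comp h3).ennreal_ofReal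
    · refine le_trans ?_ hθB
      have h1 := P.γdec n hn
      have h2 := P.B_mono (Nat.le_succ n)
      calc θ * (1 - P.γ (n+1)) * P.γ n * P.B n = θ * (P.γ n * (1 - P.γ (n+1))) * P.B n := by ring
        _ ≤ θ * P.γ (n+1) * P.B (n+1) := by gcongr

lemma tail [IsProbabilityMeasure μ] {κ : ℕ → EV d → ℝ} (hκ : P.Adm κ) {s ε : ℝ} (hs : s = 1 ∨ s = -1) (hε0 : 0 < ε) (hε : ε ≤ 1)
    (n : ℕ) (hn : P.n0 ≤ n) (τ : ℝ) :
    μ {ω | τ < s * M.S κ n ω - (s + ε) * M.T κ n ω} ≤ ENNReal.ofReal (Real.exp (-(ε / (P.γ n * P.B n) * τ))) := by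
  have hγ := P.γpos n
  have hB := P.Bpos n
  set θ := ε / (P.γ n * P.B n) with hθ
  have hθ0 : 0 < θ := by positivity
  have h1 := M.expo hκ hs hε n hn θ hθ0.le (by rw [hθ]; field_simp; exact le_rfl)
  have hsub : {ω | τ < s * M.S κ n ω - (s + ε) * M.T κ n ω} ⊆
      {ω | ENNReal.ofReal (Real.exp (θ * τ)) ≤ ENNReal.ofReal (Real.exp (θ * (s * M.S κ n ω - (s + ε) * M.T κ n ω)))} := by
    intro ω hω
    have hω' : τ < s * M.S κ n ω - (s + ε) * M.T κ n ω := hω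
    show ENNReal.ofReal _ ≤ ENNReal.ofReal _
    gcongr
  have h2 := mul_meas_ge_le_lintegral₀ (μ := μ) (f := fun ω => ENNReal.ofReal (Real.exp (θ * (s * M.S κ n ω - (s + ε) * M.T κ n ω)))) (by
    have h1 := (M.S_meas hκ n).mono (M.filt_le n) le_rfl
    have h2 := (M.T_meas hκ n).mono (M.filt_le n) le_rfl
    fun_prop) (ENNReal.ofReal (Real.exp (θ * τ)))
  have h3 := h2.trans h1
  refine (measure_mono hsub).trans ?_
  rw [Real.exp_neg, ENNReal.ofReal_inv_of_pos (Real.exp_pos _)]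
  rw [← one_div, ENNReal.le_div_iff_mul_le (by simp [Real.exp_pos]) (by simp), mul_comm]
  exact h3

end Mdl


/-- A good trajectory of the algorithm. -/
structure Pth {d : ℕ} (P : Par d) where
  X : ℕ → EuclideanSpace ℝ (Fin d)
  w : ℕ → ℝ
  g : ℕ → EuclideanSpace ℝ (Fin d) → ℝ
  q : ℕ → EuclideanSpace ℝ (Fin d) → ℝ
  hw : ∀ n, w (n+1) = P.f (X (n+1)) / q n (X (n+1))
  hg : ∀ n x, g (n+1) x
      = (1 - P.γ (n+1)) * g n x + P.γ (n+1) * w (n+1) ^ P.η * kb P.K (P.b (n+1)) (x - X (n+1))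
  hq : ∀ n, 1 ≤ n → ∀ x, q n x = (1 - P.lam n) * (g n x / (∫ y, g n y)) + P.lam n * P.q0 x
  g_cont : ∀ n, Continuous (g n)
  g_int : ∀ n, Integrable (g n)
  g_bdd : ∀ n, ∃ C, ∀ x, |g n x| ≤ C
  q_cont : ∀ n, 1 ≤ n → Continuous (q n)
  q_nn : ∀ n, 1 ≤ n → ∀ x, 0 ≤ q n x
  q_int1 : ∀ n, ∫ x, q n x = 1

namespace Par
variable {d : ℕ} (P : Par d)

lemma ev_lamb : ∀ᶠ n : ℕ in atTop, 1 / (P.lam n * P.b n ^ d) ≤ P.Cγ * n := by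
  have h := P.rate'.eventually (gt_mem_nhds (show (0:ℝ) < 1 by norm_num))
  filter_upwards [h, eventually_ge_atTop 1] with n h1 h2
  have hl := P.lampos n; have hb := P.bpos n; have hγ := P.γpos n
  have h3 := P.γlow n h2
  have hn : (0:ℝ) < n := by exact_mod_cast h2
  rw [div_lt_one (by positivity)] at h1
  rw [div_le_iff₀ (by positivity)]
  rw [inv_eq_one_div, div_le_iff₀ hn] at h3
  have := P.hCγ
  calc (1:ℝ) ≤ P.Cγ * P.γ n * n := h3
    _ ≤ P.Cγ * (P.lam n * P.b n ^ d) * n := by gcongr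
    _ = _ := by ring

lemma ev_lam : ∀ᶠ n : ℕ in atTop, 1 / P.lam n ≤ P.Cγ * n := by
  filter_upwards [P.ev_lamb, eventually_ge_atTop P.n0] with n h hn
  refine le_trans ?_ h
  have hl := P.lampos n; have hb := P.bpos n
  have : P.b n ^ d ≤ 1 := pow_le_one₀ hb.le (P.bone n hn)
  have h2 : P.lam n * P.b n ^ d ≤ P.lam n := by nlinarith
  exact one_div_le_one_div_of_le (by positivity) h2

lemma ev_b : ∀ᶠ n : ℕ in atTop, 1 / P.b n ^ (d+1) ≤ (P.Cγ * n)^2 := by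
  filter_upwards [P.ev_lamb, eventually_ge_atTop P.n0] with n h hn
  have hl := P.lampos n; have hb := P.bpos n
  have hb1 := P.bone n hn
  have hl1 := P.lamhalf n hn
  have h1 : 1 / P.b n ^ d ≤ P.Cγ * n := by
    refine le_trans ?_ h
    apply one_div_le_one_div_of_le (by positivity)
    have : 0 < P.b n ^ d := by positivity
    nlinarith
  have h2 : 1 / P.b n ≤ 1 / P.b n ^ d := by
    apply one_div_le_one_div_of_le (by positivity)
    calc P.b n ^ d ≤ P.b n ^ 1 := pow_le_pow_of_le_one hb.le hb1 P.hd
      _ = _ := pow_one _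
  have h3 := h2.trans h1
  calc 1 / P.b n ^ (d+1) = (1 / P.b n ^ d) * (1 / P.b n) := by rw [pow_succ]; field_simp
    _ ≤ (P.Cγ * n) * (P.Cγ * n) := by
      have := P.hCγ
      gcongr
    _ = _ := by ring

lemma ev_tr : ∃ C > 0, ∀ᶠ n : ℕ in atTop, P.tr n ^ P.η ≤ C * n := by
  have := P.hc; have := P.hCγ
  refine ⟨1 + 2 / P.c * P.Cγ, by positivity, ?_⟩
  filter_upwards [P.ev_lam, eventually_ge_atTop 1] with n h hn
  have hn' : (1:ℝ) ≤ n := by exact_mod_cast hn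
  have ht := P.trpos n
  have h1 : P.tr n ^ P.η ≤ 1 + P.tr n := by
    calc _ ≤ (1 + P.tr n) ^ P.η := by gcongr; exact P.hη.le; linarith
      _ ≤ (1 + P.tr n) ^ (1:ℝ) := by apply Real.rpow_le_rpow_of_exponent_le; linarith; exact P.hη1.le
      _ = _ := Real.rpow_one _
  have h2 : P.tr n ≤ 2 / P.c * (P.Cγ * n) := by
    have : P.tr n = 2 / P.c * (1 / P.lam n) := by unfold tr; ring
    rw [this]; gcongr
  nlinarith

lemma ev_B : ∃ C > 0, ∀ᶠ n : ℕ in atTop, P.B n ≤ C * n := by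
  have := P.hc; have := P.hCγ; have := P.Kmpos
  refine ⟨(2 / P.c) ^ P.η * (P.Km + 1) * P.Cγ, by positivity, ?_⟩
  filter_upwards [P.ev_lamb, eventually_ge_atTop P.n0] with n h hn
  have hl := P.lampos n; have hb := P.bpos n
  have hl1 := P.lamhalf n hn
  have h1 : P.tr n ^ P.η = (2 / P.c) ^ P.η * (1 / P.lam n ^ P.η) := by
    unfold tr
    rw [Real.div_rpow (by positivity) hl.le]; ring
  have h2 : P.lam n ≤ P.lam n ^ P.η := by
    calc P.lam n = P.lam n ^ (1:ℝ) := (Real.rpow_one _).symm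
      _ ≤ _ := Real.rpow_le_rpow_of_exponent_ge hl (by linarith) P.hη1.le
  calc P.B n = (2 / P.c) ^ P.η * (P.Km + 1) * ((1 / P.lam n ^ P.η) * (1 / P.b n ^ d)) := by unfold B; rw [h1]; ring
    _ ≤ (2 / P.c) ^ P.η * (P.Km + 1) * ((1 / P.lam n) * (1 / P.b n ^ d)) := by gcongr
    _ = (2 / P.c) ^ P.η * (P.Km + 1) * (1 / (P.lam n * P.b n ^ d)) := by field_simp
    _ ≤ (2 / P.c) ^ P.η * (P.Km + 1) * (P.Cγ * n) := by gcongr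
    _ = _ := by ring

/-- Lipschitz constant of the averages -/
noncomputable def Lp (n : ℕ) : ℝ := P.tr n ^ P.η * (P.L / P.b n ^ (d+1))

lemma Lp_nn (n : ℕ) : 0 ≤ P.Lp n := by
  unfold Lp; have := P.trpos n; have := P.bpos n; have := P.hL; positivity

lemma ev_Lp {ε : ℝ} (hε : 0 < ε) : ∀ᶠ n : ℕ in atTop, 3 * P.Lp n * (d / (n:ℝ) ^ 5) ≤ ε * P.lam n ^ (1 - P.η) := by
  obtain ⟨C, hC, h1⟩ := P.ev_tr
  have hL := P.hL; have hCγ := P.hCγ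
  have h5 : Tendsto (fun n : ℕ => 3 * C * P.L * P.Cγ ^ 3 * d / (n:ℝ)) atTop (𝓝 0) :=
    tendsto_const_div_atTop_nhds_zero_nat _
  filter_upwards [h1, P.ev_b, P.ev_lam, eventually_ge_atTop P.n0, eventually_ge_atTop 1, h5.eventually (ge_mem_nhds hε)] with n h1 h2 h3 h4 h6 h5
  have hn : (0:ℝ) < n := by exact_mod_cast h6
  have hl := P.lampos n
  have hb := P.bpos n
  refine le_trans ?_ (mul_le_mul_of_nonneg_left (P.lam_lt_rpow h4) hε.le)
  have h7 : P.Lp n ≤ C * n * (P.L * (P.Cγ * n)^2) := by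
    unfold Lp
    rw [div_eq_mul_one_div]
    gcongr
  have h8 : 1 ≤ P.Cγ * n * P.lam n := by
    rwa [div_le_iff₀ hl] at h3
  have h9 : 3 * P.Lp n * (d / (n:ℝ)^5) ≤ 3 * (C * n * (P.L * (P.Cγ * n)^2)) * (d / (n:ℝ)^5) * (P.Cγ * n * P.lam n) := by
    have h10 : 0 ≤ 3 * (C * n * (P.L * (P.Cγ * n)^2)) * (d / (n:ℝ)^5) := by positivity
    calc _ ≤ 3 * (C * n * (P.L * (P.Cγ * n)^2)) * (d / (n:ℝ)^5) := by gcongr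
      _ ≤ _ := le_mul_of_one_le_right h10 h8
  refine h9.trans ?_
  calc _ = 3 * C * P.L * P.Cγ ^ 3 * d / (n:ℝ) * P.lam n := by field_simp
    _ ≤ _ := by gcongr

lemma ev_exp {ε : ℝ} (hε : 0 < ε) (p : ℕ) : ∀ᶠ n : ℕ in atTop,
    Real.exp (-(ε / (P.γ n * P.B n) * (ε / 2 * P.lam n ^ (1 - P.η)))) ≤ ((n:ℝ) ^ p)⁻¹ := by
  have := P.hc; have := P.Kmpos
  set C := ε ^ 2 / (2 * (2 / P.c) ^ P.η * (P.Km + 1)) with hC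
  have hC0 : 0 < C := by positivity
  have h := P.rate.eventually (gt_mem_nhds (show (0:ℝ) < C / (p + 1) by positivity))
  filter_upwards [h, eventually_ge_atTop 1] with n h hn
  have hn' : (0:ℝ) < n := by exact_mod_cast hn
  have hl := P.lampos n; have hb := P.bpos n; have hγ := P.γpos n
  have e : ε / (P.γ n * P.B n) * (ε / 2 * P.lam n ^ (1 - P.η)) = C * (P.lam n * P.b n ^ d / P.γ n) := by
    have h1 : P.tr n ^ P.η = (2 / P.c) ^ P.η / P.lam n ^ P.η := by
      unfold tr
      rw [Real.div_rpow (by positivity) hl.le]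
    have h2 : P.lam n ^ (1 - P.η) = P.lam n / P.lam n ^ P.η := by
      rw [Real.rpow_sub hl, Real.rpow_one]
    unfold B
    rw [h1, h2, hC]
    have : 0 < P.lam n ^ P.η := by positivity
    field_simp
  rw [e]
  have hlog : p * Real.log n ≤ C * (P.lam n * P.b n ^ d / P.γ n) := by
    have hlog0 : 0 ≤ Real.log n := Real.log_nonneg (by exact_mod_cast hn)
    rw [div_lt_div_iff₀ (by positivity) (by positivity)] at h
    rw [← mul_div_assoc, le_div_iff₀ hγ]
    nlinarith [mul_nonneg hγ.le hlog0]
  calc _ ≤ Real.exp (-(p * Real.log n)) := by gcongr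
    _ = ((n:ℝ)^p)⁻¹ := by
      rw [Real.exp_neg, ← Real.log_pow, Real.exp_log (by positivity)]

end Par

lemma grid (d : ℕ) (n p : ℕ) (hn : 2 ≤ n) : ∃ G : Finset (EV d), G.card ≤ n ^ ((p + 7) * d) ∧
    ∀ x : EV d, ‖x‖ ≤ (n:ℝ) ^ p → ∃ y ∈ G, ‖x - y‖ ≤ d / (n:ℝ)^5 := by
  classical
  set A : ℤ := (n:ℤ) ^ (p + 5) + 1
  let G0 : Finset (Fin d → ℤ) := Fintype.piFinset (fun _ => Finset.Icc (-A) A)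
  let e : (Fin d → ℤ) → EV d := fun z => WithLp.toLp 2 (fun i => (z i : ℝ) / (n:ℝ)^5)
  have hn' : (2:ℝ) ≤ n := by exact_mod_cast hn
  refine ⟨G0.image e, ?_, ?_⟩
  · refine Finset.card_image_le.trans ?_
    simp only [G0, Fintype.card_piFinset, Finset.prod_const, Finset.card_univ, Fintype.card_fin, Int.card_Icc]
    rw [pow_mul]
    refine Nat.pow_le_pow_left ?_ d
    zify
    have h1 : (1:ℤ) ≤ (n:ℤ)^(p+5) := by exact_mod_cast Nat.one_le_pow _ _ (by omega)
    have h2 : (n:ℤ)^(p+7) = (n:ℤ)^(p+5) * (n:ℤ)^2 := by rw [← pow_add]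
    have h2' : (32:ℤ) ≤ (n:ℤ)^(p+5) := by
      calc (32:ℤ) = 2^5 := by norm_num
        _ ≤ (n:ℤ)^5 := by gcongr; exact_mod_cast hn
        _ ≤ _ := by apply pow_le_pow_right₀; exact_mod_cast (by omega : 1 ≤ n); omega
    have h3 : (4:ℤ) ≤ (n:ℤ)^2 := by
      have : (2:ℤ) ≤ n := by exact_mod_cast hn
      nlinarith
    rw [h2]
    rw [Int.toNat_of_nonneg (by simp only [A]; linarith)]
    simp only [A]
    nlinarith
  · intro x hx
    have hN : (0:ℝ) < (n:ℝ)^5 := by positivity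
    refine ⟨e (fun i => ⌊(n:ℝ)^5 * x i⌋), Finset.mem_image_of_mem _ ?_, ?_⟩
    · simp only [G0, Fintype.mem_piFinset, Finset.mem_Icc]
      intro i
      have h1 : |x i| ≤ (n:ℝ)^p := (by simpa using PiLp.norm_apply_le x i : |x i| ≤ ‖x‖).trans hx
      have h2 : |(n:ℝ)^5 * x i| ≤ (n:ℝ)^(p+5) := by
        rw [abs_mul, abs_of_pos hN, pow_add, mul_comm]; gcongr
      obtain ⟨h3, h4⟩ := abs_le.1 h2
      constructor
      · rw [Int.le_floor]; simp only [A]; push_cast; linarith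
      · have := Int.floor_le ((n:ℝ)^5 * x i)
        have h5 : ((⌊(n:ℝ)^5 * x i⌋ : ℤ) : ℝ) ≤ ((A : ℤ) : ℝ) := by simp only [A]; push_cast; linarith
        exact_mod_cast h5
    · have hle : ∀ v : EV d, ‖v‖ ≤ ∑ i, ‖v i‖ := by
        intro v
        rw [EuclideanSpace.norm_eq]
        apply Real.sqrt_le_iff.2 ⟨by positivity, ?_⟩
        exact Finset.sum_sq_le_sq_sum_of_nonneg fun i _ => norm_nonneg _
      refine (hle _).trans ?_
      have : ∀ i : Fin d, ‖(x - e (fun i => ⌊(n:ℝ)^5 * x i⌋)) i‖ ≤ 1 / (n:ℝ)^5 := by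
        intro i
        have h1 := Int.floor_le ((n:ℝ)^5 * x i)
        have h2 := Int.lt_floor_add_one ((n:ℝ)^5 * x i)
        have h3 : (x - e (fun i => ⌊(n:ℝ)^5 * x i⌋)) i = ((n:ℝ)^5 * x i - ⌊(n:ℝ)^5 * x i⌋) / (n:ℝ)^5 := by
          simp only [PiLp.sub_apply, e]; field_simp
        rw [h3, Real.norm_eq_abs, abs_div, abs_of_pos hN]
        gcongr
        rw [abs_le]; constructor <;> linarith
      calc _ ≤ ∑ i : Fin d, 1 / (n:ℝ)^5 := Finset.sum_le_sum fun i _ => this i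
        _ = _ := by simp; ring


namespace Pth
variable {d : ℕ} {P : Par d} (p : Pth P)

lemma q_meas {n : ℕ} (hn : 1 ≤ n) : Measurable (p.q n) := (p.q_cont n hn).measurable

lemma q_int (n : ℕ) : Integrable (p.q n) := by
  by_contra hc
  have h1 := p.q_int1 n
  rw [integral_undef hc] at h1; norm_num at h1

lemma w_nn {n : ℕ} (hn : 1 ≤ n) : 0 ≤ p.w (n+1) := by
  rw [p.hw]; exact div_nonneg (P.f0 _) (p.q_nn n hn _)

noncomputable def S (κ : ℕ → EV d → ℝ) (n : ℕ) : ℝ := P.Sg κ p.w p.X n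
noncomputable def T (κ : ℕ → EV d → ℝ) (n : ℕ) : ℝ := P.Tg κ p.q n

lemma S_succ (κ : ℕ → EV d → ℝ) {n : ℕ} (hn : P.n0 ≤ n) : p.S κ (n+1)
    = (1 - P.γ (n+1)) * p.S κ n + P.γ (n+1) * (P.tw n (p.w (n+1)) * κ n (p.X (n+1))) :=
  avg_succ _ _ _ hn
lemma T_succ (κ : ℕ → EV d → ℝ) {n : ℕ} (hn : P.n0 ≤ n) : p.T κ (n+1)
    = (1 - P.γ (n+1)) * p.T κ n + P.γ (n+1) * (∫ y, P.psi n (p.q n) y * κ n y) :=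
  avg_succ _ _ _ hn

lemma psi_nn {k : ℕ} (hk : P.n0 ≤ k) (y : EV d) : 0 ≤ P.psi k (p.q k) y :=
  P.psi_nonneg k (p.q_nn k (P.hn0.trans hk) y)

lemma psiκ_int {κ : ℕ → EV d → ℝ} (hκ : P.Adm κ) {k : ℕ} (hk : P.n0 ≤ k) :
    Integrable (fun y => P.psi k (p.q k) y * κ k y) :=
  P.psi_mul_integrable k (p.q_meas (P.hn0.trans hk)) (p.q_nn k (P.hn0.trans hk)) (p.q_int k) (hκ.meas k)
    (C := (P.Km + 1) / P.b (k+1) ^ d) (fun y => by rw [abs_of_nonneg (hκ.nn k y)]; exact hκ.le k hk y)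

lemma T_nn {κ : ℕ → EV d → ℝ} (hκ : P.Adm κ) (n : ℕ) : 0 ≤ p.T κ n :=
  avg_nonneg P.γnn P.γlt1 n fun k hk _ => integral_nonneg fun y => mul_nonneg (p.psi_nn hk y) (hκ.nn k y)

lemma S_nn {κ : ℕ → EV d → ℝ} (hκ : P.Adm κ) (n : ℕ) : 0 ≤ p.S κ n :=
  avg_nonneg P.γnn P.γlt1 n fun k hk _ => mul_nonneg (P.tw_nonneg k (p.w_nn (P.hn0.trans hk))) (hκ.nn k _)

lemma S_le_B {κ : ℕ → EV d → ℝ} (hκ : P.Adm κ) (n : ℕ) : p.S κ n ≤ P.B n :=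
  avg_le_const P.γnn P.γlt1 (P.Bpos n).le n fun k hk hkn =>
    (hκ.leB P hk (p.w_nn (P.hn0.trans hk)) _).trans (P.B_mono (by omega))

lemma kx_lip (k n : ℕ) (hkn : k < n) (x x' y : EV d) :
    |P.kx x k y - P.kx x' k y| ≤ P.L / P.b n ^ (d+1) * ‖x - x'‖ := by
  have h := P.kb_lip (P.bpos (k+1)) (x - y) (x' - y)
  refine h.trans ?_
  rw [sub_sub_sub_cancel_right]
  have h1 : P.b n ≤ P.b (k+1) := P.banti (by omega)
  have := P.bpos n; have := P.hL
  gcongr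

lemma S_lip (n : ℕ) (x x' : EV d) : |p.S (P.kx x) n - p.S (P.kx x') n| ≤ P.Lp n * ‖x - x'‖ := by
  refine avg_dist P.γnn P.γlt1 (mul_nonneg (P.Lp_nn n) (norm_nonneg _)) n fun k hk hkn => ?_
  rw [← mul_sub, abs_mul, abs_of_nonneg (P.tw_nonneg k (p.w_nn (P.hn0.trans hk)))]
  unfold Par.Lp
  rw [mul_assoc]
  have h1 : P.tw k (p.w (k+1)) ≤ P.tr n ^ P.η := (P.tw_le k (p.w_nn (P.hn0.trans hk))).trans
    (Real.rpow_le_rpow (P.trpos k).le (P.tr_mono hkn.le) P.hη.le)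
  have := P.trpos n
  gcongr
  exact kx_lip k n hkn _ _ _

lemma T_lip (n : ℕ) (x x' : EV d) : |p.T (P.kx x) n - p.T (P.kx x') n| ≤ P.Lp n * ‖x - x'‖ := by
  refine avg_dist P.γnn P.γlt1 (mul_nonneg (P.Lp_nn n) (norm_nonneg _)) n fun k hk hkn => ?_
  rw [← integral_sub (p.psiκ_int (P.adm_kx x) hk) (p.psiκ_int (P.adm_kx x') hk)]
  have hb : ∀ y, ‖P.psi k (p.q k) y * P.kx x k y - P.psi k (p.q k) y * P.kx x' k y‖
      ≤ P.Lp n * ‖x - x'‖ * p.q k y := by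
    intro y
    have hq := p.q_nn k (P.hn0.trans hk) y
    rw [← mul_sub, norm_mul, Real.norm_of_nonneg (p.psi_nn hk y), Real.norm_eq_abs]
    have h1 : P.psi k (p.q k) y ≤ P.tr n ^ P.η * p.q k y := by
      refine (P.psi_le' k hq).trans ?_
      gcongr
      exact (P.trpos k).le
      exact P.hη.le
      exact P.tr_mono hkn.le
    have h2 : 0 ≤ P.tr n ^ P.η * p.q k y := by have := P.trpos n; positivity
    calc _ ≤ P.tr n ^ P.η * p.q k y * (P.L / P.b n ^ (d+1) * ‖x - x'‖) := by
          gcongr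
          exact kx_lip k n hkn _ _ _
      _ = _ := by unfold Par.Lp; ring
  have := norm_integral_le_of_norm_le ((p.q_int k).const_mul (P.Lp n * ‖x - x'‖)) (Eventually.of_forall hb)
  rwa [integral_const_mul, p.q_int1, mul_one, Real.norm_eq_abs] at this

/-- multiplicative concentration for the total mass -/
def ChI : Prop := ∀ ε : ℝ, 0 < ε → ∀ s : ℝ, (s = 1 ∨ s = -1) → ∀ᶠ n in atTop,
  s * p.S (fun _ _ => 1) n - (s + ε) * p.T (fun _ _ => 1) n ≤ ε * P.lam n ^ (1 - P.η)

/-- multiplicative concentration for the kernel averages -/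
def ChK : Prop := ∀ ε : ℝ, 0 < ε → ∀ s : ℝ, (s = 1 ∨ s = -1) → ∀ m : ℕ, ∀ᶠ n : ℕ in atTop, ∀ x : EV d,
  ‖x‖ ≤ (n:ℝ) ^ m → s * p.S (P.kx x) n - (s + ε) * p.T (P.kx x) n ≤ ε * P.lam n ^ (1 - P.η)

end Pth

lemma bc {Ω : Type*} [MeasurableSpace Ω] {μ : Measure Ω} (E : ℕ → Set Ω)
    (h : ∀ᶠ n : ℕ in atTop, μ (E n) ≤ ENNReal.ofReal (((n:ℝ) ^ 2)⁻¹)) : ∀ᵐ ω ∂μ, ∀ᶠ n in atTop, ω ∉ E n := by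
  obtain ⟨N, hN⟩ := eventually_atTop.1 h
  have hs : Summable (fun n : ℕ => ((n:ℝ)^2)⁻¹) := Real.summable_nat_pow_inv.2 (by norm_num)
  have h1 : ∑' n, μ (if N ≤ n then E n else ∅) ≠ ∞ := by
    refine ne_top_of_le_ne_top hs.tsum_ofReal_ne_top (ENNReal.tsum_le_tsum fun n => ?_)
    split_ifs with hn
    · exact hN n hn
    · simp
  filter_upwards [ae_eventually_notMem h1] with ω hω
  filter_upwards [hω, eventually_ge_atTop N] with n h2 h3
  simpa [h3] using h2

namespace Mdl
variable {Ω : Type*} [m0 : MeasurableSpace Ω] {μ : Measure Ω} {d : ℕ} {P : Par d} (M : Mdl μ P)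

/-- trajectory at a good sample point -/
noncomputable def path (ω : Ω) (h1 : ∀ n, 1 ≤ n → ∀ y, 0 ≤ M.q n ω y) (h2 : ∀ n, ∫ y, M.q n ω y = 1) : Pth P where
  X n := M.X n ω
  w n := M.w n ω
  g n := M.g n ω
  q n := M.q n ω
  hw n := M.hw n ω
  hg n x := M.hgrec n ω x
  hq n hn x := by
    obtain ⟨n, rfl⟩ : ∃ m, n = m + 1 := ⟨n - 1, by omega⟩
    exact M.hqrec n ω x
  g_cont n := M.g_cont n ω
  g_int n := M.g_int n ω
  g_bdd n := M.g_bdd n ω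
  q_cont n hn := M.q_cont hn ω
  q_nn := h1
  q_int1 := h2

lemma chI_aux [IsProbabilityMeasure μ] : ∀ᵐ ω ∂μ, ∀ j : ℕ, ∀ s : ℝ, (s = 1 ∨ s = -1) → ∀ᶠ n in atTop,
    s * M.S (fun _ _ => 1) n ω - (s + 1 / ((j:ℝ) + 1)) * M.T (fun _ _ => 1) n ω ≤ 1 / ((j:ℝ) + 1) * P.lam n ^ (1 - P.η) := by
  rw [ae_all_iff]; intro j
  have key : ∀ s : ℝ, (s = 1 ∨ s = -1) → ∀ᵐ ω ∂μ, ∀ᶠ n in atTop,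
    s * M.S (fun _ _ => 1) n ω - (s + 1 / ((j:ℝ) + 1)) * M.T (fun _ _ => 1) n ω ≤ 1 / ((j:ℝ) + 1) * P.lam n ^ (1 - P.η) := by
    intro s hs
    have hε : 0 < 1 / ((j:ℝ) + 1) := by positivity
    have hε1 : 1 / ((j:ℝ) + 1) ≤ 1 := by rw [div_le_one (by positivity)]; linarith [(Nat.cast_nonneg j : (0:ℝ) ≤ j)]
    set ε := 1 / ((j:ℝ) + 1)
    have := bc (μ := μ) (fun n => {ω | ε / 2 * P.lam n ^ (1 - P.η) < s * M.S (fun _ _ => 1) n ω - (s + ε) * M.T (fun _ _ => 1) n ω}) (by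
      filter_upwards [P.ev_exp hε 2, eventually_ge_atTop P.n0] with n h1 h2
      exact (M.tail P.adm_one hs hε hε1 n h2 _).trans (ENNReal.ofReal_le_ofReal h1))
    filter_upwards [this] with ω hω
    filter_upwards [hω] with n hn
    have hn' : ¬ (ε / 2 * P.lam n ^ (1 - P.η) < s * M.S (fun _ _ => 1) n ω - (s + ε) * M.T (fun _ _ => 1) n ω) := hn
    have hl : 0 < P.lam n ^ (1 - P.η) := Real.rpow_pos_of_pos (P.lampos n) _
    nlinarith
  filter_upwards [key 1 (Or.inl rfl), key (-1) (Or.inr rfl)] with ω h1 h2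
  rintro s (rfl | rfl)
  · exact h1
  · exact h2

lemma chK_aux [IsProbabilityMeasure μ] : ∀ᵐ ω ∂μ, ∀ j : ℕ, ∀ m : ℕ, ∀ s : ℝ, (s = 1 ∨ s = -1) → ∀ᶠ n : ℕ in atTop,
    ∀ x : EV d, ‖x‖ ≤ (n:ℝ)^m →
    s * M.S (P.kx x) n ω - (s + 1 / ((j:ℝ) + 1)) * M.T (P.kx x) n ω ≤ 1 / ((j:ℝ) + 1) * P.lam n ^ (1 - P.η) := by
  rw [ae_all_iff]; intro j
  rw [ae_all_iff]; intro m
  have key : ∀ s : ℝ, (s = 1 ∨ s = -1) → ∀ᵐ ω ∂μ, ∀ᶠ n : ℕ in atTop,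
    ∀ x : EV d, ‖x‖ ≤ (n:ℝ)^m →
    s * M.S (P.kx x) n ω - (s + 1 / ((j:ℝ) + 1)) * M.T (P.kx x) n ω ≤ 1 / ((j:ℝ) + 1) * P.lam n ^ (1 - P.η) := by
    intro s hs
    have hε : 0 < 1 / ((j:ℝ) + 1) := by positivity
    have hε1 : 1 / ((j:ℝ) + 1) ≤ 1 := by rw [div_le_one (by positivity)]; linarith [(Nat.cast_nonneg j : (0:ℝ) ≤ j)]
    set ε := 1 / ((j:ℝ) + 1)
    have hG : ∀ n : ℕ, ∃ G : Finset (EV d), 2 ≤ n → (G.card ≤ n ^ ((m + 7) * d) ∧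
        ∀ x : EV d, ‖x‖ ≤ (n:ℝ) ^ m → ∃ y ∈ G, ‖x - y‖ ≤ d / (n:ℝ)^5) := by
      intro n
      by_cases hn : 2 ≤ n
      · obtain ⟨G, hG⟩ := grid d n m hn
        exact ⟨G, fun _ => hG⟩
      · exact ⟨∅, fun h => absurd h hn⟩
    choose G hG using hG
    have := bc (μ := μ) (fun n => ⋃ x ∈ G n, {ω | ε / 2 * P.lam n ^ (1 - P.η) < s * M.S (P.kx x) n ω - (s + ε) * M.T (P.kx x) n ω}) (by
      filter_upwards [P.ev_exp hε ((m + 7) * d + 2), eventually_ge_atTop P.n0, eventually_ge_atTop 2] with n h1 h2 h3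
      refine (measure_biUnion_finset_le _ _).trans ?_
      refine (Finset.sum_le_sum fun x _ => (M.tail (P.adm_kx x) hs hε hε1 n h2 _).trans (ENNReal.ofReal_le_ofReal h1)).trans ?_
      rw [Finset.sum_const, nsmul_eq_mul, ← ENNReal.ofReal_natCast, ← ENNReal.ofReal_mul (by positivity)]
      apply ENNReal.ofReal_le_ofReal
      have h4 : ((G n).card : ℝ) ≤ (n:ℝ) ^ ((m+7)*d) := by exact_mod_cast (hG n h3).1
      have h5 : (0:ℝ) < n := by exact_mod_cast (by omega : 0 < n)
      calc _ ≤ (n:ℝ) ^ ((m+7)*d) * ((n:ℝ) ^ ((m + 7) * d + 2))⁻¹ := by gcongr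
        _ = _ := by rw [pow_add]; field_simp)
    filter_upwards [this, M.q_nonneg, M.q_int1] with ω hω hq0 hq1
    filter_upwards [hω, eventually_ge_atTop 2, P.ev_Lp (ε := ε / 2) (by positivity)] with n hn h2 hLp x hx
    obtain ⟨y, hy, hxy⟩ := (hG n h2).2 x hx
    have hn' : s * M.S (P.kx y) n ω - (s + ε) * M.T (P.kx y) n ω ≤ ε / 2 * P.lam n ^ (1 - P.η) := by
      by_contra hcon
      push Not at hcon
      exact hn (Set.mem_biUnion hy hcon)
    have hS := (M.path ω hq0 hq1).S_lip n x y
    have hT := (M.path ω hq0 hq1).T_lip n x y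
    change |M.S (P.kx x) n ω - M.S (P.kx y) n ω| ≤ _ at hS
    change |M.T (P.kx x) n ω - M.T (P.kx y) n ω| ≤ _ at hT
    have hD : P.Lp n * ‖x - y‖ ≤ P.Lp n * (d / (n:ℝ)^5) := mul_le_mul_of_nonneg_left hxy (P.Lp_nn n)
    have hS' := hS.trans hD
    have hT' := hT.trans hD
    set D := P.Lp n * (d / (n:ℝ)^5)
    have hs1 : |s| = 1 := by rcases hs with rfl | rfl <;> simp
    have hs2 : |s + ε| ≤ 2 := by
      refine (abs_add_le _ _).trans ?_
      rw [hs1, abs_of_pos hε]; linarith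
    have a1 : s * (M.S (P.kx x) n ω - M.S (P.kx y) n ω) ≤ D := by
      refine (le_abs_self _).trans ?_
      rw [abs_mul, hs1, one_mul]; exact hS'
    have a2 : -((s + ε) * (M.T (P.kx x) n ω - M.T (P.kx y) n ω)) ≤ 2 * D := by
      refine (neg_le_abs _).trans ?_
      rw [abs_mul]; gcongr
    have a3 : 3 * D ≤ ε / 2 * P.lam n ^ (1 - P.η) := by rw [← mul_assoc]; exact hLp
    linarith
  filter_upwards [key 1 (Or.inl rfl), key (-1) (Or.inr rfl)] with ω h1 h2
  rintro s (rfl | rfl)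
  · exact h1
  · exact h2

lemma good1 [IsProbabilityMeasure μ] : ∀ᵐ ω ∂μ, ∃ (h1 : ∀ n, 1 ≤ n → ∀ y, 0 ≤ M.q n ω y) (h2 : ∀ n, ∫ y, M.q n ω y = 1),
    (M.path ω h1 h2).ChI ∧ (M.path ω h1 h2).ChK := by
  filter_upwards [M.q_nonneg, M.q_int1, M.chI_aux, M.chK_aux] with ω h1 h2 h3 h4
  refine ⟨h1, h2, ?_, ?_⟩
  · intro ε hε s hs
    obtain ⟨j, hj⟩ := exists_nat_one_div_lt hε
    filter_upwards [h3 j s hs] with n hn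
    have hT := (M.path ω h1 h2).T_nn P.adm_one n
    change 0 ≤ M.T _ n ω at hT
    change s * M.S _ n ω - (s + ε) * M.T _ n ω ≤ _
    have hl : 0 < P.lam n ^ (1 - P.η) := Real.rpow_pos_of_pos (P.lampos n) _
    nlinarith [mul_le_mul_of_nonneg_right hj.le hT, mul_le_mul_of_nonneg_right hj.le hl.le]
  · intro ε hε s hs m
    obtain ⟨j, hj⟩ := exists_nat_one_div_lt hε
    filter_upwards [h4 j m s hs] with n hn x hx
    have hn := hn x hx
    have hT := (M.path ω h1 h2).T_nn (P.adm_kx x) n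
    change 0 ≤ M.T _ n ω at hT
    change s * M.S _ n ω - (s + ε) * M.T _ n ω ≤ _
    have hl : 0 < P.lam n ^ (1 - P.η) := Real.rpow_pos_of_pos (P.lampos n) _
    nlinarith [mul_le_mul_of_nonneg_right hj.le hT, mul_le_mul_of_nonneg_right hj.le hl.le]
end Mdl


/-- if the normalised average is nonpositive where `f` is positive then it is nonnegative -/
def Pth.F2 {d : ℕ} {P : Par d} (p : Pth P) : Prop := ∀ n, P.n0 ≤ n →
  (∀ x, 0 < P.f x → p.g n x / (∫ y, p.g n y) ≤ 0) → ∀ x, 0 ≤ p.g n x / (∫ y, p.g n y)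

namespace Mdl
variable {Ω : Type*} [m0 : MeasurableSpace Ω] {μ : Measure Ω} {d : ℕ} {P : Par d} (M : Mdl μ P)

/-- normalised average -/
noncomputable def pn (n : ℕ) (ω : Ω) (x : EV d) : ℝ := M.g n ω x / (∫ y, M.g n ω y)

lemma q_eq {n : ℕ} (hn : 1 ≤ n) (ω : Ω) (x : EV d) :
    M.q n ω x = (1 - P.lam n) * M.pn n ω x + P.lam n * P.q0 x := by
  obtain ⟨n, rfl⟩ : ∃ m, n = m + 1 := ⟨n - 1, by omega⟩
  exact M.hqrec n ω x

lemma pn_eq {n : ℕ} (hn : P.n0 ≤ n) (ω : Ω) (x : EV d) :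
    M.pn n ω x = (M.q n ω x - P.lam n * P.q0 x) / (1 - P.lam n) := by
  have := P.lamhalf n hn
  rw [M.q_eq (P.hn0.trans hn), eq_div_iff (by linarith)]; ring

lemma pn_meas {n : ℕ} (hn : P.n0 ≤ n) (x : EV d) : Measurable[natFilt M.X n] (fun ω => M.pn n ω x) := by
  simp_rw [M.pn_eq hn]
  exact ((M.hadapt n x).sub_const _).div_const _

lemma pn_cont (n : ℕ) (ω : Ω) : Continuous (M.pn n ω) := (M.g_cont n ω).div_const _

/-- event: nonpositive on the support of `f` -/
def evA (n : ℕ) : Set Ω := {ω | ∀ i : ℕ, 0 < P.f (TopologicalSpace.denseSeq (EV d) i) →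
  M.pn n ω (TopologicalSpace.denseSeq (EV d) i) ≤ 0}

/-- event: significantly negative somewhere -/
def evD (n m : ℕ) : Set Ω := {ω | ∃ i : ℕ, M.pn n ω (TopologicalSpace.denseSeq (EV d) i)
  < - (P.lam m / (1 - P.lam m)) * P.q0 (TopologicalSpace.denseSeq (EV d) i)}

lemma evA_meas {n : ℕ} (hn : P.n0 ≤ n) : MeasurableSet[natFilt M.X n] (M.evA n) := by
  have : M.evA n = ⋂ i : ℕ, {ω | 0 < P.f (TopologicalSpace.denseSeq (EV d) i) →
    M.pn n ω (TopologicalSpace.denseSeq (EV d) i) ≤ 0} := by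
    ext ω; simp [evA]
  rw [this]
  refine MeasurableSet.iInter fun i => ?_
  by_cases h : 0 < P.f (TopologicalSpace.denseSeq (EV d) i)
  · simp only [h, forall_const]
    exact @measurableSet_le _ _ _ _ _ (natFilt M.X n) _ _ _ _ _ (M.pn_meas hn _) (@measurable_const _ _ _ (natFilt M.X n) _)
  · simp [h]

lemma evD_meas {n : ℕ} (hn : P.n0 ≤ n) (m : ℕ) : MeasurableSet[natFilt M.X n] (M.evD n m) := by
  have : M.evD n m = ⋃ i : ℕ, {ω | M.pn n ω (TopologicalSpace.denseSeq (EV d) i)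
    < - (P.lam m / (1 - P.lam m)) * P.q0 (TopologicalSpace.denseSeq (EV d) i)} := by
    ext ω; simp [evD]
  rw [this]
  refine MeasurableSet.iUnion fun i => ?_
  exact @measurableSet_lt _ _ _ _ _ (natFilt M.X n) _ _ _ _ _ (M.pn_meas hn _) (@measurable_const _ _ _ (natFilt M.X n) _)

lemma evA_all {n : ℕ} {ω : Ω} (h : ω ∈ M.evA n) (x : EV d) (hx : 0 < P.f x) : M.pn n ω x ≤ 0 := by
  by_contra hc
  push Not at hc
  have ho : IsOpen {y | 0 < P.f y ∧ 0 < M.pn n ω y} :=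
    (isOpen_lt continuous_const P.fcont).inter (isOpen_lt continuous_const (M.pn_cont n ω))
  obtain ⟨i, hi⟩ := (TopologicalSpace.denseRange_denseSeq (EV d)).exists_mem_open ho ⟨x, hx, hc⟩
  exact absurd (h i hi.1) (not_le.2 hi.2)

lemma pn_stay {n : ℕ} (hn : P.n0 ≤ n) {ω : Ω} (h : P.f (M.X (n+1) ω) = 0) : M.pn (n+1) ω = M.pn n ω := by
  have hw : M.w (n+1) ω = 0 := by rw [M.hw, h, zero_div]
  have hγ : 1 - P.γ (n+1) ≠ 0 := by have := P.γhalf (n+1) (by omega); linarith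
  have hg : ∀ x, M.g (n+1) ω x = (1 - P.γ (n+1)) * M.g n ω x := fun x => by
    rw [M.hgrec, hw, Real.zero_rpow P.hη.ne']; ring
  funext x
  unfold pn
  simp_rw [hg]
  rw [integral_const_mul, mul_div_mul_left _ _ hγ]

lemma null [IsProbabilityMeasure μ] (m : ℕ) : ∀ n, P.n0 ≤ n → μ (M.evA n ∩ M.evD n (n + m)) = 0 := by
  induction m with
  | zero =>
    intro n hn
    rw [measure_eq_zero_iff_ae_notMem]
    filter_upwards [M.q_nonneg] with ω hω hmem
    obtain ⟨i, hi⟩ := hmem.2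
    have h1 := hω n (P.hn0.trans hn) (TopologicalSpace.denseSeq (EV d) i)
    have hl : 0 < 1 - P.lam n := by have := P.lamhalf n hn; linarith
    rw [M.q_eq (P.hn0.trans hn)] at h1
    simp only [add_zero] at hi
    have h2 := mul_lt_mul_of_pos_left hi hl
    have h3 : (1 - P.lam n) * (-(P.lam n / (1 - P.lam n)) * P.q0 (TopologicalSpace.denseSeq (EV d) i))
      = - (P.lam n * P.q0 (TopologicalSpace.denseSeq (EV d) i)) := by field_simp
    linarith
  | succ m ih =>
    intro n hn
    have hn1 := P.hn0.trans hn
    set G := M.evA n ∩ M.evD n (n + (m+1)) with hG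
    have hGm : MeasurableSet[natFilt M.X n] G := (M.evA_meas hn).inter (M.evD_meas hn _)
    have hGm0 := M.filt_le n _ hGm
    have hz : MeasurableSet {y : EV d | P.f y ≠ 0} :=
      (P.fcont.measurable (measurableSet_singleton 0)).compl
    have h1 : μ (G ∩ {ω | P.f (M.X (n+1) ω) = 0}) = 0 := by
      refine measure_mono_null ?_ (ih (n+1) (by omega))
      rintro ω ⟨⟨ha, hd⟩, h0⟩
      have hp := M.pn_stay hn h0
      refine ⟨?_, ?_⟩
      · intro i hi; rw [hp]; exact ha i hi
      · obtain ⟨i, hi⟩ := hd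
        refine ⟨i, ?_⟩
        rw [hp, show n + 1 + m = n + (m + 1) by ring]; exact hi
    have h2 : μ (G ∩ {ω | P.f (M.X (n+1) ω) ≠ 0}) ≤ ENNReal.ofReal (P.lam n) * μ G := by
      set h : Ω × EV d → ℝ≥0∞ := (G ×ˢ {y : EV d | P.f y ≠ 0}).indicator 1 with hh
      have hhm : @Measurable _ _ (@Prod.instMeasurableSpace Ω (EV d) (natFilt M.X n) _) _ h := by
        have hms : MeasurableSet[@Prod.instMeasurableSpace Ω (EV d) (natFilt M.X n) _] (G ×ˢ {y : EV d | P.f y ≠ 0}) :=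
          @MeasurableSet.prod _ _ (natFilt M.X n) _ _ _ hGm hz
        exact Measurable.indicator (@measurable_const _ _ _ (@Prod.instMeasurableSpace Ω (EV d) (natFilt M.X n) _) 1) hms
      have hd := disint (M.filt_le n) μ (M.X (n+1)) (M.hX _) (M.q n) (M.q_joint hn1)
        (M.q_nonneg.mono fun ω h => h n hn1) (M.q_int1.mono fun ω h => h n) (M.hpolicy n) h hhm
      have e1 : ∫⁻ ω, h (ω, M.X (n+1) ω) ∂μ = μ (G ∩ {ω | P.f (M.X (n+1) ω) ≠ 0}) := by
        have hms : MeasurableSet (G ∩ {ω | P.f (M.X (n+1) ω) ≠ 0}) := hGm0.inter ((M.hX (n+1)) hz)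
        rw [← lintegral_indicator_one hms]
        refine lintegral_congr fun ω => ?_
        by_cases h1 : ω ∈ G <;> by_cases h2 : P.f (M.X (n+1) ω) = 0 <;> simp [hh, h1, h2]
      rw [← e1, hd, ← lintegral_indicator_one hGm0, ← lintegral_const_mul _ (measurable_one.indicator hGm0)]
      refine lintegral_mono fun ω => ?_
      by_cases hω : ω ∈ G
      · rw [Set.indicator_of_mem hω]
        have hb : ∀ y, h (ω, y) * ENNReal.ofReal (M.q n ω y) ≤ ENNReal.ofReal (P.lam n * P.q0 y) := by
          intro y
          by_cases hy : P.f y = 0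
          · simp [hh, Set.indicator, hy]
          · have hy' : 0 < P.f y := lt_of_le_of_ne (P.f0 y) (Ne.symm hy)
            have : h (ω, y) = 1 := by simp [hh, Set.indicator, hy, hω]
            rw [this, one_mul]
            apply ENNReal.ofReal_le_ofReal
            rw [M.q_eq hn1]
            have := M.evA_all hω.1 y hy'
            have hl : 0 < 1 - P.lam n := by have := P.lamhalf n hn; linarith
            nlinarith
        refine (lintegral_mono hb).trans ?_
        rw [← ofReal_integral_eq_lintegral_ofReal (P.q0Int.const_mul _)
          (Eventually.of_forall fun y => mul_nonneg (P.lampos n).le (P.q00 y)), integral_const_mul, P.q0int1]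
        simp
      · have : ∀ y, h (ω, y) = 0 := fun y => by simp [hh, Set.indicator, hω]
        simp [this]
    have h3 : μ G ≤ μ (G ∩ {ω | P.f (M.X (n+1) ω) = 0}) + μ (G ∩ {ω | P.f (M.X (n+1) ω) ≠ 0}) := by
      refine (measure_mono ?_).trans (measure_union_le _ _)
      intro ω hω
      by_cases h0 : P.f (M.X (n+1) ω) = 0
      · exact Or.inl ⟨hω, h0⟩
      · exact Or.inr ⟨hω, h0⟩
    rw [h1, zero_add] at h3
    have h4 := h3.trans h2
    by_contra hne
    have hfin : μ G ≠ ∞ := measure_ne_top _ _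
    have h5 : (μ G).toReal ≤ P.lam n * (μ G).toReal := by
      have := ENNReal.toReal_mono (ENNReal.mul_ne_top ENNReal.ofReal_ne_top hfin) h4
      rwa [ENNReal.toReal_mul, ENNReal.toReal_ofReal (P.lampos n).le] at this
    have h6 : 0 < (μ G).toReal := ENNReal.toReal_pos hne hfin
    have := P.lamhalf n hn
    nlinarith

lemma good2 [IsProbabilityMeasure μ] : ∀ᵐ ω ∂μ, ∀ n, P.n0 ≤ n →
    (∀ x, 0 < P.f x → M.pn n ω x ≤ 0) → ∀ x, 0 ≤ M.pn n ω x := by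
  have key : ∀ᵐ ω ∂μ, ∀ n m, P.n0 ≤ n → ω ∉ M.evA n ∩ M.evD n (n + m) := by
    rw [ae_all_iff]; intro n
    rw [ae_all_iff]; intro m
    by_cases hn : P.n0 ≤ n
    · have := M.null m n hn
      rw [measure_eq_zero_iff_ae_notMem] at this
      filter_upwards [this] with ω h _ using h
    · exact Eventually.of_forall fun ω h => absurd h hn
  filter_upwards [key] with ω hω n hn hA x
  have h1 : ∀ i, 0 ≤ M.pn n ω (TopologicalSpace.denseSeq (EV d) i) := by
    intro i
    have h2 : ∀ m, - (P.lam (n+m) / (1 - P.lam (n+m))) * P.q0 (TopologicalSpace.denseSeq (EV d) i)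
        ≤ M.pn n ω (TopologicalSpace.denseSeq (EV d) i) := by
      intro m
      by_contra hc
      push Not at hc
      exact hω n m hn ⟨fun i hi => hA _ hi, i, hc⟩
    have h3 : Tendsto (fun m => - (P.lam (n+m) / (1 - P.lam (n+m))) * P.q0 (TopologicalSpace.denseSeq (EV d) i)) atTop (𝓝 (-(0 / (1 - 0)) * P.q0 (TopologicalSpace.denseSeq (EV d) i))) := by
      have hl : Tendsto (fun m => P.lam (n + m)) atTop (𝓝 0) := P.lam0.comp (tendsto_atTop_mono (fun m => Nat.le_add_left m n) tendsto_id)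
      exact ((hl.div (tendsto_const_nhds.sub hl) (by norm_num)).neg).mul_const _
    have := le_of_tendsto' h3 h2
    simpa using this
  by_contra hc
  push Not at hc
  have ho : IsOpen {y | M.pn n ω y < 0} := isOpen_lt (M.pn_cont n ω) continuous_const
  obtain ⟨i, hi⟩ := (TopologicalSpace.denseRange_denseSeq (EV d)).exists_mem_open ho ⟨x, hc⟩
  exact absurd (h1 i) (not_le.2 hi)

lemma good [IsProbabilityMeasure μ] : ∀ᵐ ω ∂μ, ∃ (h1 : ∀ n, 1 ≤ n → ∀ y, 0 ≤ M.q n ω y) (h2 : ∀ n, ∫ y, M.q n ω y = 1),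
    (M.path ω h1 h2).ChI ∧ (M.path ω h1 h2).ChK ∧ (M.path ω h1 h2).F2 := by
  filter_upwards [M.good1, M.good2] with ω h1 h2
  obtain ⟨a, b, c, e⟩ := h1
  exact ⟨a, b, c, e, h2⟩

end Mdl


namespace Par
variable {d : ℕ} (P : Par d)

/-- abbreviation for the products -/
noncomputable def rh (n : ℕ) : ℝ := rho P.γ P.n0 n

lemma rh_pos (n : ℕ) : 0 < P.rh n := P.rhopos n
lemma rh_le_one (n : ℕ) : P.rh n ≤ 1 := rho_le_one P.γnn P.γlt1 n
lemma rh_succ {n : ℕ} (hn : P.n0 ≤ n) : P.rh (n+1) = (1 - P.γ (n+1)) * P.rh n := rho_succ _ _ hn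
lemma rh0 : Tendsto P.rh atTop (𝓝 0) := P.rho_tendsto
lemma rh_lam : Tendsto (fun n => P.rh n / P.lam n) atTop (𝓝 0) := P.rho_lam
lemma rh_n0 : P.rh P.n0 = 1 := rho_of_le _ _ le_rfl
lemma g1 {n : ℕ} (hn : P.n0 ≤ n) : 0 < 1 - P.γ (n+1) := by have := P.γhalf (n+1) (by omega); linarith
lemma l1 {n : ℕ} (hn : P.n0 ≤ n) : 1/2 ≤ 1 - P.lam n := by have := P.lamhalf n hn; linarith

/-- any multiple of `rh` is eventually below any multiple of `lam` and its power -/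
lemma ev_rh_lam (D : ℝ) {e : ℝ} (he : 0 < e) : ∀ᶠ n in atTop, D * P.rh n ≤ e * P.lam n := by
  have h : Tendsto (fun n => D * (P.rh n / P.lam n)) atTop (𝓝 (D * 0)) := P.rh_lam.const_mul D
  rw [mul_zero] at h
  filter_upwards [h.eventually (ge_mem_nhds he)] with n hn
  have hl := P.lampos n
  rwa [← mul_div_assoc, div_le_iff₀ hl] at hn

lemma lamη_pos (n : ℕ) : 0 < P.lam n ^ (1 - P.η) := Real.rpow_pos_of_pos (P.lampos n) _

lemma ev_rh_lamη (D : ℝ) {e : ℝ} (he : 0 < e) : ∀ᶠ n in atTop, D * P.rh n ≤ e * P.lam n ^ (1 - P.η) := by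
  filter_upwards [P.ev_rh_lam D he, eventually_ge_atTop P.n0] with n h hn
  exact h.trans (mul_le_mul_of_nonneg_left (P.lam_lt_rpow hn) he.le)

lemma ev_rh (D : ℝ) {e : ℝ} (he : 0 < e) : ∀ᶠ n in atTop, D * P.rh n ≤ e := by
  have h : Tendsto (fun n => D * P.rh n) atTop (𝓝 (D * 0)) := P.rh0.const_mul D
  rw [mul_zero] at h
  exact h.eventually (ge_mem_nhds he)

lemma lamη0 : Tendsto (fun n => P.lam n ^ (1 - P.η)) atTop (𝓝 0) := by
  have := P.lam0.rpow_const (p := 1 - P.η) (Or.inr P.η1.le)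
  rwa [Real.zero_rpow P.η1.ne'] at this

lemma psi_low (n : ℕ) {q : EV d → ℝ} {y : EV d} (hq : P.lam n / 2 * P.q0 y ≤ q y) :
    (P.c / 2) ^ (1 - P.η) * P.lam n ^ (1 - P.η) * P.f y ≤ P.psi n q y := by
  have hl := P.lampos n; have hc := P.hc; have hf := P.f0 y; have hq0 := P.q00 y
  have hqq : 0 ≤ q y := le_trans (by positivity) hq
  rw [P.psi_eq n hqq hq]
  have h1 : P.c / 2 * P.lam n * P.f y ≤ q y := by
    refine le_trans ?_ hq
    nlinarith [mul_le_mul_of_nonneg_left (P.hcf y) hl.le]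
  have h2 : (P.c / 2 * P.lam n * P.f y) ^ (1 - P.η) ≤ q y ^ (1 - P.η) :=
    Real.rpow_le_rpow (by positivity) h1 P.η1.le
  have h3 : P.f y = P.f y ^ P.η * P.f y ^ (1 - P.η) := by
    rw [← Real.rpow_add_of_nonneg hf P.hη.le P.η1.le]; simp
  calc _ = (P.c / 2) ^ (1 - P.η) * P.lam n ^ (1 - P.η) * (P.f y ^ P.η * P.f y ^ (1 - P.η)) := by rw [← h3]
    _ = P.f y ^ P.η * (P.c / 2 * P.lam n * P.f y) ^ (1 - P.η) := by
      rw [Real.mul_rpow (by positivity) hf, Real.mul_rpow (by positivity) hl.le]; ring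
    _ ≤ _ := by gcongr

end Par

namespace Pth
variable {d : ℕ} {P : Par d} (p : Pth P)

/-- total mass -/
noncomputable def I (n : ℕ) : ℝ := ∫ y, p.g n y

/-- kernel averages -/
noncomputable def Sx (n : ℕ) (x : EV d) : ℝ := p.S (P.kx x) n
noncomputable def Tx (n : ℕ) (x : EV d) : ℝ := p.T (P.kx x) n
noncomputable def S1 (n : ℕ) : ℝ := p.S (fun _ _ => 1) n
noncomputable def T1 (n : ℕ) : ℝ := p.T (fun _ _ => 1) n

lemma q_def {n : ℕ} (hn : P.n0 ≤ n) (x : EV d) : p.q n x = (1 - P.lam n) * (p.g n x / p.I n) + P.lam n * P.q0 x :=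
  p.hq n (P.hn0.trans hn) x

lemma I_rec (n : ℕ) : p.I (n+1) = (1 - P.γ (n+1)) * p.I n + P.γ (n+1) * p.w (n+1) ^ P.η := by
  unfold I
  simp_rw [p.hg]
  rw [integral_add ((p.g_int n).const_mul _) ((P.kb_integrable_right (P.bpos _) _).const_mul _),
    integral_const_mul, integral_const_mul, P.kb_int_right (P.bpos _), mul_one]

lemma I_ne {n : ℕ} (hn : P.n0 ≤ n) : p.I n ≠ 0 := by
  intro h
  have h1 := p.q_int1 n
  simp_rw [p.q_def hn, h, div_zero, mul_zero, zero_add] at h1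
  rw [integral_const_mul, P.q0int1] at h1
  have := P.lamhalf n hn
  linarith

lemma wη_nn {n : ℕ} (hn : P.n0 ≤ n) : 0 ≤ p.w (n+1) ^ P.η := Real.rpow_nonneg (p.w_nn (P.hn0.trans hn)) _

lemma g_ge {n : ℕ} (hn : P.n0 ≤ n) (x : EV d) : (1 - P.γ (n+1)) * p.g n x ≤ p.g (n+1) x := by
  rw [p.hg]
  have h1 := p.wη_nn hn
  have h2 := P.kb_nonneg (P.bpos (n+1)) (x - p.X (n+1))
  have h3 := P.γpos (n+1)
  have : 0 ≤ P.γ (n + 1) * p.w (n + 1) ^ P.η * kb P.K (P.b (n + 1)) (x - p.X (n + 1)) := by positivity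
  linarith

lemma I_ge {n : ℕ} (hn : P.n0 ≤ n) : (1 - P.γ (n+1)) * p.I n ≤ p.I (n+1) := by
  rw [p.I_rec]
  have h1 := p.wη_nn hn
  have h3 := P.γpos (n+1)
  have : 0 ≤ P.γ (n + 1) * p.w (n + 1) ^ P.η := by positivity
  linarith

lemma mono_rh {u : ℕ → ℝ} {N : ℕ} (hN : P.n0 ≤ N) (h : ∀ n, N ≤ n → (1 - P.γ (n+1)) * u n ≤ u (n+1)) {m n : ℕ}
    (hm : N ≤ m) (hmn : m ≤ n) : u m / P.rh m ≤ u n / P.rh n := by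
  induction n, hmn using Nat.le_induction with
  | base => exact le_rfl
  | succ n hn ih =>
    refine ih.trans ?_
    have h0 : P.n0 ≤ n := hN.trans (hm.trans hn)
    rw [P.rh_succ h0]
    have h1 := P.g1 h0
    have h2 := P.rh_pos n
    rw [div_le_div_iff₀ h2 (by positivity)]
    have := mul_le_mul_of_nonneg_right (h n (hm.trans hn)) h2.le
    nlinarith

lemma g_rh {m n : ℕ} (hm : P.n0 ≤ m) (hmn : m ≤ n) (x : EV d) : P.rh n / P.rh m * p.g m x ≤ p.g n x := by
  have := mono_rh (P := P) (u := fun n => p.g n x) le_rfl (fun n hn => p.g_ge hn x) hm hmn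
  rw [le_div_iff₀ (P.rh_pos n)] at this
  calc _ = p.g m x / P.rh m * P.rh n := by ring
    _ ≤ _ := this

lemma I_rh {m n : ℕ} (hm : P.n0 ≤ m) (hmn : m ≤ n) : P.rh n / P.rh m * p.I m ≤ p.I n := by
  have := mono_rh (P := P) (u := fun n => p.I n) le_rfl (fun n hn => p.I_ge hn) hm hmn
  rw [le_div_iff₀ (P.rh_pos n)] at this
  calc _ = p.I m / P.rh m * P.rh n := by ring
    _ ≤ _ := this

lemma I_pos_of {m n : ℕ} (hm : P.n0 ≤ m) (hmn : m ≤ n) (h : 0 < p.I m) : 0 < p.I n := by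
  refine lt_of_lt_of_le ?_ (p.I_rh hm hmn)
  have := P.rh_pos m; have := P.rh_pos n; positivity

lemma Sx_succ {n : ℕ} (hn : P.n0 ≤ n) (x : EV d) : p.Sx (n+1) x
    = (1 - P.γ (n+1)) * p.Sx n x + P.γ (n+1) * (P.tw n (p.w (n+1)) * kb P.K (P.b (n+1)) (x - p.X (n+1))) :=
  p.S_succ _ hn
lemma S1_succ {n : ℕ} (hn : P.n0 ≤ n) : p.S1 (n+1) = (1 - P.γ (n+1)) * p.S1 n + P.γ (n+1) * P.tw n (p.w (n+1)) := by
  have := p.S_succ (fun _ _ => 1) hn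
  rwa [mul_one] at this
lemma Tx_succ {n : ℕ} (hn : P.n0 ≤ n) (x : EV d) : p.Tx (n+1) x
    = (1 - P.γ (n+1)) * p.Tx n x + P.γ (n+1) * (∫ y, P.psi n (p.q n) y * kb P.K (P.b (n+1)) (x - y)) :=
  p.T_succ _ hn
lemma T1_succ {n : ℕ} (hn : P.n0 ≤ n) : p.T1 (n+1) = (1 - P.γ (n+1)) * p.T1 n + P.γ (n+1) * ∫ y, P.psi n (p.q n) y := by
  have := p.T_succ (fun _ _ => 1) hn
  simp only [mul_one] at this; exact this

lemma Tx_nn (n : ℕ) (x : EV d) : 0 ≤ p.Tx n x := p.T_nn (P.adm_kx x) n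
lemma Sx_nn (n : ℕ) (x : EV d) : 0 ≤ p.Sx n x := p.S_nn (P.adm_kx x) n

lemma g_ge_Sx {n : ℕ} (hn : P.n0 ≤ n) (x : EV d) : p.Sx n x + P.rh n * p.g P.n0 x ≤ p.g n x := by
  induction n, hn using Nat.le_induction with
  | base => rw [P.rh_n0, show p.Sx P.n0 x = 0 from avg_of_le _ _ _ le_rfl]; simp
  | succ n hn ih =>
    rw [p.Sx_succ hn, p.hg, P.rh_succ hn]
    have h1 := P.g1 hn
    have h2 := P.tw_le_self n (p.w_nn (P.hn0.trans hn))
    have h3 := P.kb_nonneg (P.bpos (n+1)) (x - p.X (n+1))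
    have h4 := P.γpos (n+1)
    have h5 := mul_le_mul_of_nonneg_right h2 h3
    have h6 := mul_le_mul_of_nonneg_left h5 h4.le
    nlinarith [mul_le_mul_of_nonneg_left ih h1.le]

lemma I_ge_S1 {n : ℕ} (hn : P.n0 ≤ n) : p.S1 n + P.rh n * p.I P.n0 ≤ p.I n := by
  induction n, hn using Nat.le_induction with
  | base => rw [P.rh_n0, show p.S1 P.n0 = 0 from avg_of_le _ _ _ le_rfl]; simp
  | succ n hn ih =>
    rw [p.S1_succ hn, p.I_rec, P.rh_succ hn]
    have h1 := P.g1 hn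
    have h2 := P.tw_le_self n (p.w_nn (P.hn0.trans hn))
    have h4 := P.γpos (n+1)
    have h6 := mul_le_mul_of_nonneg_left h2 h4.le
    nlinarith [mul_le_mul_of_nonneg_left ih h1.le]

lemma psi_int' {n : ℕ} (hn : P.n0 ≤ n) : Integrable (P.psi n (p.q n)) :=
  P.psi_integrable n (p.q_meas (P.hn0.trans hn)) (p.q_nn n (P.hn0.trans hn)) (p.q_int n)

/-- Step 1 -/
lemma exists_I_pos (hI : p.ChI) : ∃ n, P.n0 ≤ n ∧ 0 < p.I n := by
  by_contra hcon
  push Not at hcon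
  have hneg : ∀ n, P.n0 ≤ n → p.I n < 0 := fun n hn => lt_of_le_of_ne (hcon n hn) (p.I_ne hn)
  have hup : ∀ n, P.n0 ≤ n → ∀ x, p.g n x ≤ 2 * P.lam n * (-p.I P.n0) * P.rh n * P.q0 x := by
    intro n hn x
    have h1 := p.q_nn n (P.hn0.trans hn) x
    rw [p.q_def hn] at h1
    have h2 := P.l1 hn
    have h3 := p.I_rh le_rfl hn
    rw [P.rh_n0, div_one] at h3
    have h4 := hneg n hn
    have hq0 := P.q00 x
    have hl := P.lampos n
    by_cases hg : p.g n x ≤ 0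
    · refine hg.trans ?_
      have := P.rh_pos n
      have := hneg P.n0 le_rfl
      have : 0 < -p.I P.n0 := by linarith
      positivity
    push Not at hg
    have h5 : p.g n x / p.I n ≤ 0 := div_nonpos_of_nonneg_of_nonpos hg.le h4.le
    have h6 : -(2 * P.lam n * P.q0 x) ≤ p.g n x / p.I n := by
      nlinarith
    rw [le_div_iff_of_neg h4] at h6
    have h8 : 0 ≤ 2 * P.lam n * P.q0 x := by positivity
    calc p.g n x ≤ (2 * P.lam n * P.q0 x) * (-p.I n) := by linarith
      _ ≤ (2 * P.lam n * P.q0 x) * (-(P.rh n * p.I P.n0)) := by gcongr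
      _ = _ := by ring
  have hg0 : ∀ n, P.n0 ≤ n → ∀ x, p.g n x ≤ 0 := by
    intro n hn x
    have h1 : ∀ m, n ≤ m → p.g n x / P.rh n ≤ P.lam m * (2 * (-p.I P.n0) * P.q0 x) := by
      intro m hm
      have h2 := mono_rh (P := P) (u := fun n => p.g n x) le_rfl (fun n hn => p.g_ge hn x) hn hm
      refine h2.trans ?_
      rw [div_le_iff₀ (P.rh_pos m)]
      refine (hup m (hn.trans hm) x).trans (le_of_eq (by ring))
    have h3 : Tendsto (fun m => P.lam m * (2 * (-p.I P.n0) * P.q0 x)) atTop (𝓝 0) := by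
      have := P.lam0.mul_const (2 * (-p.I P.n0) * P.q0 x)
      rwa [zero_mul] at this
    have h4 : p.g n x / P.rh n ≤ 0 := ge_of_tendsto h3 (eventually_atTop.2 ⟨n, h1⟩)
    rw [div_le_iff₀ (P.rh_pos n), zero_mul] at h4
    exact h4
  have hq : ∀ n, P.n0 ≤ n → ∀ x, P.lam n / 2 * P.q0 x ≤ p.q n x := by
    intro n hn x
    rw [p.q_def hn]
    have h1 : 0 ≤ p.g n x / p.I n := div_nonneg_of_nonpos (hg0 n hn x) (hneg n hn).le
    have h2 := P.l1 hn
    have h3 := P.lampos n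
    have h4 := P.q00 x
    nlinarith [mul_nonneg h3.le h4, mul_nonneg (by linarith : 0 ≤ 1 - P.lam n) h1]
  set a := (P.c / 2) ^ (1 - P.η) with ha
  have ha0 : 0 < a := Real.rpow_pos_of_pos (by have := P.hc; positivity) _
  have hT : ∀ n, P.n0 ≤ n → a * P.lam n ^ (1 - P.η) * (1 - P.rh n) ≤ p.T1 n := by
    intro n hn
    refine avg_ge_const P.γnn P.γlt1 n fun k hk hkn => ?_
    simp only [mul_one]
    calc a * P.lam n ^ (1 - P.η) ≤ a * P.lam k ^ (1 - P.η) := by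
          have := P.lamanti hkn.le
          have := (P.lampos n).le
          have := P.η1
          gcongr
      _ = ∫ y, a * P.lam k ^ (1 - P.η) * P.f y := by rw [integral_const_mul, P.fint1, mul_one]
      _ ≤ _ := integral_mono (P.fInt.const_mul _) (p.psi_int' hk) fun y => P.psi_low k (hq k hk y)
  have hε : 0 < min (1/2) (a / 8) := by positivity
  obtain ⟨n, h1, h2, h3, h4⟩ := ((hI _ hε (-1) (Or.inr rfl)).and ((P.ev_rh_lamη (-p.I P.n0) (e := a / 16) (by positivity)).and
    ((P.ev_rh 1 (e := 1/2) (by norm_num)).and (eventually_ge_atTop P.n0)))).exists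
  have hT' := hT n h4
  have hl := P.lamη_pos n
  have hSI := p.I_ge_S1 h4
  have hc := hcon n h4
  change -1 * p.S1 n - (-1 + min (1/2) (a/8)) * p.T1 n ≤ _ at h1
  have e1 : min (1/2) (a/8) ≤ 1/2 := min_le_left _ _
  have e2 : min (1/2) (a/8) ≤ a/8 := min_le_right _ _
  set e := min (1/2) (a/8)
  set l := P.lam n ^ (1 - P.η)
  have hTn : a * l / 2 ≤ p.T1 n := by nlinarith [mul_pos ha0 hl]
  have e3 : e * l ≤ a / 8 * l := mul_le_mul_of_nonneg_right e2 hl.le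
  have hT0 : 0 ≤ p.T1 n := by nlinarith [mul_pos ha0 hl]
  have e4 : e * p.T1 n ≤ 1/2 * p.T1 n := mul_le_mul_of_nonneg_right e1 hT0
  nlinarith [mul_pos ha0 hl]

/-- Step 2 -/
lemma good_start (hI : p.ChI) (hF : p.F2) : ∃ n1, P.n0 ≤ n1 ∧ ∃ M > 0, ∃ x0 : EV d, ∃ R > 0, ∃ δ > 0,
    (∀ n, n1 ≤ n → 0 < p.I n) ∧ (∀ n, n1 ≤ n → ∀ x, -(M * P.rh n * P.q0 x) ≤ p.g n x) ∧
    (∀ x ∈ closedBall x0 R, δ ≤ P.f x ∧ ∀ n, n1 ≤ n → P.lam n / 2 * P.q0 x ≤ p.q n x) := by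
  obtain ⟨n1, h1, h2⟩ := p.exists_I_pos hI
  have hpos : ∀ n, n1 ≤ n → 0 < p.I n := fun n hn => p.I_pos_of h1 hn h2
  have hx : ∃ x0, 0 < P.f x0 ∧ ∃ R > 0, ∀ x ∈ closedBall x0 R, 0 ≤ p.g n1 x := by
    by_cases hc : ∃ x, 0 < P.f x ∧ 0 < p.g n1 x
    · obtain ⟨x, hx, hgx⟩ := hc
      refine ⟨x, hx, ?_⟩
      have : ∀ᶠ y in 𝓝 x, 0 < p.g n1 y := (p.g_cont n1).continuousAt.eventually (lt_mem_nhds hgx)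
      obtain ⟨R, hR, hb⟩ := Metric.nhds_basis_closedBall.eventually_iff.1 this
      exact ⟨R, hR, fun y hy => (hb hy).le⟩
    · push Not at hc
      have h3 := hF n1 h1 (fun x hx => div_nonpos_of_nonpos_of_nonneg (hc x hx) h2.le)
      have h4 : ∃ x, 0 < P.f x := by
        by_contra h
        push Not at h
        have h5 : ∀ x, P.f x = 0 := fun x => le_antisymm (h x) (P.f0 x)
        have := P.fint1
        simp [h5] at this
      obtain ⟨x, hx⟩ := h4
      refine ⟨x, hx, 1, one_pos, fun y _ => ?_⟩
      have h5 := h3 y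
      change 0 ≤ p.g n1 y / p.I n1 at h5
      rw [le_div_iff₀ h2, zero_mul] at h5
      exact h5
  obtain ⟨x0, hfx, R1, hR1, hg1⟩ := hx
  have : ∀ᶠ y in 𝓝 x0, P.f x0 / 2 < P.f y := P.fcont.continuousAt.eventually (lt_mem_nhds (by linarith))
  obtain ⟨R2, hR2, hf2⟩ := Metric.nhds_basis_closedBall.eventually_iff.1 this
  refine ⟨n1, h1, 2 * P.lam n1 * p.I n1 / P.rh n1, ?_, x0, min R1 R2, lt_min hR1 hR2, P.f x0 / 2, by positivity, hpos, ?_, ?_⟩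
  · have := P.lampos n1; have := P.rh_pos n1; positivity
  · intro n hn x
    refine le_trans ?_ (p.g_rh h1 hn x)
    have h3 := p.q_nn n1 (P.hn0.trans h1) x
    rw [p.q_def h1] at h3
    have h4 := P.l1 h1
    have h5 : -(2 * P.lam n1 * P.q0 x) ≤ p.g n1 x / p.I n1 := by
      by_cases hg : 0 ≤ p.g n1 x / p.I n1
      · refine le_trans ?_ hg
        have := P.lampos n1; have := P.q00 x
        have : 0 ≤ 2 * P.lam n1 * P.q0 x := by positivity
        linarith
      · push Not at hg
        nlinarith
    rw [le_div_iff₀ h2] at h5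
    have hr : 0 < P.rh n / P.rh n1 := div_pos (P.rh_pos n) (P.rh_pos n1)
    calc _ = P.rh n / P.rh n1 * (-(2 * P.lam n1 * P.q0 x) * p.I n1) := by ring
      _ ≤ _ := by gcongr
  · intro x hx
    refine ⟨(hf2 (closedBall_subset_closedBall (min_le_right _ _) hx)).le, fun n hn => ?_⟩
    have h0 := h1.trans hn
    have h3 : 0 ≤ p.g n x := by
      refine le_trans ?_ (p.g_rh h1 hn x)
      have := hg1 x (closedBall_subset_closedBall (min_le_left _ _) hx)
      have hr : 0 < P.rh n / P.rh n1 := div_pos (P.rh_pos n) (P.rh_pos n1)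
      positivity
    rw [p.q_def h0]
    have h4 := P.l1 h0
    have h5 : 0 ≤ p.g n x / p.I n := div_nonneg h3 (hpos n hn).le
    nlinarith [mul_nonneg (P.lampos n).le (P.q00 x)]

end Pth


lemma rpow_one_sub_ge {s γ : ℝ} (hs : 0 ≤ s) (h0 : 0 < γ) (h1 : γ ≤ 1/2) : 1 - s * (2 * γ) ≤ (1 - γ) ^ s := by
  have h2 : 0 < 1 - γ := by linarith
  rw [Real.rpow_def_of_pos h2]
  have h3 := Real.add_one_le_exp (Real.log (1 - γ) * s)
  have h4 := Real.one_sub_inv_le_log_of_pos h2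
  have h5 : (1 - γ)⁻¹ ≤ 1 + 2 * γ := by
    rw [inv_le_iff_one_le_mul₀ h2]; nlinarith
  nlinarith

lemma rpow_conc {η t : ℝ} (h0 : 0 ≤ η) (h1 : η ≤ 1) (ht : 0 ≤ t) (ht1 : t ≤ 1) :
    1 + (2 ^ η - 1) * t ≤ (1 + t) ^ η := by
  have h := (Real.concaveOn_rpow h0 h1).2 (x := 1) (y := 2) (by simp) (by simp) (by linarith : 0 ≤ 1 - t) ht (by ring)
  simp only [smul_eq_mul, Real.one_rpow] at h
  calc _ = (1 - t) * 1 + t * 2 ^ η := by ring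
    _ ≤ _ := h
    _ = _ := by ring_nf

lemma esc_step {η γ Y κ u : ℝ} (h0 : 0 < η) (h1 : η < 1) (hγ : 0 < γ) (hγ1 : γ ≤ 1/2) (hY : 0 < Y) (hκ : 0 < κ)
    (hu : u ≤ Y ^ η) (huκ : u ≤ κ) (ht : γ * κ ≤ Y ^ η) :
    κ - (κ - u) * (1 - γ) ^ (((2:ℝ) ^ η - 1) / 2) ≤ ((1 - γ) * Y + γ * κ * Y ^ (1 - η)) ^ η := by
  set U := Y ^ η with hU
  have hU0 : 0 < U := Real.rpow_pos_of_pos hY _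
  have h2 : (1:ℝ) < 2 ^ η := Real.one_lt_rpow (by norm_num) h0
  have e1 : Y ^ (1 - η) = Y / U := by rw [Real.rpow_sub hY, Real.rpow_one]
  have e2 : (1 - γ) * Y + γ * κ * Y ^ (1 - η) = Y * (1 + γ * (κ / U - 1)) := by
    rw [e1]; ring
  have hkU : 0 < κ / U := by positivity
  have e3 : 0 < 1 + γ * (κ / U - 1) := by nlinarith
  rw [e2, Real.mul_rpow hY.le e3.le, ← hU]
  have hs : 0 ≤ ((2:ℝ) ^ η - 1) / 2 := by linarith
  have hp : 0 ≤ (1 - γ) ^ (((2:ℝ) ^ η - 1) / 2) := Real.rpow_nonneg (by linarith) _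
  have hb := rpow_one_sub_ge hs hγ hγ1
  have e6 : U * (κ / U) = κ := by field_simp
  by_cases hc : U ≤ κ
  · have e4 : 0 ≤ γ * (κ / U - 1) := by
      have : 1 ≤ κ / U := by rwa [le_div_iff₀ hU0, one_mul]
      have : 0 ≤ κ / U - 1 := by linarith
      positivity
    have e5 : γ * (κ / U - 1) ≤ 1 := by
      have : γ * (κ / U) ≤ 1 := by rw [← mul_div_assoc, div_le_one hU0]; exact ht
      nlinarith
    have e7 := rpow_conc h0.le h1.le e4 e5
    calc κ - (κ - u) * (1 - γ) ^ (((2:ℝ) ^ η - 1) / 2) ≤ κ - (κ - u) * (1 - ((2:ℝ) ^ η - 1) / 2 * (2 * γ)) := by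
          have : 0 ≤ κ - u := by linarith
          nlinarith [mul_le_mul_of_nonneg_left hb this]
      _ ≤ κ - (κ - U) * (1 - ((2:ℝ) ^ η - 1) / 2 * (2 * γ)) := by
          have h22 : (2:ℝ) ^ η ≤ 2 := by
            calc (2:ℝ) ^ η ≤ 2 ^ (1:ℝ) := Real.rpow_le_rpow_of_exponent_le (by norm_num) h1.le
              _ = 2 := by norm_num
          have : 0 ≤ 1 - ((2:ℝ) ^ η - 1) / 2 * (2 * γ) := by nlinarith
          nlinarith [mul_le_mul_of_nonneg_right (by linarith : κ - U ≤ κ - u) this]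
      _ = U * (1 + (2 ^ η - 1) * (γ * (κ / U - 1))) := by
          calc _ = U + (2^η - 1) * γ * (κ - U) := by ring
            _ = U + (2^η - 1) * γ * (U * (κ / U) - U) := by rw [e6]
            _ = _ := by ring
      _ ≤ _ := by gcongr
  · push Not at hc
    have e4 : 1 + γ * (κ / U - 1) ≤ 1 := by
      have : κ / U ≤ 1 := by rw [div_le_one hU0]; exact hc.le
      nlinarith
    have e5 := Real.rpow_le_rpow_of_exponent_ge e3 e4 h1.le
    rw [Real.rpow_one] at e5
    calc _ ≤ κ := by nlinarith [mul_nonneg (by linarith : 0 ≤ κ - u) hp]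
      _ ≤ U + γ * (U * (κ / U) - U) := by rw [e6]; nlinarith
      _ = U * (1 + γ * (κ / U - 1)) := by ring
      _ ≤ _ := by gcongr

namespace Par
variable {d : ℕ} (P : Par d)
lemma rh_anti {m n : ℕ} (hm : P.n0 ≤ m) (hmn : m ≤ n) : P.rh n ≤ P.rh m := by
  induction n, hmn using Nat.le_induction with
  | base => exact le_rfl
  | succ n hn ih =>
    rw [P.rh_succ (hm.trans hn)]
    have := P.γpos (n+1); have := P.rh_pos n
    nlinarith
end Par

namespace Pth
variable {d : ℕ} {P : Par d} (p : Pth P)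

lemma psikx_int {k : ℕ} (hk : P.n0 ≤ k) (x : EV d) :
    Integrable (fun y => P.psi k (p.q k) y * kb P.K (P.b (k+1)) (x - y)) := p.psiκ_int (P.adm_kx x) hk

lemma conv_ge {k : ℕ} (hk : P.n0 ≤ k) {A : Set (EV d)} (hA : MeasurableSet A) {v κ : ℝ} (hv : 0 ≤ v) {x : EV d}
    (h : ∀ y ∈ A, v ≤ P.psi k (p.q k) y) (hκ : κ ≤ ∫ y in A, kb P.K (P.b (k+1)) (x - y)) :
    v * κ ≤ ∫ y, P.psi k (p.q k) y * kb P.K (P.b (k+1)) (x - y) := by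
  have hkb := fun y => P.kb_nonneg (P.bpos (k+1)) (x - y)
  calc v * κ ≤ v * ∫ y in A, kb P.K (P.b (k+1)) (x - y) := by gcongr
    _ = ∫ y in A, v * kb P.K (P.b (k+1)) (x - y) := by rw [integral_const_mul]
    _ ≤ ∫ y in A, P.psi k (p.q k) y * kb P.K (P.b (k+1)) (x - y) := by
      refine setIntegral_mono_on ((P.kb_integrable_left (P.bpos _) x).const_mul _).integrableOn
        (p.psikx_int hk x).integrableOn hA fun y hy => ?_
      exact mul_le_mul_of_nonneg_right (h y hy) (hkb y)
    _ ≤ _ := setIntegral_le_integral (p.psikx_int hk x)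
      (Eventually.of_forall fun y => mul_nonneg (p.psi_nn hk y) (hkb y))

lemma ev_norm_le (R : ℝ) : ∀ᶠ n : ℕ in atTop, R ≤ (n:ℝ) ^ 1 := by
  simp only [pow_one]
  exact tendsto_natCast_atTop_atTop.eventually_ge_atTop R

lemma dev_ge (hK : p.ChK) {ε : ℝ} (hε : 0 < ε) (R : ℝ) : ∀ᶠ n in atTop, ∀ x, ‖x‖ ≤ R →
    (1 - ε) * p.Tx n x - ε * P.lam n ^ (1 - P.η) ≤ p.g n x := by
  obtain ⟨D, hD⟩ := p.g_bdd P.n0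
  filter_upwards [hK (ε/2) (by positivity) (-1) (Or.inr rfl) 1, P.ev_rh_lamη D (e := ε/2) (by positivity),
    eventually_ge_atTop P.n0, ev_norm_le R] with n h1 h2 h3 h4 x hx
  have h5 := h1 x (hx.trans h4)
  change -1 * p.Sx n x - (-1 + ε/2) * p.Tx n x ≤ _ at h5
  have h6 := p.g_ge_Sx h3 x
  have h7 := (abs_le.1 (hD x)).1
  have h8 := P.rh_pos n
  have h9 := p.Tx_nn n x
  nlinarith [mul_le_mul_of_nonneg_left h7 h8.le, mul_nonneg hε.le h9]

lemma esc1 (hK : p.ChK) {x0 : EV d} {R δ : ℝ} {N0 : ℕ} (hR : 0 < R) (hδ : 0 < δ) (hN0 : P.n0 ≤ N0)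
    (hq : ∀ x ∈ closedBall x0 R, δ ≤ P.f x ∧ ∀ n, N0 ≤ n → P.lam n / 2 * P.q0 x ≤ p.q n x) :
    ∃ c1 > 0, ∀ᶠ k in atTop, ∀ x ∈ closedBall x0 R, c1 * P.lam k ^ (1 - P.η) ≤ p.Tx k x ∧ p.Tx k x / 2 ≤ p.g k x := by
  obtain ⟨κ, hκ, hfr⟩ := P.kb_frac
  obtain ⟨N, hN⟩ := eventually_atTop.1 ((hfr R hR).and (eventually_ge_atTop N0))
  have hNN0 : N0 ≤ N := (hN N le_rfl).2
  have hNn0 := hN0.trans hNN0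
  set c2 := (P.c/2)^(1-P.η) * δ * κ with hc2
  have hc20 : 0 < c2 := by have := P.hc; positivity
  have key : ∀ k, N ≤ k → ∀ x ∈ closedBall x0 R, c2 * P.lam k ^ (1 - P.η) * (1 - P.rh k / P.rh N) ≤ p.Tx k x := by
    intro k hk
    induction k, hk using Nat.le_induction with
    | base => intro x _; rw [div_self (P.rh_pos N).ne']; simpa using p.Tx_nn N x
    | succ k hk ih =>
      intro x hx
      have hk0 := hNn0.trans hk
      have hl := P.lamη_pos k
      have h1 := p.conv_ge (x := x) hk0 (A := closedBall x0 R) isClosed_closedBall.measurableSet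
        (v := (P.c / 2) ^ (1 - P.η) * P.lam k ^ (1 - P.η) * δ) (κ := κ) (by have := P.hc; positivity)
        (fun y hy => by
          refine le_trans ?_ (P.psi_low k ((hq y hy).2 k (hNN0.trans hk)))
          have := (hq y hy).1
          have := P.hc
          gcongr) ((hN (k+1) (by omega)).1 x0 x hx)
      have h2 := ih x hx
      rw [p.Tx_succ hk0, P.rh_succ hk0]
      have hg := P.g1 hk0
      have hγ := P.γpos (k+1)
      have hl1 : P.lam (k+1) ^ (1 - P.η) ≤ P.lam k ^ (1 - P.η) :=
        Real.rpow_le_rpow (P.lampos _).le (P.lamanti (by omega)) P.η1.le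
      have hr : P.rh k / P.rh N ≤ 1 := by
        rw [div_le_one (P.rh_pos N)]
        exact P.rh_anti hNn0 hk
      have hr0 : 0 < P.rh k / P.rh N := div_pos (P.rh_pos _) (P.rh_pos _)
      have h3 : 0 ≤ 1 - (1 - P.γ (k+1)) * P.rh k / P.rh N := by
        rw [mul_div_assoc]; nlinarith
      calc _ ≤ c2 * P.lam k ^ (1 - P.η) * (1 - (1 - P.γ (k+1)) * P.rh k / P.rh N) := by gcongr
        _ = (1 - P.γ (k+1)) * (c2 * P.lam k ^ (1 - P.η) * (1 - P.rh k / P.rh N)) + P.γ (k+1) * ((P.c / 2) ^ (1 - P.η) * P.lam k ^ (1 - P.η) * δ * κ) := by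
          rw [hc2]; ring
        _ ≤ _ := by gcongr
  refine ⟨c2 / 2, by positivity, ?_⟩
  set ε := min (1/4) (c2/8) with hε
  have hε0 : 0 < ε := by positivity
  filter_upwards [eventually_ge_atTop N, P.ev_rh (1 / P.rh N) (e := 1/2) (by norm_num), p.dev_ge hK hε0 (‖x0‖ + R)] with k h1 h2 h3 x hx
  have h4 := key k h1 x hx
  have hl := P.lamη_pos k
  have h5 : c2 / 2 * P.lam k ^ (1 - P.η) ≤ p.Tx k x := by
    refine le_trans ?_ h4
    have : 1/2 ≤ 1 - P.rh k / P.rh N := by rw [one_div_mul_eq_div] at h2; linarith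
    nlinarith [mul_pos hc20 hl]
  refine ⟨h5, ?_⟩
  have hx' : ‖x‖ ≤ ‖x0‖ + R := by
    have := norm_le_norm_add_norm_sub' x x0
    rw [mem_closedBall, dist_eq_norm] at hx
    linarith
  have h6 := h3 x hx'
  have h7 := p.Tx_nn k x
  have e1 : ε * p.Tx k x ≤ 1/4 * p.Tx k x := mul_le_mul_of_nonneg_right (min_le_left _ _) h7
  have e2 : ε * P.lam k ^ (1-P.η) ≤ c2/8 * P.lam k ^ (1-P.η) := mul_le_mul_of_nonneg_right (min_le_right _ _) hl.le
  nlinarith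

end Pth


namespace Pth
variable {d : ℕ} {P : Par d} (p : Pth P)

lemma esc2 (hK : p.ChK) {x0 : EV d} {R δ : ℝ} {N0 : ℕ} (hR : 0 < R) (hδ : 0 < δ) (hN0 : P.n0 ≤ N0)
    (hq : ∀ x ∈ closedBall x0 R, δ ≤ P.f x ∧ ∀ n, N0 ≤ n → P.lam n / 2 * P.q0 x ≤ p.q n x) :
    ∃ κ > (0:ℝ), ∃ s > (0:ℝ), ∃ N1, N0 ≤ N1 ∧ (∀ k, N1 ≤ k → ∀ x ∈ closedBall x0 R, p.Tx k x / 2 ≤ p.g k x) ∧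
    ∀ k0, N1 ≤ k0 → ∀ n, k0 ≤ n → (∀ k, k0 ≤ k → k < n → 0 < p.I k ∧ p.I k ≤ 2) → ∀ x ∈ closedBall x0 R,
      κ * (1 - (P.rh n / P.rh k0) ^ s) ≤ p.Tx n x ^ P.η := by
  obtain ⟨κ0, hκ0, hfr⟩ := P.kb_frac
  obtain ⟨c1, hc1, he1⟩ := p.esc1 hK hR hδ hN0 hq
  have hη := P.hη
  have hη1 := P.η1
  set κ := δ ^ P.η * (1/8) ^ (1 - P.η) * κ0 with hκ
  have hκpos : 0 < κ := by positivity
  have hc1η : 0 < c1 ^ P.η := by positivity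
  have hrate : ∀ᶠ n in atTop, P.γ n * κ ≤ c1 ^ P.η * P.lam n := by
    have h := P.rate_lam.mul_const κ
    rw [zero_mul] at h
    filter_upwards [h.eventually (ge_mem_nhds hc1η)] with n hn
    have hl := P.lampos n
    rw [div_mul_eq_mul_div, div_le_iff₀ hl] at hn
    exact hn
  obtain ⟨N1, hN1⟩ := eventually_atTop.1 ((hfr R hR).and (he1.and ((eventually_ge_atTop N0).and hrate)))
  have h2 : (1:ℝ) < 2 ^ P.η := Real.one_lt_rpow (by norm_num) hη
  refine ⟨κ, hκpos, ((2:ℝ) ^ P.η - 1) / 2, by linarith, N1, (hN1 N1 le_rfl).2.2.1, fun k hk x hx => ((hN1 k hk).2.1 x hx).2, ?_⟩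
  set s := ((2:ℝ) ^ P.η - 1) / 2 with hs
  have hs0 : 0 < s := by rw [hs]; linarith
  intro k0 hk0 n hn
  induction n, hn using Nat.le_induction with
  | base =>
    intro _ x _
    rw [div_self (P.rh_pos _).ne', Real.one_rpow, sub_self, mul_zero]
    exact Real.rpow_nonneg (p.Tx_nn _ _) _
  | succ k hk ih =>
    intro hwin x hx
    have hih := ih fun j hj hjk => hwin j hj (by omega)
    have hkN : N1 ≤ k := hk0.trans hk
    obtain ⟨hf1, he, hkN0, hrt⟩ := hN1 k hkN
    have hkn0 : P.n0 ≤ k := hN0.trans hkN0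
    obtain ⟨hI0, hI2⟩ := hwin k hk (by omega)
    set r := P.rh k / P.rh k0 with hr
    have hr0 : 0 < r := div_pos (P.rh_pos _) (P.rh_pos _)
    have hr1 : r ≤ 1 := (div_le_one (P.rh_pos _)).2 (P.rh_anti (hN0.trans ((hN1 k0 hk0).2.2.1)) hk)
    have hrs1 : r ^ s ≤ 1 := Real.rpow_le_one hr0.le hr1 hs0.le
    have hrs0 : 0 < r ^ s := Real.rpow_pos_of_pos hr0 _
    set u := κ * (1 - r ^ s) with hu
    have hu0 : 0 ≤ u := mul_nonneg hκpos.le (by linarith)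
    have huκ : u ≤ κ := by rw [hu]; nlinarith
    have hl := P.lamη_pos k
    set Y := max (u ^ (1 / P.η)) (c1 * P.lam k ^ (1 - P.η)) with hY
    have hY0 : 0 < Y := lt_of_lt_of_le (by positivity) (le_max_right _ _)
    have hTY : ∀ y ∈ closedBall x0 R, Y ≤ p.Tx k y := by
      intro y hy
      refine max_le ?_ (he y hy).1
      have h3 := Real.rpow_le_rpow hu0 (hih y hy) (z := 1 / P.η) (by positivity)
      rwa [← Real.rpow_mul (p.Tx_nn _ _), mul_one_div_cancel hη.ne', Real.rpow_one] at h3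
    have hUu : u ≤ Y ^ P.η := by
      have h3 := Real.rpow_le_rpow (z := P.η) (Real.rpow_nonneg hu0 _) (le_max_left (u ^ (1 / P.η)) (c1 * P.lam k ^ (1 - P.η))) hη.le
      rwa [← Real.rpow_mul hu0, one_div_mul_cancel hη.ne', Real.rpow_one] at h3
    have hγU : P.γ (k+1) * κ ≤ Y ^ P.η := by
      have h3 := (hN1 (k+1) (by omega)).2.2.2
      refine h3.trans ?_
      have h4 := Real.rpow_le_rpow (z := P.η) (by positivity) (le_max_right (u ^ (1 / P.η)) (c1 * P.lam k ^ (1 - P.η))) hη.le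
      refine le_trans ?_ h4
      rw [Real.mul_rpow hc1.le hl.le]
      refine mul_le_mul_of_nonneg_left ?_ hc1η.le
      refine (P.lamanti (by omega : k ≤ k+1)).trans ?_
      rw [← Real.rpow_mul (P.lampos k).le]
      have := P.lamhalf k hkn0
      have h5 := Real.rpow_le_rpow_of_exponent_ge (P.lampos k) (by linarith) (y := 1) (z := (1 - P.η) * P.η) (by nlinarith)
      rwa [Real.rpow_one] at h5
    have hstep := esc_step hη P.hη1 (P.γpos (k+1)) (P.γhalf (k+1) (by omega)) hY0 hκpos hUu huκ hγU
    have hq8 : ∀ y ∈ closedBall x0 R, Y / 8 ≤ p.q k y := by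
      intro y hy
      have h3 := (he y hy).2
      have h4 := hTY y hy
      rw [p.q_def hkn0]
      have h5 := P.l1 hkn0
      have h6 : Y / 4 ≤ p.g k y / p.I k := by
        rw [le_div_iff₀ hI0]; nlinarith
      have h7 := mul_nonneg (P.lampos k).le (P.q00 y)
      nlinarith
    have hconv := p.conv_ge (x := x) hkn0 (A := closedBall x0 R) isClosed_closedBall.measurableSet
        (v := δ ^ P.η * (Y / 8) ^ (1 - P.η)) (κ := κ0) (by positivity)
        (fun y hy => by
          rw [P.psi_eq k (p.q_nn k (P.hn0.trans hkn0) y) ((hq y hy).2 k hkN0)]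
          have := (hq y hy).1
          have := hq8 y hy
          have := Real.rpow_nonneg (P.f0 y) P.η
          gcongr) ((hN1 (k+1) (by omega)).1 x0 x hx)
    have hY8 : δ ^ P.η * (Y / 8) ^ (1 - P.η) * κ0 = κ * Y ^ (1 - P.η) := by
      rw [hκ, div_eq_mul_one_div Y 8, Real.mul_rpow hY0.le (by norm_num)]; ring
    rw [hY8] at hconv
    have hT : (1 - P.γ (k+1)) * Y + P.γ (k+1) * κ * Y ^ (1 - P.η) ≤ p.Tx (k+1) x := by
      rw [p.Tx_succ hkn0]
      have := hTY x hx
      have := P.g1 hkn0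
      have := P.γpos (k+1)
      rw [mul_assoc]
      gcongr
    have hg := P.g1 hkn0
    have hγp := P.γpos (k+1)
    refine le_trans (le_of_eq ?_) (hstep.trans (Real.rpow_le_rpow (by positivity) hT hη.le))
    rw [P.rh_succ hkn0, mul_div_assoc, ← hr, Real.mul_rpow hg.le hr0.le, hu]
    ring

/-- Step 4 -/
lemma q_lower (hI : p.ChI) (hF : p.F2) (hK : p.ChK) : ∃ n3, P.n0 ≤ n3 ∧ ∃ M > 0, (∀ n, n3 ≤ n → 0 < p.I n) ∧
    (∀ n, n3 ≤ n → ∀ x, -(M * P.rh n * P.q0 x) ≤ p.g n x) ∧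
    (∀ n, n3 ≤ n → ∀ x, P.lam n / 2 * P.q0 x ≤ p.q n x) := by
  obtain ⟨n1, hn1, M, hM, x0, R, hR, δ, hδ, hIpos, hgM, hBl⟩ := p.good_start hI hF
  obtain ⟨κ, hκ, s, hs, N1, hN1, hTg, hesc⟩ := p.esc2 hK hR hδ hn1 hBl
  have hη := P.hη
  set v := (κ / 2) ^ (1 / P.η) with hv
  have hv0 : 0 < v := by positivity
  set θ := ((1:ℝ) / 2) ^ (1 / s) with hθ
  have hθ0 : 0 < θ := by positivity
  have hθs : θ ^ s = 1/2 := by rw [hθ, ← Real.rpow_mul (by norm_num), one_div_mul_cancel hs.ne', Real.rpow_one]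
  set V := v / 2 * (volume : Measure (EV d)).real (closedBall x0 R) with hV
  have hV0 : 0 < V := by
    have : 0 < (volume : Measure (EV d)).real (closedBall x0 R) :=
      ENNReal.toReal_pos (measure_closedBall_pos volume x0 hR).ne' measure_closedBall_lt_top.ne
    positivity
  have main : ∀ᶠ n in atTop, 2 * M * P.rh n ≤ P.lam n * p.I n := by
    filter_upwards [eventually_ge_atTop N1, P.ev_rh_lam M (e := 1) one_pos, P.ev_rh_lam (2 * M) (e := θ) hθ0,
      P.ev_rh 1 (e := θ * P.rh N1) (mul_pos hθ0 (P.rh_pos _)), P.ev_rh_lam (2 * M) (e := V / 2) (by positivity),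
      P.ev_rh M (e := V / 4) (by positivity)] with n h1 h2 h3 h4 h5 h6
    by_contra hcon
    push Not at hcon
    have hl := P.lampos n
    have hrn := P.rh_pos n
    have hn0 : P.n0 ≤ N1 := hn1.trans hN1
    have hex : ∃ k, N1 ≤ k ∧ M * P.rh k ≤ P.lam n := ⟨n, h1, by linarith⟩
    classical
    set k := Nat.find hex with hk
    obtain ⟨hk1, hk2⟩ : N1 ≤ k ∧ M * P.rh k ≤ P.lam n := Nat.find_spec hex
    have hkn : k ≤ n := Nat.find_min' hex ⟨h1, by linarith⟩
    have hwin : ∀ j, k ≤ j → j < n → 0 < p.I j ∧ p.I j ≤ 2 := by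
      intro j hj hjn
      have hj1 : n1 ≤ j := hN1.trans (hk1.trans hj)
      refine ⟨hIpos j hj1, ?_⟩
      have h7 := p.I_rh (hn1.trans hj1) hjn.le
      have h8 := P.rh_anti (hn0.trans hk1) hj
      have hrj := P.rh_pos j
      rw [div_mul_eq_mul_div, div_le_iff₀ hrj] at h7
      -- rh n * I j ≤ I n * rh j
      by_contra hc
      push Not at hc
      have h9 : P.lam n * (P.rh n * p.I j) ≤ P.lam n * (p.I n * P.rh j) := mul_le_mul_of_nonneg_left h7 hl.le
      have h10 : P.lam n * p.I n * P.rh j ≤ 2 * M * P.rh n * P.rh j := mul_le_mul_of_nonneg_right hcon.le hrj.le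
      have h11 : M * P.rh j ≤ P.lam n := le_trans (mul_le_mul_of_nonneg_left h8 hM.le) hk2
      have h12 : P.rh n * (M * P.rh j) ≤ P.rh n * P.lam n := mul_le_mul_of_nonneg_left h11 hrn.le
      have h13 : P.lam n * P.rh n * 2 < P.lam n * P.rh n * p.I j := mul_lt_mul_of_pos_left hc (by positivity)
      nlinarith
    have hratio : P.rh n / P.rh k ≤ θ := by
      rw [div_le_iff₀ (P.rh_pos k)]
      by_cases hkN : k = N1
      · rw [hkN]; linarith
      · have h7 : ¬ (N1 ≤ k - 1 ∧ M * P.rh (k-1) ≤ P.lam n) := Nat.find_min hex (by omega)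
        have h8 : P.lam n < M * P.rh (k-1) := by
          by_contra h; exact h7 ⟨by omega, by linarith⟩
        have h9 := P.rh_succ (n := k - 1) (by omega)
        rw [show k - 1 + 1 = k by omega] at h9
        have h10 := P.γhalf k (by omega)
        have h11 := P.rh_pos (k-1)
        have h12 : P.lam n ≤ 2 * M * P.rh k := by
          rw [h9]
          nlinarith [mul_pos hM h11]
        have h13 : 2 * M * P.rh n ≤ θ * (2 * M * P.rh k) := h3.trans (mul_le_mul_of_nonneg_left h12 hθ0.le)
        have : 2 * M * P.rh n ≤ 2 * M * (θ * P.rh k) := by linarith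
        exact le_of_mul_le_mul_left this (by positivity)
    have hTn : ∀ x ∈ closedBall x0 R, v / 2 ≤ p.g n x := by
      intro x hx
      have h7 := hesc k hk1 n hkn hwin x hx
      have h8 : (P.rh n / P.rh k) ^ s ≤ 1/2 := by
        rw [← hθs]
        exact Real.rpow_le_rpow (div_pos hrn (P.rh_pos _)).le hratio hs.le
      have h9 : κ / 2 ≤ p.Tx n x ^ P.η := by nlinarith
      have h10 := Real.rpow_le_rpow (by positivity) h9 (z := 1 / P.η) (by positivity)
      rw [← Real.rpow_mul (p.Tx_nn _ _), mul_one_div_cancel hη.ne', Real.rpow_one] at h10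
      have := hTg n h1 x hx
      linarith
    have hnn1 : n1 ≤ n := hN1.trans h1
    have hInt0 : Integrable (fun x => p.g n x + M * P.rh n * P.q0 x) := (p.g_int n).add (P.q0Int.const_mul _)
    have h7 : V ≤ p.I n + M * P.rh n := by
      calc V = ∫ x in closedBall x0 R, v / 2 := by
            rw [setIntegral_const, smul_eq_mul, mul_comm]
        _ ≤ ∫ x in closedBall x0 R, (p.g n x + M * P.rh n * P.q0 x) := by
            refine setIntegral_mono_on (integrableOn_const measure_closedBall_lt_top.ne) hInt0.integrableOn isClosed_closedBall.measurableSet fun x hx => ?_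
            have := hTn x hx
            have := P.q00 x
            have : 0 ≤ M * P.rh n * P.q0 x := by positivity
            linarith
        _ ≤ ∫ x, (p.g n x + M * P.rh n * P.q0 x) := setIntegral_le_integral hInt0
            (Eventually.of_forall fun x => by have := hgM n hnn1 x; simp only [Pi.zero_apply]; linarith)
        _ = _ := by
            rw [integral_add (p.g_int n) (P.q0Int.const_mul _), integral_const_mul, P.q0int1, mul_one]; rfl
    have h8 : P.lam n * p.I n < V / 2 * P.lam n := lt_of_lt_of_le hcon h5
    have h9 : p.I n < V / 2 := by
      by_contra h
      push Not at h
      nlinarith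
    linarith
  obtain ⟨n3, hn3⟩ := eventually_atTop.1 (main.and (eventually_ge_atTop n1))
  refine ⟨n3, hn1.trans (hn3 n3 le_rfl).2, M, hM, fun n hn => hIpos n (hn3 n hn).2, fun n hn => hgM n (hn3 n hn).2, fun n hn x => ?_⟩
  obtain ⟨h1, h2⟩ := hn3 n hn
  have h0 := hn1.trans h2
  have hIp := hIpos n h2
  rw [p.q_def h0]
  have h3 := hgM n h2 x
  have hq0 := P.q00 x
  have hl := P.lampos n
  have h4 : -(P.lam n / 2 * P.q0 x) ≤ p.g n x / p.I n := by
    rw [le_div_iff₀ hIp]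
    nlinarith [mul_le_mul_of_nonneg_right h1 hq0]
  have h5 := P.l1 h0
  have h6 : 0 ≤ P.lam n / 2 * P.q0 x := by positivity
  have h7 : (1 - P.lam n) * -(P.lam n / 2 * P.q0 x) ≤ (1 - P.lam n) * (p.g n x / p.I n) := mul_le_mul_of_nonneg_left h4 (by linarith)
  nlinarith [mul_nonneg hl.le h6]

end Pth


lemma fix_lower {η F : ℝ} (hη : 0 < η) (LB : ℝ → Prop) (hex : ∃ v > 0, LB v)
    (hmono : ∀ v v', LB v → v' ≤ v → LB v')
    (hstep : ∀ a t v, 0 < a → a < F → 0 < t → t < 1 → 0 < v → LB v → LB (t * a ^ η * v ^ (1 - η)))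
    {x : ℝ} (hx : x < F) : LB x := by
  by_contra hcon
  obtain ⟨v0, hv0, hLv0⟩ := hex
  have hb : ∀ v, LB v → v < x := fun v hv => by
    by_contra h; push Not at h; exact hcon (hmono v x hv h)
  set S := {v : ℝ | 0 < v ∧ LB v} with hS
  have hbdd : BddAbove S := ⟨x, fun v hv => (hb v hv.2).le⟩
  have hne : S.Nonempty := ⟨v0, hv0, hLv0⟩
  set V := sSup S
  have hV0 : 0 < V := lt_of_lt_of_le hv0 (le_csSup hbdd ⟨hv0, hLv0⟩)
  have hVx : V ≤ x := csSup_le hne fun v hv => (hb v hv.2).le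
  set a := (x + F) / 2 with ha
  have haV : V < a := by rw [ha]; linarith
  have haF : a < F := by rw [ha]; linarith
  have ha0 : 0 < a := hV0.trans haV
  set s := (a / V) ^ η with hs
  have hs1 : 1 < s := Real.one_lt_rpow ((one_lt_div hV0).2 haV) hη
  have hs0 : 0 < s := by linarith
  set t := (1 + 1 / s) / 2 with ht
  have h1s : 1 / s < 1 := by rw [div_lt_one hs0]; exact hs1
  have h1s0 : 0 < 1 / s := by positivity
  have hts : 1 < t * s := by
    have : t * s = (s + 1) / 2 := by rw [ht]; field_simp
    rw [this]; linarith
  obtain ⟨v, hv, hvV⟩ := exists_lt_of_lt_csSup hne (show V / (t * s) < V by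
    rw [div_lt_iff₀ (by linarith)]; nlinarith)
  have hvV' : v ≤ V := le_csSup hbdd hv
  have h1 := hstep a t v ha0 haF (by rw [ht]; linarith) (by rw [ht]; linarith) hv.1 hv.2
  have h2 : t * s * v ≤ t * a ^ η * v ^ (1 - η) := by
    rw [Real.rpow_sub hv.1, Real.rpow_one]
    have h3 : s ≤ a ^ η / v ^ η := by
      rw [hs, ← Real.div_rpow ha0.le hv.1.le]
      have := hv.1
      gcongr
    have h4 : 0 < t := by rw [ht]; linarith
    calc t * s * v ≤ t * (a ^ η / v ^ η) * v := by have := hv.1.le; gcongr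
      _ = _ := by ring
  have h3 : V < t * s * v := by rwa [div_lt_iff₀ (by linarith), mul_comm] at hvV
  have h4 : t * a ^ η * v ^ (1 - η) ≤ V := le_csSup hbdd ⟨by linarith, h1⟩
  linarith

lemma fix_upper {η F : ℝ} (hη : 0 < η) (hF : 0 ≤ F) (UB : ℝ → Prop) (hex : ∃ v > 0, UB v)
    (hmono : ∀ v v', UB v → v ≤ v' → UB v')
    (hstep : ∀ a t v, 0 < a → F < a → 1 < t → 0 < v → UB v → UB (t * a ^ η * v ^ (1 - η)))
    {x : ℝ} (hx : F < x) : UB x := by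
  by_contra hcon
  obtain ⟨v0, hv0, hLv0⟩ := hex
  have hb : ∀ v, UB v → x < v := fun v hv => by
    by_contra h; push Not at h; exact hcon (hmono v x hv h)
  set S := {v : ℝ | 0 < v ∧ UB v} with hS
  have hbdd : BddBelow S := ⟨x, fun v hv => (hb v hv.2).le⟩
  have hne : S.Nonempty := ⟨v0, hv0, hLv0⟩
  set V := sInf S
  have hVx : x ≤ V := le_csInf hne fun v hv => (hb v hv.2).le
  set a := (x + F) / 2 with ha
  have haV : a < V := by rw [ha]; linarith
  have haF : F < a := by rw [ha]; linarith
  have ha0 : 0 < a := by linarith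
  have hV0 : 0 < V := by linarith
  set s := (V / a) ^ η with hs
  have hs1 : 1 < s := Real.one_lt_rpow ((one_lt_div ha0).2 haV) hη
  have hs0 : 0 < s := by linarith
  set t := 2 * s / (1 + s) with ht
  have ht1 : 1 < t := by rw [ht, one_lt_div (by linarith)]; linarith
  have hts : t / s = 2 / (1 + s) := by rw [ht]; field_simp
  obtain ⟨v, hv, hvV⟩ := exists_lt_of_csInf_lt hne (show V < V * ((1 + s) / 2) by nlinarith)
  have hvV' : V ≤ v := csInf_le hbdd hv
  have h1 := hstep a t v ha0 haF ht1 hv.1 hv.2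
  have h2 : t * a ^ η * v ^ (1 - η) ≤ t / s * v := by
    rw [Real.rpow_sub hv.1, Real.rpow_one]
    have h3 : s ≤ v ^ η / a ^ η := by
      rw [hs, ← Real.div_rpow hv.1.le ha0.le]
      gcongr
    have h5 : a ^ η / v ^ η ≤ 1 / s := by
      rw [le_div_iff₀ hs0]
      have e1 : 0 < a ^ η := by positivity
      have e2 : 0 < v ^ η := Real.rpow_pos_of_pos hv.1 _
      calc _ ≤ a ^ η / v ^ η * (v ^ η / a ^ η) := by gcongr
        _ = 1 := by field_simp
    have h4 : 0 < t := by linarith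
    calc t * a ^ η * (v / v ^ η) = t * (a ^ η / v ^ η) * v := by ring
      _ ≤ t * (1 / s) * v := by have := hv.1.le; gcongr
      _ = _ := by ring
  have h3 : t / s * v < V := by
    rw [hts, div_mul_eq_mul_div, div_lt_iff₀ (by linarith)]
    linarith
  have h5 : 0 < t * a ^ η * v ^ (1 - η) := by
    have := Real.rpow_pos_of_pos hv.1 (1 - η)
    have := Real.rpow_pos_of_pos ha0 η
    have : 0 < t := by linarith
    positivity
  have h4 : V ≤ t * a ^ η * v ^ (1 - η) := csInf_le hbdd ⟨h5, h1⟩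
  linarith

/-- Paths with all the deterministic good properties -/
structure Gd {d : ℕ} {P : Par d} (p : Pth P) where
  n3 : ℕ
  M : ℝ
  hn3 : P.n0 ≤ n3
  hM : 0 < M
  Ipos : ∀ n, n3 ≤ n → 0 < p.I n
  gM : ∀ n, n3 ≤ n → ∀ x, -(M * P.rh n * P.q0 x) ≤ p.g n x
  qlow : ∀ n, n3 ≤ n → ∀ x, P.lam n / 2 * P.q0 x ≤ p.q n x
  hI : p.ChI
  hK : p.ChK

lemma Pth.exists_Gd {d : ℕ} {P : Par d} (p : Pth P) (hI : p.ChI) (hF : p.F2) (hK : p.ChK) : Nonempty (Gd p) := by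
  obtain ⟨n3, h1, M, h2, h3, h4, h5⟩ := p.q_lower hI hF hK
  exact ⟨⟨n3, M, h1, h2, h3, h4, h5, hI, hK⟩⟩

namespace Gd
variable {d : ℕ} {P : Par d} {p : Pth P} (G : Gd p)
include G

lemma tw_w {n : ℕ} (hn : G.n3 ≤ n) : P.tw n (p.w (n+1)) = p.w (n+1) ^ P.η := by
  refine P.tw_eq n ?_
  rw [p.hw]
  exact P.ratio_le_tr n (G.qlow n hn _)

lemma psi {n : ℕ} (hn : G.n3 ≤ n) (y : EV d) : P.psi n (p.q n) y = P.f y ^ P.η * p.q n y ^ (1 - P.η) :=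
  P.psi_eq n (p.q_nn n (P.hn0.trans (G.hn3.trans hn)) y) (G.qlow n hn y)

lemma g_S : ∃ D, 0 ≤ D ∧ ∀ n, G.n3 ≤ n → ∀ x, |p.g n x - p.Sx n x| ≤ D * P.rh n := by
  obtain ⟨C, hC⟩ := p.g_bdd G.n3
  have hC0 : 0 ≤ C := (abs_nonneg _).trans (hC 0)
  have hB := P.Bpos G.n3
  have hr := P.rh_pos G.n3
  refine ⟨(C + P.B G.n3) / P.rh G.n3, by positivity, fun n hn x => ?_⟩
  have h := rec_eq P.γnn P.γlt1 (u := fun n => p.g n x - p.Sx n x) G.hn3 (fun n hn => by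
    rw [p.hg, p.Sx_succ (G.hn3.trans hn), G.tw_w hn]; ring) n hn
  rw [h, abs_mul, abs_of_pos (div_pos (P.rhopos n) (P.rhopos _))]
  have h1 : |p.g G.n3 x - p.Sx G.n3 x| ≤ C + P.B G.n3 := by
    refine (abs_sub _ _).trans (add_le_add (hC x) ?_)
    rw [abs_of_nonneg (p.Sx_nn _ _)]
    exact p.S_le_B (P.adm_kx x) _
  calc _ ≤ P.rh n / P.rh G.n3 * (C + P.B G.n3) := mul_le_mul_of_nonneg_left h1 (div_pos (P.rh_pos n) hr).le
    _ = _ := by ring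

lemma I_S : ∃ D, 0 ≤ D ∧ ∀ n, G.n3 ≤ n → |p.I n - p.S1 n| ≤ D * P.rh n := by
  have hr := P.rh_pos G.n3
  refine ⟨|p.I G.n3 - p.S1 G.n3| / P.rh G.n3, by positivity, fun n hn => ?_⟩
  have h := rec_eq P.γnn P.γlt1 (u := fun n => p.I n - p.S1 n) G.hn3 (fun n hn => by
    rw [p.I_rec, p.S1_succ (G.hn3.trans hn), G.tw_w hn]; ring) n hn
  rw [h, abs_mul, abs_of_pos (div_pos (P.rhopos n) (P.rhopos _))]
  exact le_of_eq (by unfold Par.rh; ring)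

lemma ev_lamη {e : ℝ} (he : 0 < e) : ∀ᶠ n in atTop, P.lam n ^ (1 - P.η) ≤ e := P.lamη0.eventually (ge_mem_nhds he)

lemma g_le {ε : ℝ} (hε : 0 < ε) (m : ℕ) : ∀ᶠ n : ℕ in atTop, ∀ x, ‖x‖ ≤ (n:ℝ) ^ m → p.g n x ≤ (1 + ε) * p.Tx n x + ε := by
  obtain ⟨D, hD, hgS⟩ := G.g_S
  filter_upwards [G.hK ε hε 1 (Or.inl rfl) m, P.ev_rh D (e := ε/2) (by positivity), G.ev_lamη (e := 1/2) (by norm_num),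
    eventually_ge_atTop G.n3] with n h1 h2 h3 h4 x hx
  have h5 := h1 x hx
  change 1 * p.Sx n x - (1 + ε) * p.Tx n x ≤ _ at h5
  have h6 := (abs_le.1 (hgS n h4 x)).2
  nlinarith

lemma g_ge {ε : ℝ} (hε : 0 < ε) (R : ℝ) : ∀ᶠ n : ℕ in atTop, ∀ x, ‖x‖ ≤ R → (1 - ε) * p.Tx n x - ε ≤ p.g n x := by
  filter_upwards [p.dev_ge G.hK hε R, G.ev_lamη (e := 1) (by norm_num)] with n h1 h2 x hx
  have := h1 x hx
  nlinarith

lemma T1_le (n : ℕ) : p.T1 n ≤ 1 := by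
  refine avg_le_const P.γnn P.γlt1 zero_le_one n fun k hk _ => ?_
  simp only [mul_one]
  have h1 := P.hn0.trans hk
  exact P.psi_int_le_one k (p.q_meas h1) (p.q_nn k h1) (p.q_int k) (p.q_int1 k)

lemma I_le {ε : ℝ} (hε : 0 < ε) : ∀ᶠ n in atTop, p.I n ≤ 1 + ε := by
  obtain ⟨D, hD, hgS⟩ := G.I_S
  filter_upwards [G.hI (ε/4) (by positivity) 1 (Or.inl rfl), P.ev_rh D (e := ε/4) (by positivity), G.ev_lamη (e := 1) (by norm_num),
    eventually_ge_atTop G.n3] with n h1 h2 h3 h4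
  change 1 * p.S1 n - (1 + ε/4) * p.T1 n ≤ _ at h1
  have h6 := (abs_le.1 (hgS n h4)).2
  have h7 := G.T1_le n
  nlinarith

lemma q_ge {t v : ℝ} (ht : t < 1) (ht0 : 0 < t) (hv : 0 < v) (R : ℝ) : ∀ᶠ n in atTop, ∀ x, ‖x‖ ≤ R → v ≤ p.Tx n x → t * v ≤ p.q n x := by
  set ε := (1 - t) * v / (3 * v + 1) with hε
  have h1t : 0 < 1 - t := by linarith
  have hε0 : 0 < ε := by positivity
  have hε' : ε * (3 * v + 1) = (1 - t) * v := by rw [hε]; field_simp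
  have hε1 : ε < 1 := by nlinarith
  filter_upwards [G.g_ge hε0 R, G.I_le hε0, P.lam0.eventually (ge_mem_nhds hε0), eventually_ge_atTop G.n3] with n h1 h2 h3 h4 x hx hvx
  have h5 := h1 x hx
  rw [p.q_def (G.hn3.trans h4)]
  have hIp := G.Ipos n h4
  have hl := mul_nonneg (P.lampos n).le (P.q00 x)
  have h6 : (1 - ε) * v - ε ≤ p.g n x := by nlinarith
  have h60 : 0 ≤ (1 - ε) * v - ε := by nlinarith
  have h7 : ((1 - ε) * v - ε) / (1 + ε) ≤ p.g n x / p.I n := by gcongr; exact h60.trans h6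
  have h70 : 0 ≤ ((1 - ε) * v - ε) / (1 + ε) := by positivity
  have h8 : (1 - ε) * (((1 - ε) * v - ε) / (1 + ε)) ≤ (1 - P.lam n) * (p.g n x / p.I n) := by
    refine mul_le_mul (by linarith) h7 h70 (by linarith)
  have h9 : t * v ≤ (1 - ε) * (((1 - ε) * v - ε) / (1 + ε)) := by
    rw [← mul_div_assoc, le_div_iff₀ (by linarith)]
    nlinarith [mul_pos hε0 hv, mul_pos hε0 hε0, mul_pos (mul_pos hε0 hε0) hv]
  linarith

/-- eventual lower bound near a point -/
lemma LB_start {x0 : EV d} (hx0 : 0 < P.f x0) : ∃ v > 0, ∃ r > 0, ∀ᶠ n in atTop, ∀ x ∈ ball x0 r, v ≤ p.Tx n x := by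
  have : ∀ᶠ y in 𝓝 x0, P.f x0 / 2 < P.f y := P.fcont.continuousAt.eventually (lt_mem_nhds (by linarith))
  obtain ⟨R, hR, hf2⟩ := Metric.nhds_basis_closedBall.eventually_iff.1 this
  obtain ⟨κ, hκ, s, hs, N1, hN1, hTg, hesc⟩ := p.esc2 G.hK hR (half_pos hx0) G.hn3
    (fun x hx => ⟨(hf2 hx).le, fun n hn => G.qlow n hn x⟩)
  obtain ⟨N2, hN2⟩ := eventually_atTop.1 (G.I_le one_pos)
  set k0 := max N1 N2 with hk0
  have hη := P.hη
  refine ⟨(κ / 2) ^ (1 / P.η), by positivity, R, hR, ?_⟩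
  have hrk := P.rh_pos k0
  filter_upwards [eventually_ge_atTop k0, P.ev_rh 1 (e := ((1:ℝ)/2) ^ (1 / s) * P.rh k0) (by positivity)] with n h1 h2 x hx
  have h3 := hesc k0 (le_max_left _ _) n h1 (fun k hk _ => ⟨G.Ipos k (hN1.trans ((le_max_left _ _).trans hk)), by
    have := hN2 k ((le_max_right _ _).trans hk); linarith⟩) x (ball_subset_closedBall hx)
  have h4 : (P.rh n / P.rh k0) ^ s ≤ 1/2 := by
    have h5 : P.rh n / P.rh k0 ≤ ((1:ℝ)/2) ^ (1 / s) := by rw [div_le_iff₀ hrk]; linarith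
    have h6 := Real.rpow_le_rpow (div_pos (P.rh_pos n) hrk).le h5 hs.le
    rwa [← Real.rpow_mul (by norm_num), one_div_mul_cancel hs.ne', Real.rpow_one] at h6
  have h9 : κ / 2 ≤ p.Tx n x ^ P.η := by nlinarith
  have h10 := Real.rpow_le_rpow (by positivity) h9 (z := 1 / P.η) (by positivity)
  rwa [← Real.rpow_mul (p.Tx_nn _ _), mul_one_div_cancel hη.ne', Real.rpow_one] at h10

omit G in
lemma norm_le_of_ball {x0 x : EV d} {r : ℝ} (hx : x ∈ ball x0 r) : ‖x‖ ≤ ‖x0‖ + r := by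
  have := norm_le_norm_add_norm_sub' x x0
  rw [mem_ball, dist_eq_norm] at hx
  linarith

lemma LB_step {x0 : EV d} {a t v : ℝ} (ha : 0 < a) (haf : a < P.f x0) (ht0 : 0 < t) (ht : t < 1) (hv : 0 < v)
    (h : ∃ r > 0, ∀ᶠ n in atTop, ∀ x ∈ ball x0 r, v ≤ p.Tx n x) :
    ∃ r > 0, ∀ᶠ n in atTop, ∀ x ∈ ball x0 r, t * a ^ P.η * v ^ (1 - P.η) ≤ p.Tx n x := by
  obtain ⟨r1, hr1, h1⟩ := h
  have : ∀ᶠ y in 𝓝 x0, a < P.f y := P.fcont.continuousAt.eventually (lt_mem_nhds haf)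
  obtain ⟨r2, hr2, hf2⟩ := Metric.nhds_basis_ball.eventually_iff.1 this
  set r := min r1 r2 with hr
  have hr0 : 0 < r := lt_min hr1 hr2
  have hη := P.hη
  have hη1 := P.η1
  set s := (1 - t) / 3 with hs
  have hs0 : 0 < s := by rw [hs]; linarith
  have hs1 : s < 1/3 := by rw [hs]; linarith
  set t2 := 1 - s with ht2
  have ht20 : 0 < t2 := by rw [ht2]; linarith
  have ht21 : t2 < 1 := by rw [ht2]; linarith
  have ht3 : t ≤ t2 * t2 * t2 := by
    have : t = 1 - 3 * s := by rw [hs]; ring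
    rw [ht2]; nlinarith [mul_pos hs0 hs0]
  have hav : 0 < a ^ P.η * v ^ (1 - P.η) := by positivity
  obtain ⟨N, hN⟩ := eventually_atTop.1 (h1.and ((G.q_ge ht21 ht20 hv (‖x0‖ + r)).and ((P.kb_mass (half_pos hr0) hs0).and (eventually_ge_atTop G.n3))))
  have hNn0 : P.n0 ≤ N := G.hn3.trans (hN N le_rfl).2.2.2
  refine ⟨r / 2, half_pos hr0, ?_⟩
  filter_upwards [eventually_ge_atTop N, P.ev_rh (1 / P.rh N) (e := s) hs0] with n hn hrn x hx
  set C := t2 * (a ^ P.η * v ^ (1 - P.η)) * t2 with hC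
  have hC0 : 0 < C := by positivity
  have hrec := rec_ge P.γnn P.γlt1 (u := fun n => p.Tx n x) (C := C) hNn0 (fun k hk => by
    obtain ⟨e1, e2, -, e4⟩ := hN k hk
    have e3 := (hN (k+1) (by omega)).2.2.1 x
    have hk0 := hNn0.trans hk
    rw [p.Tx_succ hk0]
    have hγ := P.γpos (k+1)
    gcongr
    refine p.conv_ge hk0 (A := ball x (r/2)) measurableSet_ball (by positivity) (fun y hy => ?_) (by rw [ht2]; exact e3)
    have hy' : y ∈ ball x0 r := by
      rw [mem_ball] at hx hy ⊢
      have := dist_triangle y x x0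
      linarith
    have e5 := e2 y (norm_le_of_ball hy') (e1 y (ball_subset_ball (min_le_left _ _) hy'))
    rw [G.psi e4]
    have e6 := (hf2 (ball_subset_ball (min_le_right _ _) hy')).le
    have e7 : t2 * v ^ (1 - P.η) ≤ (t2 * v) ^ (1 - P.η) := by
      rw [Real.mul_rpow ht20.le hv.le]
      have := Real.rpow_le_rpow_of_exponent_ge ht20 ht21.le (y := 1) (z := 1 - P.η) (by linarith)
      rw [Real.rpow_one] at this
      gcongr
    have := Real.rpow_nonneg (P.f0 y) P.η
    calc t2 * (a ^ P.η * v ^ (1 - P.η)) = a ^ P.η * (t2 * v ^ (1 - P.η)) := by ring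
      _ ≤ a ^ P.η * (t2 * v) ^ (1 - P.η) := by gcongr
      _ ≤ _ := by gcongr) n hn
  have hTN := p.Tx_nn N x
  change C + P.rh n / P.rh N * (p.Tx N x - C) ≤ p.Tx n x at hrec
  have hq0 : 0 < P.rh n / P.rh N := div_pos (P.rh_pos _) (P.rh_pos _)
  rw [one_div_mul_eq_div] at hrn
  have hfin : C * t2 ≤ p.Tx n x := by
    rw [ht2]
    nlinarith [mul_nonneg hq0.le hTN, mul_le_mul_of_nonneg_right hrn hC0.le]
  refine le_trans ?_ hfin
  calc t * a ^ P.η * v ^ (1 - P.η) = t * (a ^ P.η * v ^ (1 - P.η)) := by ring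
    _ ≤ t2 * t2 * t2 * (a ^ P.η * v ^ (1 - P.η)) := by gcongr
    _ = _ := by rw [hC]; ring

lemma LB (x0 : EV d) {v : ℝ} (hv : v < P.f x0) : ∃ r > 0, ∀ᶠ n in atTop, ∀ x ∈ ball x0 r, v ≤ p.Tx n x := by
  by_cases hf : 0 < P.f x0
  · refine fix_lower (F := P.f x0) P.hη (fun v => ∃ r > 0, ∀ᶠ n in atTop, ∀ x ∈ ball x0 r, v ≤ p.Tx n x)
      (G.LB_start hf) ?_ (fun a t v h1 h2 h3 h4 h5 h6 => G.LB_step h1 h2 h3 h4 h5 h6) hv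
    rintro v v' ⟨r, hr, h⟩ hvv
    exact ⟨r, hr, h.mono fun n hn x hx => hvv.trans (hn x hx)⟩
  · exact ⟨1, one_pos, Eventually.of_forall fun n x _ => le_trans (by linarith) (p.Tx_nn n x)⟩

/-- local lower bound for g -/
lemma g_lower (x0 : EV d) {v : ℝ} (hv : v < P.f x0) : ∃ r > 0, ∀ᶠ n in atTop, ∀ x ∈ ball x0 r, v ≤ p.g n x := by
  set e := P.f x0 - v with he
  have he0 : 0 < e := by rw [he]; linarith
  obtain ⟨r, hr, h⟩ := G.LB x0 (v := P.f x0 - e/2) (by linarith)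
  have hf := P.f0 x0
  set ε := min (1/2) (e / 4 / (P.f x0 + 1)) with hε
  have hε0 : 0 < ε := by positivity
  refine ⟨r, hr, ?_⟩
  filter_upwards [h, G.g_ge hε0 (‖x0‖ + r)] with n h1 h2 x hx
  have h3 := h1 x hx
  have h4 := h2 x (norm_le_of_ball hx)
  have h5 : ε ≤ 1/2 := min_le_left _ _
  have h6 : ε * (P.f x0 + 1) ≤ e / 4 := by
    have : ε ≤ e / 4 / (P.f x0 + 1) := min_le_right _ _
    rwa [le_div_iff₀ (by linarith)] at this
  nlinarith [mul_le_mul_of_nonneg_left h3 (by linarith : 0 ≤ 1 - ε)]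

end Gd


namespace Pth
variable {d : ℕ} {P : Par d} (p : Pth P)

lemma psi_int1 {k : ℕ} (hk : P.n0 ≤ k) : ∫ y, P.psi k (p.q k) y ≤ 1 := by
  have h1 := P.hn0.trans hk
  exact P.psi_int_le_one k (p.q_meas h1) (p.q_nn k h1) (p.q_int k) (p.q_int1 k)

lemma conv_le {k : ℕ} (hk : P.n0 ≤ k) {x : EV d} {δ v : ℝ} (hδ : 0 < δ) (hv : 0 ≤ v)
    (h : ∀ y ∈ ball x δ, P.psi k (p.q k) y ≤ v) :
    ∫ y, P.psi k (p.q k) y * kb P.K (P.b (k+1)) (x - y) ≤ v + P.CK * δ ^ (-((d:ℝ) + P.rK)) * P.b (k+1) ^ P.rK := by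
  have hb := P.bpos (k+1)
  set T := P.CK * δ ^ (-((d:ℝ) + P.rK)) * P.b (k+1) ^ P.rK with hT
  have hT0 : 0 ≤ T := by have := P.hCK; positivity
  calc _ ≤ ∫ y, (v * kb P.K (P.b (k+1)) (x - y) + T * P.psi k (p.q k) y) := by
        refine integral_mono (p.psikx_int hk x) (((P.kb_integrable_left hb x).const_mul v).add ((p.psi_int' hk).const_mul T)) fun y => ?_
        have h1 := P.kb_nonneg hb (x - y)
        have h2 := p.psi_nn hk y
        simp only
        by_cases hy : y ∈ ball x δ
        · nlinarith [mul_le_mul_of_nonneg_right (h y hy) h1, mul_nonneg hT0 h2]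
        · have h3 : δ ≤ ‖x - y‖ := by
            rw [mem_ball, dist_comm, dist_eq_norm] at hy; linarith
          have h4 := P.kb_tail hb hδ (x - y) h3
          nlinarith [mul_le_mul_of_nonneg_left h4 h2, mul_nonneg hv h1]
    _ = v + T * ∫ y, P.psi k (p.q k) y := by
        rw [integral_add ((P.kb_integrable_left hb x).const_mul v) ((p.psi_int' hk).const_mul T), integral_const_mul, integral_const_mul,
          P.kb_int_left hb, mul_one]
    _ ≤ v + T := by have := p.psi_int1 hk; nlinarith

lemma Tx_bdd (n : ℕ) : ∃ C, 0 ≤ C ∧ ∀ x, p.Tx n x ≤ C := by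
  have hb := P.bpos n
  have hKm := P.Kmpos
  refine ⟨P.Km / P.b n ^ d, by positivity, fun x => ?_⟩
  refine avg_le_const P.γnn P.γlt1 (by positivity) n fun k hk hkn => ?_
  calc _ ≤ ∫ y, P.psi k (p.q k) y * (P.Km / P.b n ^ d) := by
        refine integral_mono (p.psikx_int hk x) ((p.psi_int' hk).mul_const _) fun y => ?_
        refine mul_le_mul_of_nonneg_left ?_ (p.psi_nn hk y)
        refine (P.kb_le (P.bpos _) _).trans ?_
        have := P.banti (show k + 1 ≤ n by omega)
        gcongr
    _ = (∫ y, P.psi k (p.q k) y) * (P.Km / P.b n ^ d) := integral_mul_const _ _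
    _ ≤ 1 * (P.Km / P.b n ^ d) := by have := p.psi_int1 hk; gcongr
    _ = _ := one_mul _

end Pth

namespace Gd
variable {d : ℕ} {P : Par d} {p : Pth P} (G : Gd p)
include G

lemma I_ge {ε : ℝ} (hε : 0 < ε) : ∀ᶠ n in atTop, 1 - ε ≤ p.I n := by
  set h : ℕ → EV d → ℝ := fun n x => p.g n x + G.M * P.rh n * P.q0 x with hh
  have hInt0 : ∀ n, Integrable (h n) := fun n => (p.g_int n).add (P.q0Int.const_mul _)
  have hlim : ∀ x, ENNReal.ofReal (P.f x) ≤ liminf (fun n => ENNReal.ofReal (h n x)) atTop := by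
    intro x
    refine ENNReal.le_of_forall_pos_le_add fun e he _ => ?_
    have he' : (0:ℝ) < e := by exact_mod_cast he
    have h1 : ENNReal.ofReal (P.f x) ≤ ENNReal.ofReal (P.f x - e) + e := by
      calc ENNReal.ofReal (P.f x) = ENNReal.ofReal ((P.f x - e) + e) := by ring_nf
        _ ≤ ENNReal.ofReal (P.f x - e) + ENNReal.ofReal e := ENNReal.ofReal_add_le
        _ = _ := by rw [ENNReal.ofReal_coe_nnreal]
    refine h1.trans (add_le_add_left ?_ _)
    refine le_liminf_of_le (by isBoundedDefault) ?_
    obtain ⟨r, hr, hev⟩ := G.g_lower x (v := P.f x - e) (by linarith)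
    filter_upwards [hev] with n hn
    refine ENNReal.ofReal_le_ofReal ?_
    have h2 := hn x (mem_ball_self hr)
    have h3 := mul_nonneg (mul_pos G.hM (P.rh_pos n)).le (P.q00 x)
    simp only [hh]
    linarith
  have hfatou : (1:ℝ≥0∞) ≤ liminf (fun n => ∫⁻ x, ENNReal.ofReal (h n x)) atTop := by
    calc (1:ℝ≥0∞) = ∫⁻ x, ENNReal.ofReal (P.f x) := by
          rw [← ofReal_integral_eq_lintegral_ofReal P.fInt (Eventually.of_forall P.f0), P.fint1, ENNReal.ofReal_one]
      _ ≤ ∫⁻ x, liminf (fun n => ENNReal.ofReal (h n x)) atTop := lintegral_mono hlim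
      _ ≤ _ := lintegral_liminf_le fun n => by
          have : Measurable (h n) := ((p.g_cont n).add (P.q0cont.const_mul _)).measurable
          exact this.ennreal_ofReal
  have h1 : ENNReal.ofReal (1 - ε/2) < liminf (fun n => ∫⁻ x, ENNReal.ofReal (h n x)) atTop := by
    refine lt_of_lt_of_le ?_ hfatou
    rw [← ENNReal.ofReal_one, ENNReal.ofReal_lt_ofReal_iff one_pos]
    linarith
  filter_upwards [eventually_lt_of_lt_liminf h1, P.ev_rh G.M (e := ε/2) (by positivity), eventually_ge_atTop G.n3] with n h2 h3 h4
  rw [← ofReal_integral_eq_lintegral_ofReal (hInt0 n) (Eventually.of_forall fun x => by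
    have := G.gM n h4 x
    simp only [hh, Pi.zero_apply]; linarith)] at h2
  have h5 : ∫ x, h n x = p.I n + G.M * P.rh n := by
    rw [integral_add (p.g_int n) (P.q0Int.const_mul _), integral_const_mul, P.q0int1, mul_one]; rfl
  rw [h5] at h2
  have h6 := (ENNReal.ofReal_lt_ofReal_iff'.1 h2).1
  linarith

end Gd


lemma young_c {η A ε : ℝ} (h0 : 0 < η) (h1 : η < 1) (hA : 0 ≤ A) (hε : 0 < ε) :
    ∃ C, 0 ≤ C ∧ ∀ q, 0 ≤ q → A * q ^ (1 - η) ≤ ε * q + C := by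
  set z := (A / ε) ^ (1 / η) with hz
  have hz0 : 0 ≤ z := by positivity
  have h1η : 0 < 1 - η := by linarith
  refine ⟨A * z ^ (1 - η), by positivity, fun q hq => ?_⟩
  by_cases hc : z ≤ q
  · have h2 : A / ε ≤ q ^ η := by
      have := Real.rpow_le_rpow hz0 hc h0.le
      rwa [hz, ← Real.rpow_mul (by positivity), one_div_mul_cancel h0.ne', Real.rpow_one] at this
    have h3 : A ≤ ε * q ^ η := by rwa [div_le_iff₀' hε] at h2
    have h4 : q ^ η * q ^ (1 - η) = q := by
      rw [← Real.rpow_add_of_nonneg hq h0.le h1η.le]; simp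
    have h5 : 0 ≤ A * z ^ (1 - η) := by positivity
    calc A * q ^ (1 - η) ≤ ε * q ^ η * q ^ (1 - η) := by gcongr
      _ = ε * (q ^ η * q ^ (1 - η)) := by ring
      _ = ε * q := by rw [h4]
      _ ≤ _ := by linarith
  · push Not at hc
    have : 0 ≤ ε * q := by positivity
    have h3 : A * q ^ (1 - η) ≤ A * z ^ (1 - η) := by gcongr
    linarith

namespace Gd
variable {d : ℕ} {P : Par d} {p : Pth P} (G : Gd p)

lemma Qnn : 0 ≤ P.Q := (P.q00 0).trans (P.q0bd 0)
lemma Fnn : 0 ≤ P.F := (P.f0 0).trans (P.fbd 0)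

include G

lemma q_le {t u : ℝ} (ht : 1 < t) (hu : 0 < u) (R : ℝ) : ∀ᶠ n in atTop, ∀ x, ‖x‖ ≤ R → p.Tx n x ≤ u → p.q n x ≤ t * u := by
  set ε := (t - 1) * u / (u + 2 + t * u) with hε
  have h1t : 0 < t - 1 := by linarith
  have ht0 : 0 < t := by linarith
  have hε0 : 0 < ε := by positivity
  have hε' : ε * (u + 2 + t * u) = (t - 1) * u := by rw [hε]; field_simp
  have hε1 : ε < 1 := by
    rw [hε, div_lt_one (by positivity)]; nlinarith
  have hQ := Qnn (P := P)
  have hlamQ : ∀ᶠ n in atTop, P.lam n * P.Q ≤ ε := by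
    have := P.lam0.mul_const P.Q
    rw [zero_mul] at this
    exact this.eventually (ge_mem_nhds hε0)
  filter_upwards [G.g_le hε0 1, G.I_ge hε0, hlamQ, eventually_ge_atTop G.n3, Pth.ev_norm_le R] with n h1 h2 h3 h4 h5 x hx hux
  have h6 := h1 x (hx.trans h5)
  have h0 := G.hn3.trans h4
  rw [p.q_def h0]
  have hIp := G.Ipos n h4
  have h7 : p.g n x ≤ (1 + ε) * u + ε := by nlinarith
  have h8 : p.g n x / p.I n ≤ ((1 + ε) * u + ε) / (1 - ε) := by
    have : 0 < 1 - ε := by linarith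
    gcongr
  have h80 : 0 ≤ ((1 + ε) * u + ε) / (1 - ε) := div_nonneg (by positivity) (by linarith)
  have hl1 := P.l1 h0
  have hl := P.lampos n
  have h9 : (1 - P.lam n) * (p.g n x / p.I n) ≤ ((1 + ε) * u + ε) / (1 - ε) := by
    calc _ ≤ (1 - P.lam n) * (((1 + ε) * u + ε) / (1 - ε)) := mul_le_mul_of_nonneg_left h8 (by linarith)
      _ ≤ _ := by nlinarith
  have h10 : P.lam n * P.q0 x ≤ ε := (mul_le_mul_of_nonneg_left (P.q0bd x) hl.le).trans h3
  have h11 : ((1 + ε) * u + ε) / (1 - ε) ≤ t * u - ε := by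
    rw [div_le_iff₀ (by linarith)]
    nlinarith [mul_pos hε0 hε0]
  linarith

/-- a-priori bound -/
lemma UB_start (x0 : EV d) : ∃ u > 0, ∃ r > 0, ∀ᶠ n in atTop, ∀ x ∈ ball x0 r, p.Tx n x ≤ u := by
  have hrK := P.hrK
  have hCK := P.hCK
  set m := (d:ℝ) + P.rK with hm
  have hm0 : 0 < m := by positivity
  have h2m : (0:ℝ) < 2 ^ m := by positivity
  set ε := 1 / (8 * (2:ℝ) ^ m) with hε
  have hε0 : 0 < ε := by positivity
  obtain ⟨Cε, hCε, hyoung⟩ := young_c P.hη P.hη1 (Real.rpow_nonneg (Fnn (P := P)) P.η) hε0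
  have hQ := Qnn (P := P)
  set φ : EV d → ℝ := fun x => (2 - ‖x - x0‖) ^ m with hφ
  have hqT : ∀ᶠ n in atTop, ∀ y, ‖y‖ ≤ ‖x0‖ + 2 → p.q n y ≤ 4 * p.Tx n y + (2 + P.Q) := by
    filter_upwards [G.g_le one_pos 1, G.I_ge (ε := 1/2) (by norm_num), eventually_ge_atTop G.n3, Pth.ev_norm_le (‖x0‖ + 2)] with n h1 h2 h4 h5 y hy
    have h6 := h1 y (hy.trans h5)
    have h0 := G.hn3.trans h4
    rw [p.q_def h0]
    have hT := p.Tx_nn n y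
    have h8 : p.g n y / p.I n ≤ (2 * p.Tx n y + 1) / (1/2) := by
      gcongr <;> linarith
    have hl1 := P.l1 h0
    have hl := P.lampos n
    have h9 : (1 - P.lam n) * (p.g n y / p.I n) ≤ (2 * p.Tx n y + 1) / (1/2) := by
      calc _ ≤ (1 - P.lam n) * ((2 * p.Tx n y + 1) / (1/2)) := mul_le_mul_of_nonneg_left h8 (by linarith)
        _ ≤ _ := by
          have : 0 ≤ (2 * p.Tx n y + 1) / (1/2) := by positivity
          nlinarith
    have h10 : P.lam n * P.q0 y ≤ P.Q := by
      have := P.q00 y; have := P.q0bd y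
      nlinarith
    linarith
  obtain ⟨N, hN⟩ := eventually_atTop.1 (hqT.and (eventually_ge_atTop G.n3))
  have hNn0 : P.n0 ≤ N := G.hn3.trans (hN N le_rfl).2
  obtain ⟨CT, hCT, hTN⟩ := p.Tx_bdd N
  set C5 := ε * (2 + P.Q) + Cε with hC5
  have hC50 : 0 ≤ C5 := by positivity
  set C6 := (2:ℝ) ^ m * (2 ^ m * C5) + 2 ^ m * P.CK with hC6
  have hC60 : 0 < C6 := by positivity
  set D := 2 ^ m * CT + 2 * C6 with hD
  have hD0 : 0 < D := by positivity
  have key : ∀ n, N ≤ n → ∀ x ∈ ball x0 2, φ x * p.Tx n x ≤ D := by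
    intro n hn
    induction n, hn using Nat.le_induction with
    | base =>
      intro x hx
      rw [mem_ball, dist_eq_norm] at hx
      have h1 : φ x ≤ 2 ^ m := Real.rpow_le_rpow (by linarith) (by linarith [norm_nonneg (x - x0)]) hm0.le
      have h2 : 0 ≤ φ x := Real.rpow_nonneg (by linarith) _
      calc φ x * p.Tx N x ≤ 2 ^ m * CT := mul_le_mul h1 (hTN x) (p.Tx_nn _ _) h2m.le
        _ ≤ D := by rw [hD]; linarith
    | succ k hk ih =>
      intro x hx
      have hk0 := hNn0.trans hk
      obtain ⟨hq, hk3⟩ := hN k hk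
      have ihx := ih x hx
      rw [mem_ball, dist_eq_norm] at hx
      set ρ := (2 - ‖x - x0‖) / 2 with hρ
      have hρ0 : 0 < ρ := by rw [hρ]; linarith
      have hρm : 0 < ρ ^ m := by positivity
      have hφx : φ x = 2 ^ m * ρ ^ m := by
        rw [← Real.mul_rpow (by norm_num) hρ0.le, hρ]; simp only [hφ]; ring_nf
      set v := (ε * (4 * D) + 2 ^ m * C5) / ρ ^ m with hv
      have hv0 : 0 ≤ v := by positivity
      have hball : ∀ y ∈ ball x ρ, P.psi k (p.q k) y ≤ v := by
        intro y hy
        rw [mem_ball, dist_eq_norm] at hy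
        have hyx : ‖y - x0‖ < ρ + ‖x - x0‖ := by
          have := norm_sub_le_norm_sub_add_norm_sub y x x0
          linarith
        have hy2 : ρ ≤ 2 - ‖y - x0‖ := by linarith
        have hyb : y ∈ ball x0 2 := by rw [mem_ball, dist_eq_norm]; linarith
        have hφy : ρ ^ m ≤ φ y := Real.rpow_le_rpow hρ0.le hy2 hm0.le
        have hφy2 : φ y ≤ 2 ^ m := Real.rpow_le_rpow (by linarith) (by linarith [norm_nonneg (y - x0)]) hm0.le
        have hpsi0 := p.psi_nn hk0 y
        have hqn := p.q_nn k (P.hn0.trans hk0) y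
        have h1 : P.psi k (p.q k) y ≤ ε * p.q k y + Cε := by
          refine (P.psi_le k hqn).trans (le_trans ?_ (hyoung _ hqn))
          refine mul_le_mul_of_nonneg_right ?_ (Real.rpow_nonneg hqn _)
          exact Real.rpow_le_rpow (P.f0 y) (P.fbd y) P.hη.le
        have h2 := hq y (norm_le_of_ball hyb)
        have h3 : P.psi k (p.q k) y ≤ ε * (4 * p.Tx k y) + C5 := by
          rw [hC5]; nlinarith
        rw [hv, le_div_iff₀ hρm]
        calc P.psi k (p.q k) y * ρ ^ m ≤ P.psi k (p.q k) y * φ y := by gcongr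
          _ ≤ (ε * (4 * p.Tx k y) + C5) * φ y := mul_le_mul_of_nonneg_right h3 (hρm.le.trans hφy)
          _ = ε * (4 * (φ y * p.Tx k y)) + φ y * C5 := by ring
          _ ≤ ε * (4 * D) + 2 ^ m * C5 := by
            have := ih y hyb
            gcongr
      have hconv := p.conv_le hk0 hρ0 hv0 hball
      have hb1 : P.b (k+1) ^ P.rK ≤ 1 := Real.rpow_le_one (P.bpos _).le (P.bone _ (by omega)) hrK.le
      have hconv2 : φ x * (∫ y, P.psi k (p.q k) y * kb P.K (P.b (k+1)) (x - y)) ≤ D := by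
        rw [hφx]
        calc _ ≤ 2 ^ m * ρ ^ m * (v + P.CK * ρ ^ (-m) * 1) := by
              refine mul_le_mul_of_nonneg_left (hconv.trans ?_) (by positivity)
              gcongr
          _ = 2 ^ m * (v * ρ ^ m) + 2 ^ m * P.CK * (ρ ^ m * ρ ^ (-m)) := by ring
          _ = 2 ^ m * (ε * (4 * D) + 2 ^ m * C5) + 2 ^ m * P.CK := by
              rw [hv, div_mul_cancel₀ _ hρm.ne', Real.rpow_neg hρ0.le, mul_inv_cancel₀ hρm.ne', mul_one]
          _ = (2 ^ m * ε * 4) * D + C6 := by rw [hC6]; ring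
          _ = D / 2 + C6 := by rw [hε]; field_simp; ring
          _ ≤ D := by
              have : 0 ≤ 2 ^ m * CT := by positivity
              rw [hD]; linarith
      rw [p.Tx_succ hk0]
      have hγ := P.γpos (k+1)
      have hg := P.g1 hk0
      nlinarith [mul_le_mul_of_nonneg_left ihx hg.le, mul_le_mul_of_nonneg_left hconv2 hγ.le]
  refine ⟨D, hD0, 1, one_pos, eventually_atTop.2 ⟨N, fun n hn x hx => ?_⟩⟩
  have h1 := key n hn x (ball_subset_ball (by norm_num) hx)
  rw [mem_ball, dist_eq_norm] at hx
  have h2 : 1 ≤ φ x := Real.one_le_rpow (by linarith) hm0.le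
  have h3 := p.Tx_nn n x
  nlinarith

lemma UB_step {x0 : EV d} {a t v : ℝ} (ha : 0 < a) (haf : P.f x0 < a) (ht : 1 < t) (hv : 0 < v)
    (h : ∃ r > 0, ∀ᶠ n in atTop, ∀ x ∈ ball x0 r, p.Tx n x ≤ v) :
    ∃ r > 0, ∀ᶠ n in atTop, ∀ x ∈ ball x0 r, p.Tx n x ≤ t * a ^ P.η * v ^ (1 - P.η) := by
  obtain ⟨r1, hr1, h1⟩ := h
  have : ∀ᶠ y in 𝓝 x0, P.f y < a := P.fcont.continuousAt.eventually (gt_mem_nhds haf)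
  obtain ⟨r2, hr2, hf2⟩ := Metric.nhds_basis_ball.eventually_iff.1 this
  set r := min r1 r2 with hr
  have hr0 : 0 < r := lt_min hr1 hr2
  have hη := P.hη
  have hη1 := P.η1
  set s := (t - 1) / 3 with hs
  have hs0 : 0 < s := by rw [hs]; linarith
  set t2 := 1 + s with ht2
  have ht21 : 1 < t2 := by rw [ht2]; linarith
  have ht20 : 0 < t2 := by linarith
  set A := a ^ P.η * v ^ (1 - P.η) with hA
  have hA0 : 0 < A := by positivity
  have htail : ∀ᶠ n in atTop, P.CK * (r/2) ^ (-((d:ℝ) + P.rK)) * P.b n ^ P.rK ≤ s * A := by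
    have h := P.brK0.const_mul (P.CK * (r/2) ^ (-((d:ℝ) + P.rK)))
    rw [mul_zero] at h
    exact h.eventually (ge_mem_nhds (by positivity))
  obtain ⟨N, hN⟩ := eventually_atTop.1 (h1.and ((G.q_le ht21 hv (‖x0‖ + r)).and (htail.and (eventually_ge_atTop G.n3))))
  have hNn0 : P.n0 ≤ N := G.hn3.trans (hN N le_rfl).2.2.2
  obtain ⟨CT, hCT, hTN⟩ := p.Tx_bdd N
  refine ⟨r / 2, half_pos hr0, ?_⟩
  filter_upwards [eventually_ge_atTop N, P.ev_rh (CT / P.rh N) (e := s * A) (by positivity)] with n hn hrn x hx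
  set C := t2 * A + s * A with hC
  have hC0 : 0 < C := by positivity
  have hrec := rec_le P.γnn P.γlt1 (u := fun n => p.Tx n x) (C := C) hNn0 (fun k hk => by
    obtain ⟨e1, e2, -, e4⟩ := hN k hk
    have e3 := (hN (k+1) (by omega)).2.2.1
    have hk0 := hNn0.trans hk
    rw [p.Tx_succ hk0]
    have hγ := P.γpos (k+1)
    gcongr
    refine (p.conv_le hk0 (half_pos hr0) (v := t2 * A) (by positivity) (fun y hy => ?_)).trans (add_le_add_right e3 _)
    have hy' : y ∈ ball x0 r := by
      rw [mem_ball] at hx hy ⊢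
      have := dist_triangle y x x0
      linarith
    have e5 := e2 y (norm_le_of_ball hy') (e1 y (ball_subset_ball (min_le_left _ _) hy'))
    rw [G.psi e4]
    have e6 := (hf2 (ball_subset_ball (min_le_right _ _) hy')).le
    have e7 : (t2 * v) ^ (1 - P.η) ≤ t2 * v ^ (1 - P.η) := by
      rw [Real.mul_rpow ht20.le hv.le]
      have := Real.rpow_le_rpow_of_exponent_le ht21.le (y := 1 - P.η) (z := 1) (by linarith)
      rw [Real.rpow_one] at this
      gcongr
    have := P.f0 y
    have := p.q_nn k (P.hn0.trans hk0) y
    calc _ ≤ a ^ P.η * (t2 * v) ^ (1 - P.η) := by gcongr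
      _ ≤ a ^ P.η * (t2 * v ^ (1 - P.η)) := by gcongr
      _ = _ := by rw [hA]; ring) n hn
  change p.Tx n x ≤ C + P.rh n / P.rh N * (p.Tx N x - C) at hrec
  have hq0 : 0 < P.rh n / P.rh N := div_pos (P.rh_pos _) (P.rh_pos _)
  have h5 : P.rh n / P.rh N * (p.Tx N x - C) ≤ s * A := by
    calc _ ≤ P.rh n / P.rh N * CT := by
          have := hTN x
          gcongr; linarith
      _ = CT / P.rh N * P.rh n := by ring
      _ ≤ _ := hrn
  calc p.Tx n x ≤ C + s * A := by linarith
    _ = (1 + 3 * s) * A := by rw [hC, ht2]; ring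
    _ = t * A := by rw [hs]; ring
    _ = _ := by rw [hA]; ring

lemma UB (x0 : EV d) {v : ℝ} (hv : P.f x0 < v) : ∃ r > 0, ∀ᶠ n in atTop, ∀ x ∈ ball x0 r, p.Tx n x ≤ v := by
  refine fix_upper (F := P.f x0) P.hη (P.f0 x0) (fun v => ∃ r > 0, ∀ᶠ n in atTop, ∀ x ∈ ball x0 r, p.Tx n x ≤ v)
      (G.UB_start x0) ?_ (fun a t v h1 h2 h3 h4 h5 => G.UB_step h1 h2 h3 h4 h5) hv
  rintro v v' ⟨r, hr, h⟩ hvv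
  exact ⟨r, hr, h.mono fun n hn x hx => (hn x hx).trans hvv⟩

lemma q_upper (x0 : EV d) {v : ℝ} (hv : P.f x0 < v) : ∃ r > 0, ∀ᶠ n in atTop, ∀ x ∈ ball x0 r, p.q n x ≤ v := by
  have hf := P.f0 x0
  set u := (P.f x0 + v) / 2 with hu
  have hu0 : 0 < u := by rw [hu]; linarith
  obtain ⟨r, hr, h⟩ := G.UB x0 (v := u) (by rw [hu]; linarith)
  refine ⟨r, hr, ?_⟩
  filter_upwards [h, G.q_le (t := v / u) (by rw [one_lt_div hu0, hu]; linarith) hu0 (‖x0‖ + r)] with n h1 h2 x hx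
  have := h2 x (norm_le_of_ball hx) (h1 x hx)
  rwa [div_mul_cancel₀ _ hu0.ne'] at this

lemma q_lower (x0 : EV d) {v : ℝ} (hv : v < P.f x0) : ∃ r > 0, ∀ᶠ n in atTop, ∀ x ∈ ball x0 r, v ≤ p.q n x := by
  by_cases hv0 : 0 < v
  · set u := (P.f x0 + v) / 2 with hu
    have hu0 : 0 < u := by rw [hu]; linarith
    obtain ⟨r, hr, h⟩ := G.LB x0 (v := u) (by rw [hu]; linarith)
    refine ⟨r, hr, ?_⟩
    filter_upwards [h, G.q_ge (t := v / u) (by rw [div_lt_one hu0, hu]; linarith) (by positivity) hu0 (‖x0‖ + r)] with n h1 h2 x hx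
    have := h2 x (norm_le_of_ball hx) (h1 x hx)
    rwa [div_mul_cancel₀ _ hu0.ne'] at this
  · refine ⟨1, one_pos, ?_⟩
    filter_upwards [eventually_ge_atTop 1] with n hn x _
    exact le_trans (by linarith) (p.q_nn n hn x)

lemma conv (A : Set (EV d)) (hA : IsCompact A) : TendstoUniformlyOn p.q P.f atTop A := by
  rw [← tendstoLocallyUniformlyOn_iff_tendstoUniformlyOn_of_compact hA, Metric.tendstoLocallyUniformlyOn_iff]
  intro ε hε x0 _
  obtain ⟨r1, hr1, h1⟩ := G.q_upper x0 (v := P.f x0 + ε/3) (by linarith)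
  obtain ⟨r2, hr2, h2⟩ := G.q_lower x0 (v := P.f x0 - ε/3) (by linarith)
  obtain ⟨r3, hr3, h3⟩ := Metric.continuous_iff.1 P.fcont x0 (ε/3) (by linarith)
  refine ⟨ball x0 (min r1 (min r2 r3)), mem_nhdsWithin_of_mem_nhds (ball_mem_nhds _ (by positivity)), ?_⟩
  filter_upwards [h1, h2] with n e1 e2 y hy
  have f1 := e1 y (ball_subset_ball (min_le_left _ _) hy)
  have f2 := e2 y (ball_subset_ball ((min_le_right _ _).trans (min_le_left _ _)) hy)
  have f3 := h3 y (ball_subset_ball ((min_le_right _ _).trans (min_le_right _ _)) hy)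
  rw [Real.dist_eq, abs_lt] at f3 ⊢
  constructor <;> linarith

end Gd


lemma rate_aux {d : ℕ} {η Cγ : ℝ} {γ b lam : ℕ → ℝ} (hη1 : η < 1)
    (hγpos : ∀ n, 0 < γ n) (hbpos : ∀ n, 0 < b n) (hlampos : ∀ n, 0 < lam n)
    (hb0 : Tendsto b atTop (nhds 0)) (hlam0 : Tendsto lam atTop (nhds 0))
    (hC : 0 < Cγ) (hlow : ∀ n : ℕ, 1 ≤ n → ((n : ℝ))⁻¹ ≤ Cγ * γ n)
    (hrate1 : 1/2 ≤ η → Tendsto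
      (fun n : ℕ => (n : ℝ) * γ n ^ 2 * Real.log n / (lam n * b n ^ d))
      atTop (nhds 0))
    (hrate2 : η < 1/2 → Tendsto
      (fun n : ℕ => (n : ℝ) * γ n ^ 2 * Real.log n
        / (lam n ^ (2 * (1 - η)) * b n ^ (2 * (d : ℝ) * (1 - η))))
      atTop (nhds 0)) :
    Tendsto (fun n : ℕ => γ n * Real.log n / (lam n * b n ^ d)) atTop (nhds 0) := by
  have key : ∀ n : ℕ, 1 ≤ n → γ n * Real.log n ≤ Cγ * ((n : ℝ) * γ n ^ 2 * Real.log n) := by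
    intro n hn
    have hn' : (0:ℝ) < n := by exact_mod_cast hn
    have hl : 0 ≤ Real.log n := Real.log_natCast_nonneg n
    have h1 : 1 ≤ Cγ * γ n * n := by
      have := mul_le_mul_of_nonneg_right (hlow n hn) hn'.le
      rwa [inv_mul_cancel₀ hn'.ne'] at this
    have h2 : 0 ≤ γ n * Real.log n := mul_nonneg (hγpos n).le hl
    nlinarith [mul_le_mul_of_nonneg_left h1 h2]
  have nn : ∀ n : ℕ, 0 ≤ γ n * Real.log n / (lam n * b n ^ d) := by
    intro n
    have := hγpos n; have := hbpos n; have := hlampos n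
    have hl : 0 ≤ Real.log n := Real.log_natCast_nonneg n
    positivity
  rcases le_or_gt (1/2) η with h | h
  · have h3 := (hrate1 h).const_mul Cγ
    rw [mul_zero] at h3
    refine squeeze_zero' (Eventually.of_forall nn) ?_ h3
    filter_upwards [eventually_ge_atTop 1] with n hn
    have := hbpos n; have := hlampos n
    rw [← mul_div_assoc]
    exact div_le_div_of_nonneg_right (key n hn) (by positivity)
  · have h3 := (hrate2 h).const_mul Cγ
    rw [mul_zero] at h3
    refine squeeze_zero' (Eventually.of_forall nn) ?_ h3
    filter_upwards [eventually_ge_atTop 1, hb0.eventually_le_const zero_lt_one, hlam0.eventually_le_const zero_lt_one] with n hn hb1 hl1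
    have hb := hbpos n
    have hlm := hlampos n
    have hl : 0 ≤ Real.log n := Real.log_natCast_nonneg n
    rw [← mul_div_assoc]
    have hg := hγpos n
    have e1 : lam n ^ (2 * (1 - η)) * b n ^ (2 * (d : ℝ) * (1 - η)) ≤ lam n * b n ^ d := by
      have h5 : lam n ^ (2 * (1 - η)) ≤ lam n := by
        calc _ ≤ lam n ^ (1:ℝ) := Real.rpow_le_rpow_of_exponent_ge hlm hl1 (by linarith)
          _ = _ := Real.rpow_one _
      have h6 : b n ^ (2 * (d : ℝ) * (1 - η)) ≤ b n ^ d := by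
        calc _ ≤ b n ^ (d:ℝ) := Real.rpow_le_rpow_of_exponent_ge hb hb1 (by
                have : (0:ℝ) ≤ d := by positivity
                nlinarith)
          _ = _ := Real.rpow_natCast _ _
      exact mul_le_mul h5 h6 (by positivity) hlm.le
    exact div_le_div₀ (by positivity) (key n hn) (by positivity) e1

theorem midas_uniform_convergence
    {Ω : Type*} [MeasurableSpace Ω] (μ : Measure Ω) [IsProbabilityMeasure μ]
    {d : ℕ} (hd : 1 ≤ d) {η : ℝ} (hη : 0 < η) (hη1 : η < 1)
    (f q0 K : EuclideanSpace ℝ (Fin d) → ℝ)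
    (γ b lam : ℕ → ℝ)
    (X : ℕ → Ω → EuclideanSpace ℝ (Fin d))
    (w : ℕ → Ω → ℝ)
    (g q : ℕ → Ω → EuclideanSpace ℝ (Fin d) → ℝ)
    (hf0 : ∀ x, 0 ≤ f x) (hfint1 : (∫ x, f x) = 1)
    (hK0 : ∀ x, 0 ≤ K x) (hKint1 : (∫ x, K x) = 1)
    (hγpos : ∀ n, 0 < γ n) (hbpos : ∀ n, 0 < b n) (hlampos : ∀ n, 0 < lam n)
    (hX : ∀ n, Measurable (X n))
    (hqmeas : ∀ n, Measurable (Function.uncurry (q n)))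
    (hg0 : ∀ (ω : Ω) x, g 0 ω x = 0)
    (hw : ∀ n (ω : Ω), w (n+1) ω = f (X (n+1) ω) / q n ω (X (n+1) ω))
    (hgrec : ∀ n (ω : Ω) x, g (n+1) ω x
      = (1 - γ (n+1)) * g n ω x
        + γ (n+1) * w (n+1) ω ^ η * kb K (b (n+1)) (x - X (n+1) ω))
    (hqrec : ∀ n (ω : Ω) x, q (n+1) ω x
      = (1 - lam (n+1)) * (g (n+1) ω x / (∫ y, g (n+1) ω y)) + lam (n+1) * q0 x)
    (hpolicy : ∀ n (φ : EuclideanSpace ℝ (Fin d) → ℝ), Continuous φ →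
      (∃ C, ∀ x, |φ x| ≤ C) →
      (μ[fun ω => φ (X (n+1) ω) | natFilt X n]) =ᵐ[μ] (fun ω => ∫ y, φ y * q n ω y))
    (hadapt : ∀ n x, Measurable[natFilt X n] fun ω => q n ω x)
    (hfbdd : ∃ C, ∀ x, f x ≤ C) (hfcont : Continuous f)
    (hfInt : Integrable f)
    (hq00 : ∀ x, 0 ≤ q0 x) (hq0bdd : ∃ C, ∀ x, q0 x ≤ C) (hq0cont : Continuous q0)
    (hq0Int : Integrable q0) (hq0int1 : (∫ x, q0 x) = 1)
    (hftail : ∃ r > (0:ℝ), ∃ Cf > (0:ℝ), ∀ t : ℝ, 0 < t →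
      (∫ x in {x : EuclideanSpace ℝ (Fin d) | t < ‖x‖}, f x) ≤ Cf * t ^ (-r))
    (hfq0 : ∃ c > (0:ℝ), ∀ x, c * f x ≤ q0 x)
    (hKbdd : ∃ C, ∀ x, K x ≤ C) (hKlip : ∃ L : NNReal, LipschitzWith L K)
    (hKpos : 0 < K 0)
    (hKtail : ∃ rK > (0:ℝ), ∃ CK > (0:ℝ), ∀ x,
      (1 + ‖x‖ ^ ((d : ℝ) + rK)) * K x ≤ CK)
    (hγanti : Antitone γ) (hγ0 : Tendsto γ atTop (nhds 0))
    (hbanti : Antitone b) (hb0 : Tendsto b atTop (nhds 0))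
    (hlamanti : Antitone lam) (hlam0 : Tendsto lam atTop (nhds 0))
    (hγrate : ∃ Cγ > (0:ℝ), ∃ nγ : ℕ, 1 ≤ nγ ∧
      (∀ n : ℕ, 1 ≤ n → ((n : ℝ))⁻¹ ≤ Cγ * γ n) ∧
      (∀ n : ℕ, nγ ≤ n → γ n - γ (n+1) ≤ γ n * γ (n+1)))
    (hγsq : Summable fun n => γ n ^ 2)
    (hrate1 : 1/2 ≤ η → Tendsto
      (fun n : ℕ => (n : ℝ) * γ n ^ 2 * Real.log n / (lam n * b n ^ d))
      atTop (nhds 0))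
    (hrate2 : η < 1/2 → Tendsto
      (fun n : ℕ => (n : ℝ) * γ n ^ 2 * Real.log n
        / (lam n ^ (2 * (1 - η)) * b n ^ (2 * (d : ℝ) * (1 - η))))
      atTop (nhds 0))
    :
    ∀ A : Set (EuclideanSpace ℝ (Fin d)), IsCompact A →
      ∀ᵐ ω ∂μ, TendstoUniformlyOn (fun n x => q n ω x) f atTop A := by
  obtain ⟨F, hF⟩ := hfbdd
  obtain ⟨Q, hQ⟩ := hq0bdd
  obtain ⟨c, hc, hcf⟩ := hfq0
  obtain ⟨Km, hKm⟩ := hKbdd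
  obtain ⟨L, hL⟩ := hKlip
  obtain ⟨rK, hrK, CK, hCK, hKt⟩ := hKtail
  obtain ⟨Cγ, hCγ, nγ, hnγ, hlow, hdec⟩ := hγrate
  obtain ⟨N, hN⟩ := eventually_atTop.1
    ((hγ0.eventually_le_const (show (0:ℝ) < 1/2 by norm_num)).and
      ((hlam0.eventually_le_const (show (0:ℝ) < 1/2 by norm_num)).and
        (hb0.eventually_le_const zero_lt_one)))
  have hKInt : Integrable K := by
    by_contra h
    rw [integral_undef h] at hKint1
    exact zero_ne_one hKint1
  let P : Par d :=
    { η := η, f := f, q0 := q0, K := K, γ := γ, b := b, lam := lam, c := c, F := F, Q := Q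
      Km := Km, L := L, rK := rK, CK := CK, Cγ := Cγ, n0 := max N nγ
      hd := hd, hη := hη, hη1 := hη1, f0 := hf0, fint1 := hfint1, fcont := hfcont
      fInt := hfInt, fbd := hF, q00 := hq00, q0cont := hq0cont, q0Int := hq0Int
      q0int1 := hq0int1, q0bd := hQ, hc := hc, hcf := hcf, K0 := hK0, Kint1 := hKint1
      KInt := hKInt, Kbd := hKm, hL := L.2
      Klip := fun x y => by
        have := hL.dist_le_mul x y
        rwa [Real.dist_eq, dist_eq_norm] at this
      Kcont := hL.continuous, Kpos := hKpos, hrK := hrK, hCK := hCK, Ktail := hKt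
      γpos := hγpos, bpos := hbpos, lampos := hlampos, γ0 := hγ0, banti := hbanti
      b0 := hb0, lamanti := hlamanti, lam0 := hlam0, hCγ := hCγ, γlow := hlow
      hn0 := hnγ.trans (le_max_right _ _)
      γhalf := fun n hn => (hN n ((le_max_left _ _).trans hn)).1
      lamhalf := fun n hn => (hN n ((le_max_left _ _).trans hn)).2.1
      bone := fun n hn => (hN n ((le_max_left _ _).trans hn)).2.2
      γdec := fun n hn => by
        have := hdec n ((le_max_right _ _).trans hn)
        linarith
      rate := rate_aux hη1 hγpos hbpos hlampos hb0 hlam0 hCγ hlow hrate1 hrate2 }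
  let M : Mdl μ P :=
    { X := X, w := w, g := g, q := q, hX := hX, hg0 := hg0, hw := hw, hgrec := hgrec
      hqrec := hqrec, hpolicy := hpolicy, hadapt := hadapt }
  intro A hA
  filter_upwards [M.good] with ω hω
  obtain ⟨h1, h2, hI, hK, hF2⟩ := hω
  obtain ⟨G⟩ := Pth.exists_Gd _ hI hF2 hK
  exact G.conv A hA
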